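/- There exists an absolute constant C > 0 such that for all d, n ∈ ℕ, for any functions ρ₁, …, ρ_n : ℝ → ℝ of bounded variation with ‖ρ_j‖_{L¹(ℝ)} = 1 for all j ∈ {1, …, n}, for any non-constant polynomial f ∈ 𝒫_d(ℝⁿ), and for any φ ∈ C_b^∞(ℝ), one has ∫_{ℝⁿ} φ'(f(x)) ρ₁(x₁)⋯ρ_n(x_n) dx ≤ C · min{d, n} · (1 + max_{1≤j≤n} ‖D₁ρ_j‖_{TV}) · [f]₂^{−1/d} · ‖φ‖_∞^{1/d} ‖φ'‖_∞^{1−1/d}. (The functions ρ_j are not assumed nonnegative.) -/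

import Mathlib

/-!
The integral of `φ' ∘ f` is first estimated for uniform densities, where convex geometry is
available, and the uniform densities are then exchanged for the functions `ρⱼ`.

*Oscillation on the cube.* By `localize`, two integral inequalities over the unit cube restrict to a
line with a log-concave weight, a needle. The proof bisects planar products of log-concave weights,
adding one coordinate at a time; the weights stay log-concave by the Prékopa–Leindler inequality.
On a needle the estimate is one-dimensional (`osc_one_dim`, `Needle.osc`): where the derivative `p'`
of the polynomial is large one integrates by parts, and the set where it is small is controlled by
Remez' inequality (`remez`). The result `cube_osc_opt` bounds `∫ φ'(F)` over the cube by
`C B₁ (B₀ / (σ B₁)) ^ (1/D)`, with `B₀ = sup |φ|`, `B₁ = sup |φ'|`, for a polynomial `F` of degree at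
most `D` which has mass at least `1/8` both below some `m` and above `m + 5σ`.

*Spread from variance.* A polynomial with variance at least `V²` has such a spread with
`σ = V / (C min(D, n)) ^ D` (`exists_spread`). Otherwise it would be within a small distance of a
constant on most of the cube, and Remez' inequality would make its variance small. Applied on rays
through a point of the cube it loses a factor `n` (`sup_bound_dim`), applied on needles a factor `D`
(`Needle.sq_bound`); this is the origin of `min(d, n)`.

*Variance from leading coefficients.* Bessel's inequality for products of monic orthogonal
polynomials on `[0, 1]` bounds the variance below by the leading coefficients alone (`variance_ge`).
On a box with sides `Lⱼ`, the weighted arithmetic-geometric mean inequality (`boxNorm_ge`) separates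
the dependence on the sides, and `box_estimate` bounds the average of `φ' ∘ f` over the box by the
desired quantity times `∏ Lⱼ ^ (-pⱼ)`. Here `pⱼ` is the average exponent of `xⱼ` in the leading part
of `f` relative to the degree (`avgExp`), so that `∑ pⱼ = 1`.

*Densities of bounded variation.* A bound `O(L ^ (1 - p))` for the integrals of a function over all
intervals of length `L` gives `O((1 + ‖Dρ‖) ^ p)` against a density `ρ` of mass one
(`IsDeriv.integral_holder`). With it, `replace_densities` exchanges the uniform densities one
coordinate at a time, whatever the signs of `ρⱼ`, and the resulting product of
`(1 + ‖Dρⱼ‖) ^ pⱼ` is at most `1 + max ‖Dρⱼ‖` (`product_estimate`). The exponent `1 / deg f` becomes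
`1/d` by means of the trivial bound `B₁` (`weaken_exponent`).
-/

open MeasureTheory

noncomputable section

/-- The class `C_b^∞(ℝ)` of bounded smooth functions on `ℝ`
with bounded derivatives of every order. -/
def CbSmooth (φ : ℝ → ℝ) : Prop :=
  ContDiff ℝ (⊤ : ℕ∞) φ ∧ ∀ k : ℕ, ∃ M : ℝ, ∀ t : ℝ, |iteratedDeriv k φ t| ≤ M

/-- The sup norm `‖φ‖_∞ = sup_t |φ(t)|`. -/
def supNorm (φ : ℝ → ℝ) : ℝ := ⨆ t : ℝ, |φ t|

/-- The total variation norm of a (bounded, signed) Borel measure on `ℝ`. -/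
def sTV (s : SignedMeasure ℝ) : ℝ := (s.totalVariation Set.univ).toReal

/-- The integral of a function against a signed measure on `ℝ`. -/
def sInt (s : SignedMeasure ℝ) (φ : ℝ → ℝ) : ℝ :=
  (∫ x, φ x ∂s.toJordanDecomposition.posPart) -
    ∫ x, φ x ∂s.toJordanDecomposition.negPart

/-- `[f]₂`: the `ℓ²`-norm of the coefficients of the leading (top-degree) part of `f`. -/
def leadingL2 {n : ℕ} (f : MvPolynomial (Fin n) ℝ) : ℝ :=
  Real.sqrt (∑ u ∈ f.support.filter fun u => (u.sum fun _ e => e) = f.totalDegree,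
    f.coeff u ^ 2)

namespace PolyKey

/-! ### A Remez inequality on the line -/

/-- A bounded set of reals of measure larger than `k h` contains `k + 1` points that are
`h`-separated: pick points greedily from the left. -/
lemma exists_separated (h : ℝ) (hh : 0 < h) (a b : ℝ) :
    ∀ (k : ℕ) (E : Set ℝ), E ⊆ Set.Icc a b → (k * h : ℝ) < volume.real E →
      ∃ x : ℕ → ℝ, (∀ i ≤ k, x i ∈ E) ∧ ∀ i j, i ≤ j → j ≤ k → (j - i : ℝ) * h ≤ x j - x i := by
  intro k
  induction k with
  | zero =>
    intro E hE hlt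
    have hne : E.Nonempty := by
      rcases Set.eq_empty_or_nonempty E with h0 | h0
      · simp [h0] at hlt
      · exact h0
    obtain ⟨y, hy⟩ := hne
    refine ⟨fun _ => y, fun _ _ => hy, ?_⟩
    intro i j hij hj
    have : j = 0 := by omega
    have : i = 0 := by omega
    subst_vars; simp
  | succ k ih =>
    intro E hE hlt
    have hne : E.Nonempty := by
      rcases Set.eq_empty_or_nonempty E with h0 | h0
      · simp only [h0, measureReal_empty] at hlt
        have : (0:ℝ) ≤ ((k + 1 : ℕ) : ℝ) * h := by positivity
        linarith
      · exact h0
    have hbb : BddBelow E := ⟨a, fun y hy => (hE hy).1⟩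
    set ε : ℝ := (volume.real E - (k + 1 : ℕ) * h) / 2 with hε
    have hεpos : 0 < ε := by rw [hε]; linarith
    obtain ⟨y, hyE, hy⟩ := exists_lt_of_csInf_lt hne (show sInf E < sInf E + ε by linarith)
    have hfin : volume E ≠ ⊤ := ((measure_mono hE).trans_lt (by simp)).ne
    have hsplit : volume.real E ≤ volume.real (E ∩ Set.Ici (y + h)) + (h + ε) := by
      have hsub : E ⊆ (E ∩ Set.Ici (y + h)) ∪ Set.Icc (sInf E) (y + h) := by
        intro z hz
        by_cases hzy : y + h ≤ z
        · exact Or.inl ⟨hz, hzy⟩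
        · exact Or.inr ⟨csInf_le hbb hz, by linarith⟩
      have h1 : volume.real E ≤ volume.real ((E ∩ Set.Ici (y + h)) ∪ Set.Icc (sInf E) (y + h)) := by
        refine measureReal_mono hsub (ne_top_of_le_ne_top ?_ (measure_union_le _ _))
        refine ENNReal.add_ne_top.2 ⟨?_, by simp⟩
        exact ne_top_of_le_ne_top hfin (measure_mono Set.inter_subset_left)
      have h2 := measureReal_union_le (μ := volume) (E ∩ Set.Ici (y + h)) (Set.Icc (sInf E) (y + h))
      have h3 : volume.real (Set.Icc (sInf E) (y + h)) = y + h - sInf E := by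
        rw [Real.volume_real_Icc_of_le]
        have := csInf_le hbb hyE
        linarith
      linarith
    obtain ⟨x, hxE, hxs⟩ := ih (E ∩ Set.Ici (y + h)) (Set.inter_subset_left.trans hE) (by
      push_cast at hlt hε
      nlinarith)
    refine ⟨fun i => if i = 0 then y else x (i - 1), ?_, ?_⟩
    · intro i hi
      by_cases h0 : i = 0
      · simp [h0, hyE]
      · simp only [h0, if_false]
        exact (hxE (i - 1) (by omega)).1
    · intro i j hij hj
      rcases Nat.eq_zero_or_pos j with hj0 | hj0
      · have : i = 0 := by omega
        subst_vars; simp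
      obtain ⟨j, rfl⟩ : ∃ j', j = j' + 1 := ⟨j - 1, by omega⟩
      rcases Nat.eq_zero_or_pos i with hi0 | hi0
      · subst hi0
        have h1 := (hxE 0 (by omega)).2
        have h2 := hxs 0 j (by omega) (by omega)
        simp only [Set.mem_Ici] at h1
        simp
        push_cast at h2 ⊢
        nlinarith
      · obtain ⟨i, rfl⟩ : ∃ i', i = i' + 1 := ⟨i - 1, by omega⟩
        have h2 := hxs i j (by omega) (by omega)
        simpa using h2

/-- The denominators of Lagrange interpolation at the nodes `0, 1, …, D`. -/
lemma prod_abs_sub_eq (D i : ℕ) (hi : i ≤ D) :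
    ∏ j ∈ (Finset.range (D + 1)).erase i, |(i : ℝ) - j| = (i.factorial * (D - i).factorial : ℕ) := by
  have hsplit : (Finset.range (D + 1)).erase i =
      Finset.range i ∪ Finset.Ico (i + 1) (D + 1) := by
    ext j; simp only [Finset.mem_erase, Finset.mem_range, Finset.mem_union, Finset.mem_Ico]; omega
  have hdisj : Disjoint (Finset.range i) (Finset.Ico (i + 1) (D + 1)) := by
    rw [Finset.disjoint_left]; intro j; simp only [Finset.mem_range, Finset.mem_Ico]; omega
  rw [hsplit, Finset.prod_union hdisj]
  push_cast
  congr 1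
  · rw [← Finset.prod_range_reflect, ← Finset.prod_range_add_one_eq_factorial]
    push_cast
    apply Finset.prod_congr rfl
    intro j hj
    have hj' : j < i := Finset.mem_range.1 hj
    rw [Nat.sub_sub, Nat.cast_sub (by omega)]
    push_cast
    rw [abs_of_nonneg (by have := (Nat.cast_nonneg j : (0:ℝ) ≤ j); linarith)]
    ring
  · rw [Finset.prod_Ico_eq_prod_range, ← Finset.prod_range_add_one_eq_factorial]
    push_cast
    apply Finset.prod_congr rfl
    intro j hj
    rw [abs_sub_comm, abs_of_nonneg]
    · ring
    · have := (Nat.cast_nonneg j : (0:ℝ) ≤ j); linarith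

/-- **Remez-type inequality** with a non-sharp absolute constant. A polynomial of degree at most
`D` bounded by `δ` on a subset of measure `s` of an interval `[a, b]` is bounded by
`(11 (b - a) / s) ^ D * δ` on the whole interval; this is Lagrange interpolation at
`s / (2 D)`-separated points of the subset. -/
lemma remez (p : Polynomial ℝ) (D : ℕ) (hp : p.natDegree ≤ D) (a b s δ : ℝ) (E : Set ℝ)
    (hE : E ⊆ Set.Icc a b) (hs : 0 < s) (hsE : s ≤ volume.real E)
    (hpE : ∀ x ∈ E, |p.eval x| ≤ δ) (x : ℝ) (hx : x ∈ Set.Icc a b) :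
    |p.eval x| ≤ (11 * (b - a) / s) ^ D * δ := by
  have hne : E.Nonempty := by
    rcases Set.eq_empty_or_nonempty E with h0 | h0
    · simp only [h0, measureReal_empty] at hsE; linarith
    · exact h0
  have hδ : 0 ≤ δ := by obtain ⟨y, hy⟩ := hne; exact (abs_nonneg _).trans (hpE y hy)
  have hab : 0 ≤ b - a := by linarith [hx.1, hx.2]
  rcases Nat.eq_zero_or_pos D with hD | hD
  · subst hD
    have hc := Polynomial.eq_C_of_natDegree_le_zero hp
    obtain ⟨y, hy⟩ := hne
    have h1 := hpE y hy
    rw [hc] at h1 ⊢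
    simpa using h1
  have hD' : (0:ℝ) < D := by exact_mod_cast hD
  set h : ℝ := s / (2 * D) with hh
  have hhpos : 0 < h := by positivity
  obtain ⟨v, hvE, hvs⟩ := exists_separated h hhpos a b D E hE (by
    have : (D:ℝ) * h = s / 2 := by rw [hh]; field_simp
    rw [this]; linarith)
  have hvsep : ∀ i ≤ D, ∀ j ≤ D, |(i:ℝ) - j| * h ≤ |v i - v j| := by
    intro i hi j hj
    rcases le_total i j with hij | hij
    · have := hvs i j hij hj
      rw [abs_sub_comm, abs_sub_comm (v i)]
      have h2 : (i:ℝ) ≤ j := by exact_mod_cast hij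
      rw [abs_of_nonneg (by linarith : (0:ℝ) ≤ (j:ℝ) - i)]
      exact this.trans (le_abs_self _)
    · have := hvs j i hij hi
      have h2 : (j:ℝ) ≤ i := by exact_mod_cast hij
      rw [abs_of_nonneg (by linarith : (0:ℝ) ≤ (i:ℝ) - j)]
      exact this.trans (le_abs_self _)
  have hinj : Set.InjOn v (Finset.range (D + 1)) := by
    intro i hi j hj hij
    simp only [Finset.coe_range, Set.mem_Iio] at hi hj
    by_contra hne
    have h1 := hvsep i (by omega) j (by omega)
    rw [hij, sub_self, abs_zero] at h1
    have : 0 < |(i:ℝ) - j| := by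
      rw [abs_pos, sub_ne_zero]; exact_mod_cast hne
    nlinarith
  have hpi : p = Lagrange.interpolate (Finset.range (D + 1)) v (fun i => p.eval (v i)) := by
    apply Lagrange.eq_interpolate_of_eval_eq _ hinj
    · rw [Finset.card_range]
      refine (Polynomial.degree_le_natDegree).trans_lt ?_
      exact_mod_cast (by omega : p.natDegree < D + 1)
    · intro i _; rfl
  have hev : p.eval x = ∑ i ∈ Finset.range (D + 1),
      p.eval (v i) * ∏ j ∈ (Finset.range (D + 1)).erase i, (v i - v j)⁻¹ * (x - v j) := by
    conv_lhs => rw [hpi]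
    rw [Lagrange.interpolate_apply, Polynomial.eval_finsetSum]
    apply Finset.sum_congr rfl
    intro i _
    simp [Lagrange.basis, Lagrange.basisDivisor, Polynomial.eval_prod]
  have hterm : ∀ i ∈ Finset.range (D + 1),
      |p.eval (v i) * ∏ j ∈ (Finset.range (D + 1)).erase i, (v i - v j)⁻¹ * (x - v j)| ≤
      δ * (((b - a) / h) ^ D / D.factorial * (D.choose i)) := by
    intro i hi
    have hi' : i ≤ D := by have := Finset.mem_range.1 hi; omega
    rw [abs_mul, Finset.abs_prod]
    apply mul_le_mul (hpE _ (hvE i hi')) _ (by positivity) hδ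
    have h1 : ∏ j ∈ (Finset.range (D + 1)).erase i, |(v i - v j)⁻¹ * (x - v j)| ≤
        ∏ j ∈ (Finset.range (D + 1)).erase i, ((b - a) / h) * (|(i:ℝ) - j|)⁻¹ := by
      apply Finset.prod_le_prod
      · intros; positivity
      · intro j hj
        have hj1 : j ≠ i := (Finset.mem_erase.1 hj).1
        have hj' : j ≤ D := by have := Finset.mem_range.1 (Finset.mem_erase.1 hj).2; omega
        have hpos : 0 < |(i:ℝ) - j| := by
          rw [abs_pos, sub_ne_zero]; exact_mod_cast hj1.symm
        have h2 := hvsep i hi' j hj'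
        have h3 : |x - v j| ≤ b - a := by
          have := hE (hvE j hj')
          rw [abs_le]; constructor <;> linarith [this.1, this.2, hx.1, hx.2]
        rw [abs_mul, abs_inv, mul_comm]
        have : (b - a) / h * |(i:ℝ) - j|⁻¹ = (b - a) * (|(i:ℝ) - j| * h)⁻¹ := by
          field_simp
        rw [this]
        gcongr
    refine h1.trans (le_of_eq ?_)
    rw [Finset.prod_mul_distrib, Finset.prod_const, Finset.card_erase_of_mem hi, Finset.card_range,
      Finset.prod_inv_distrib, prod_abs_sub_eq D i hi', Nat.choose_eq_factorial_div_factorial hi',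
      Nat.cast_div (Nat.factorial_mul_factorial_dvd_factorial hi') (by positivity)]
    have := Nat.factorial_pos D
    simp only [Nat.add_sub_cancel]
    field_simp
  rw [hev]
  refine (Finset.abs_sum_le_sum_abs _ _).trans ((Finset.sum_le_sum hterm).trans ?_)
  rw [← Finset.mul_sum, ← Finset.mul_sum]
  have hchoose : ∑ i ∈ Finset.range (D + 1), (D.choose i : ℝ) = 2 ^ D := by
    exact_mod_cast Nat.sum_range_choose D
  rw [hchoose, mul_comm]
  apply mul_le_mul_of_nonneg_right _ hδ
  have hexp := Real.pow_div_factorial_le_exp (D:ℝ) hD'.le D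
  have hexp2 : Real.exp D ≤ 2.75 ^ D := by
    rw [← Real.exp_one_pow]
    gcongr
    exact Real.exp_one_lt_d9.le.trans (by norm_num)
  have heq : ((b - a) / h) ^ D / D.factorial * 2 ^ D =
      (4 * (b - a) / s) ^ D * ((D:ℝ) ^ D / D.factorial) := by
    rw [mul_div_assoc', ← mul_pow, div_mul_eq_mul_div, ← mul_pow]
    congr 2
    rw [hh]; field_simp; ring
  rw [heq]
  calc (4 * (b - a) / s) ^ D * ((D:ℝ) ^ D / D.factorial)
      ≤ (4 * (b - a) / s) ^ D * 2.75 ^ D := by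
        apply mul_le_mul_of_nonneg_left (hexp.trans hexp2); positivity
    _ = (11 * (b - a) / s) ^ D := by rw [← mul_pow]; congr 1; ring

/-! ### One-dimensional oscillation -/

/-- The `C¹` profile equal to `2 - y` for `y ≤ 1` and to `1 / y` for `y ≥ 1`. -/
def kap (y : ℝ) : ℝ := if y ≤ 1 then 2 - y else 1 / y

lemma hasDerivAt_kap (y : ℝ) : HasDerivAt kap (-(1 / (max 1 y) ^ 2)) y := by
  rcases lt_trichotomy y 1 with h | h | h
  · have h1 : kap =ᶠ[nhds y] fun t => 2 - t := by
      filter_upwards [Iio_mem_nhds h] with t ht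
      have : t ≤ 1 := le_of_lt ht
      simp [kap, this]
    rw [h1.hasDerivAt_iff, max_eq_left h.le]
    simpa using (hasDerivAt_id y).const_sub 2
  · subst h
    have h1 : HasDerivWithinAt kap (-1) (Set.Iic 1) 1 := by
      have : HasDerivWithinAt (fun t : ℝ => 2 - t) (-1) (Set.Iic 1) 1 := by
        simpa using ((hasDerivAt_id (1:ℝ)).const_sub 2).hasDerivWithinAt
      refine this.congr ?_ ?_
      · intro t ht; have : t ≤ 1 := ht; simp [kap, this]
      · simp [kap]
    have h2 : HasDerivWithinAt kap (-1) (Set.Ici 1) 1 := by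
      have : HasDerivWithinAt (fun t : ℝ => t⁻¹) (-1) (Set.Ici 1) 1 := by
        simpa using (hasDerivAt_inv (one_ne_zero (α := ℝ))).hasDerivWithinAt
      refine this.congr ?_ ?_
      · intro t ht
        rcases eq_or_lt_of_le (show (1:ℝ) ≤ t from ht) with h | h
        · subst h; simp [kap]; norm_num
        · simp [kap, not_le.2 h]
      · simp [kap]; norm_num
    have h3 := h1.union h2
    rw [Set.Iic_union_Ici, hasDerivWithinAt_univ] at h3
    simpa using h3
  · have h1 : kap =ᶠ[nhds y] fun t => t⁻¹ := by
      filter_upwards [Ioi_mem_nhds h] with t ht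
      have : ¬ t ≤ 1 := not_le.2 ht
      simp [kap, this]
    rw [h1.hasDerivAt_iff, max_eq_right h.le]
    simpa using hasDerivAt_inv (by linarith : y ≠ 0)

/-- A `C¹` regularization at scale `δ` of `u ↦ 1 / u`, equal to it for `|u| ≥ δ`. -/
def psi (δ u : ℝ) : ℝ := u * kap (u ^ 2 / δ ^ 2) / δ ^ 2

/-- The derivative of `psi δ`. -/
def dpsi (δ u : ℝ) : ℝ :=
  (kap (u ^ 2 / δ ^ 2) + u * (-(1 / (max 1 (u ^ 2 / δ ^ 2)) ^ 2) * (2 * u / δ ^ 2))) / δ ^ 2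

lemma hasDerivAt_psi (δ u : ℝ) : HasDerivAt (psi δ) (dpsi δ u) u := by
  have h1 : HasDerivAt (fun u : ℝ => u ^ 2 / δ ^ 2) (2 * u / δ ^ 2) u := by
    simpa using (hasDerivAt_pow 2 u).div_const (δ ^ 2)
  have h2 := (hasDerivAt_kap (u ^ 2 / δ ^ 2)).comp u h1
  have h3 := ((hasDerivAt_id u).mul h2).div_const (δ ^ 2)
  exact h3.congr_deriv (by simp [dpsi])

lemma continuous_kap : Continuous kap :=
  continuous_iff_continuousAt.2 fun y => (hasDerivAt_kap y).continuousAt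

lemma continuous_psi (δ : ℝ) : Continuous (psi δ) :=
  continuous_iff_continuousAt.2 fun y => (hasDerivAt_psi δ y).continuousAt

lemma continuous_dpsi (δ : ℝ) : Continuous (dpsi δ) := by
  unfold dpsi
  have h := continuous_kap
  have : ∀ u : ℝ, (max 1 (u ^ 2 / δ ^ 2)) ^ 2 ≠ 0 := fun u => by
    have := le_max_left 1 (u ^ 2 / δ ^ 2)
    positivity
  fun_prop (disch := assumption)

lemma abs_dpsi_le (δ : ℝ) (hδ : 0 < δ) (u : ℝ) :
    |dpsi δ u| ≤ 4 / (δ ^ 2 + u ^ 2) := by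
  set z := u ^ 2 / δ ^ 2 with hz
  have hz0 : 0 ≤ z := by positivity
  have hu : u ^ 2 = z * δ ^ 2 := by rw [hz]; field_simp
  have h1 : dpsi δ u = (kap z - 2 * z / (max 1 z) ^ 2) / δ ^ 2 := by
    unfold dpsi
    rw [← hz]
    congr 1
    have : u * (-(1 / max 1 z ^ 2) * (2 * u / δ ^ 2)) = -(2 * (u ^ 2 / δ ^ 2) / max 1 z ^ 2) := by
      ring
    rw [this, ← hz]; ring
  have h2 : 4 / (δ ^ 2 + u ^ 2) = (4 / (1 + z)) / δ ^ 2 := by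
    rw [hu]; field_simp
  rw [h1, h2, abs_div, abs_of_pos (by positivity : (0:ℝ) < δ ^ 2)]
  gcongr
  rcases le_or_gt z 1 with h | h
  · rw [max_eq_left h, kap, if_pos h, le_div_iff₀ (by positivity)]
    rw [show (2 - z - 2 * z / 1 ^ 2 : ℝ) = 2 - 3 * z by ring]
    rcases abs_cases (2 - 3 * z) with ⟨h', _⟩ | ⟨h', _⟩ <;> rw [h'] <;> nlinarith
  · rw [max_eq_right h.le, kap, if_neg (not_le.2 h)]
    rw [show (1 / z - 2 * z / z ^ 2 : ℝ) = -(1 / z) by field_simp; ring, abs_neg,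
      abs_of_nonneg (by positivity), div_le_div_iff₀ (by positivity) (by positivity)]
    linarith

lemma abs_psi_le (δ : ℝ) (hδ : 0 < δ) (u : ℝ) : |psi δ u| ≤ 2 / δ := by
  set z := u ^ 2 / δ ^ 2 with hz
  have hz0 : 0 ≤ z := by positivity
  have h1 : psi δ u = (u / δ) * kap z / δ := by unfold psi; rw [← hz]; field_simp
  have h3 : (|u / δ|) ^ 2 = z := by rw [sq_abs, hz]; ring
  have h4 := abs_nonneg (u / δ)
  rw [h1, abs_div, abs_of_pos hδ, abs_mul]
  gcongr
  set w := |u / δ|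
  unfold kap
  split_ifs with h
  · have : w ≤ 1 := by nlinarith
    rw [abs_of_nonneg (by linarith)]
    nlinarith
  · have : 1 ≤ w := by nlinarith
    rw [abs_of_nonneg (by positivity), mul_one_div, div_le_iff₀ (by linarith)]
    nlinarith

/-- `psi δ` is `1 / u` outside the set `|u| ≤ δ`; on it, the relative error is at most `1`. -/
lemma one_sub_mul_psi (δ : ℝ) (hδ : 0 < δ) (u : ℝ) :
    |1 - u * psi δ u| ≤ Set.indicator {t | |t| ≤ δ} (fun _ => (1:ℝ)) u := by
  set z := u ^ 2 / δ ^ 2 with hz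
  have hz0 : 0 ≤ z := by positivity
  have h1 : u * psi δ u = z * kap z := by unfold psi; rw [← hz, hz]; ring
  rw [h1]
  by_cases h : |u| ≤ δ
  · rw [Set.indicator_of_mem (by exact h)]
    have : z ≤ 1 := by
      rw [hz, div_le_one (by positivity)]; exact sq_le_sq' (by linarith [abs_le.1 h]) (abs_le.1 h).2
    rw [kap, if_pos this, abs_le]
    constructor <;> nlinarith
  · rw [Set.indicator_of_notMem (by exact h)]
    have : 1 < z := by
      rw [hz, one_lt_div (by positivity), ← sq_abs u]
      push Not at h
      exact pow_lt_pow_left₀ h hδ.le (by norm_num)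
    rw [kap, if_neg (not_le.2 this), mul_one_div, div_self (by linarith)]
    simp

/-- Splitting `[a, b]` at the zeros of `q'` bounds the total variation of `A ∘ q`, where
`A' = k ≥ 0` and `|A| ≤ S`. -/
lemma integral_comp_mul_abs_deriv_le (q : Polynomial ℝ) (hq : Polynomial.derivative q ≠ 0)
    (A k : ℝ → ℝ)
    (hk : Continuous k) (hA : ∀ t, HasDerivAt A (k t) t) (S : ℝ)
    (hS : ∀ t, |A t| ≤ S) :
    ∀ (N : ℕ) (a b : ℝ), a ≤ b →
      ((Polynomial.derivative q).roots.toFinset.filter (fun x => x ∈ Set.Ioo a b)).card ≤ N →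
      ∫ x in a..b, k (q.eval x) * |(Polynomial.derivative q).eval x| ≤ (N + 1) * (2 * S) := by
  set s := Polynomial.derivative q with hs
  have hS0 : 0 ≤ S := (abs_nonneg _).trans (hS 0)
  have hcont : Continuous fun x => k (q.eval x) * |s.eval x| := by fun_prop
  have hcont' : Continuous fun x => k (q.eval x) * s.eval x := by fun_prop
  have hprim : ∀ a b : ℝ, ∫ x in a..b, k (q.eval x) * s.eval x = A (q.eval b) - A (q.eval a) := by
    intro a b
    apply intervalIntegral.integral_eq_sub_of_hasDerivAt (f := fun x => A (q.eval x))
    · intro x _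
      exact (hA _).comp x (q.hasDerivAt x)
    · exact hcont'.intervalIntegrable _ _
  intro N
  induction N using Nat.strong_induction_on with
  | _ N ih =>
  intro a b hab hcard
  by_cases hroot : ∃ c ∈ Set.Ioo a b, s.eval c = 0
  · obtain ⟨c, hc, hc0⟩ := hroot
    set R := s.roots.toFinset with hR
    have hcR : c ∈ R := by rw [hR, Multiset.mem_toFinset, Polynomial.mem_roots hq]; exact hc0
    set R1 := R.filter (fun x => x ∈ Set.Ioo a c)
    set R2 := R.filter (fun x => x ∈ Set.Ioo c b)
    have hdisj : Disjoint R1 R2 := by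
      rw [Finset.disjoint_left]; intro x h1 h2
      have := (Finset.mem_filter.1 h1).2.2
      have := (Finset.mem_filter.1 h2).2.1
      linarith
    have hcn : c ∉ R1 ∪ R2 := by
      simp [R1, R2]
    have hsub : insert c (R1 ∪ R2) ⊆ R.filter (fun x => x ∈ Set.Ioo a b) := by
      intro x hx
      simp only [Finset.mem_insert, Finset.mem_union, R1, R2, Finset.mem_filter] at hx ⊢
      rcases hx with rfl | ⟨h1, h2⟩ | ⟨h1, h2⟩
      · exact ⟨hcR, hc⟩
      · exact ⟨h1, h2.1, h2.2.trans hc.2⟩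
      · exact ⟨h1, hc.1.trans h2.1, h2.2⟩
    have hc1 := Finset.card_le_card hsub
    rw [Finset.card_insert_of_notMem hcn, Finset.card_union_of_disjoint hdisj] at hc1
    have e1 := ih R1.card (by omega) a c hc.1.le le_rfl
    have e2 := ih R2.card (by omega) c b hc.2.le le_rfl
    rw [← intervalIntegral.integral_add_adjacent_intervals (hcont.intervalIntegrable a c)
      (hcont.intervalIntegrable c b)]
    have : (R1.card : ℝ) + R2.card + 1 ≤ N := by exact_mod_cast hc1.trans hcard
    nlinarith
  · push Not at hroot
    have hle : ∫ x in a..b, k (q.eval x) * |s.eval x| ≤ 2 * S := by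
      have hsign : (∀ x ∈ Set.Ioo a b, 0 ≤ s.eval x) ∨ (∀ x ∈ Set.Ioo a b, s.eval x ≤ 0) := by
        by_contra hcon
        push Not at hcon
        obtain ⟨⟨x, hx, hx0⟩, ⟨y, hy, hy0⟩⟩ := hcon
        have hsurj := isPreconnected_Ioo.intermediate_value hx hy
          (f := fun t => s.eval t) (by fun_prop)
        obtain ⟨c, hc, hc0⟩ := hsurj ⟨hx0.le, hy0.le⟩
        exact hroot c hc hc0
      have hb := abs_le.1 (hS (q.eval b))
      have ha := abs_le.1 (hS (q.eval a))
      rcases hsign with h | h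
      · have : ∫ x in a..b, k (q.eval x) * |s.eval x| = ∫ x in a..b, k (q.eval x) * s.eval x := by
          apply intervalIntegral.integral_congr_ae
          rw [Set.uIoc_of_le hab]
          have : ∀ᵐ x : ℝ, x ≠ b := by simp [ae_iff, measure_singleton]
          filter_upwards [this] with x hxb hx
          rw [abs_of_nonneg (h x ⟨hx.1, lt_of_le_of_ne hx.2 hxb⟩)]
        rw [this, hprim]; linarith
      · have : ∫ x in a..b, k (q.eval x) * |s.eval x| =
            ∫ x in a..b, -(k (q.eval x) * s.eval x) := by
          apply intervalIntegral.integral_congr_ae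
          rw [Set.uIoc_of_le hab]
          have : ∀ᵐ x : ℝ, x ≠ b := by simp [ae_iff, measure_singleton]
          filter_upwards [this] with x hxb hx
          rw [abs_of_nonpos (h x ⟨hx.1, lt_of_le_of_ne hx.2 hxb⟩)]; ring
        rw [this, intervalIntegral.integral_neg, hprim]; linarith
    have : (0:ℝ) ≤ N := Nat.cast_nonneg N
    nlinarith

/-- **One-dimensional oscillation estimate.** If `G = Φ'` with `|G| ≤ B1`, `|Φ| ≤ B0` and the
polynomial `p` oscillates by at least `σ` on `J = [u, v]`, then the integral of `G ∘ p` over any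
subinterval of `J` is small. Where `|p'| ≤ δ` the trivial bound is used (that set is small by the
Remez inequality for `p'`); elsewhere one integrates `(Φ ∘ p)' / p'` by parts. -/
lemma osc_one_dim (p : Polynomial ℝ) (D : ℕ) (hD : 1 ≤ D) (hp : p.natDegree ≤ D)
    (u v a b x y σ θ B0 B1 : ℝ) (hua : u ≤ a) (hab : a ≤ b) (hbv : b ≤ v)
    (hx : x ∈ Set.Icc u v) (hy : y ∈ Set.Icc u v) (hσ : 0 < σ)
    (hosc : σ ≤ p.eval y - p.eval x) (hθ : 0 < θ)
    (G Φ : ℝ → ℝ) (hG : Continuous G) (hΦ : ∀ t, HasDerivAt Φ (G t) t)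
    (hB0 : ∀ t, |Φ t| ≤ B0) (hB1 : ∀ t, |G t| ≤ B1) :
    |∫ t in a..b, G (p.eval t)| ≤
      (v - u) * (B1 * θ + 40 * D * (B0 / σ) * (11 / θ) ^ (D - 1)) := by
  have hB0' : 0 ≤ B0 := (abs_nonneg _).trans (hB0 0)
  have hB1' : 0 ≤ B1 := (abs_nonneg _).trans (hB1 0)
  have huv : u < v := by
    rcases lt_or_ge u v with h | h
    · exact h
    · have : x = y := by linarith [hx.1, hx.2, hy.1, hy.2]
      subst this; linarith
  set L := v - u with hL
  have hLpos : 0 < L := by rw [hL]; linarith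
  set q := Polynomial.derivative p with hq
  have hqdeg : q.natDegree ≤ D - 1 := (Polynomial.natDegree_derivative_le p).trans (by omega)
  -- the choice of `δ` makes the sublevel set `{|q| ≤ δ}` smaller than `θ L`
  set δ := (1 / 2) * (σ / L) * (θ / 11) ^ (D - 1) with hδ
  have hδpos : 0 < δ := by positivity
  set E := Set.Icc u v ∩ {t | |q.eval t| ≤ δ} with hE
  have hEmeas : volume.real E < θ * L := by
    by_contra hcon
    push Not at hcon
    obtain ⟨z, hz, hzq⟩ : ∃ z ∈ Set.Icc u v, σ / L ≤ |q.eval z| := by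
      by_contra hno
      push Not at hno
      have hxy : x ≠ y := by rintro rfl; linarith
      have hmv : |p.eval y - p.eval x| < σ := by
        obtain ⟨z, hz, hzle⟩ : ∃ z ∈ Set.Icc u v, p.eval y - p.eval x = q.eval z * (y - x) := by
          rcases lt_or_gt_of_ne hxy with h | h
          · obtain ⟨c, hc, hc'⟩ := exists_hasDerivAt_eq_slope (fun t => p.eval t)
              (fun t => q.eval t) h (by fun_prop) (fun t _ => p.hasDerivAt t)
            refine ⟨c, ⟨hx.1.trans hc.1.le, hc.2.le.trans hy.2⟩, ?_⟩
            rw [hc']; field_simp [sub_ne_zero.2 h.ne']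
          · obtain ⟨c, hc, hc'⟩ := exists_hasDerivAt_eq_slope (fun t => p.eval t)
              (fun t => q.eval t) h (by fun_prop) (fun t _ => p.hasDerivAt t)
            refine ⟨c, ⟨hy.1.trans hc.1.le, hc.2.le.trans hx.2⟩, ?_⟩
            rw [hc']; field_simp [sub_ne_zero.2 h.ne']; ring
        rw [hzle, abs_mul]
        have h1 := hno z hz
        have h2 : |y - x| ≤ L := by
          rw [abs_le]; constructor <;> linarith [hx.1, hx.2, hy.1, hy.2]
        have h3 : 0 < |y - x| := abs_pos.2 (sub_ne_zero.2 hxy.symm)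
        calc |q.eval z| * |y - x| < σ / L * |y - x| := by gcongr
          _ ≤ σ / L * L := by gcongr
          _ = σ := by field_simp
      have := le_abs_self (p.eval y - p.eval x)
      linarith
    have hrem := remez q (D - 1) hqdeg u v (θ * L) δ E Set.inter_subset_left (by positivity) hcon
      (fun t ht => ht.2) z hz
    have h1 : (11 * (v - u) / (θ * L)) ^ (D - 1) * δ = (1 / 2) * (σ / L) := by
      rw [← hL, hδ]
      have : 11 * L / (θ * L) = (θ / 11)⁻¹ := by field_simp
      rw [this, inv_pow]
      have : (θ / 11) ^ (D - 1) ≠ 0 := by positivity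
      field_simp
    rw [h1] at hrem
    have : 0 < σ / L := by positivity
    linarith
  have hcp : Continuous fun t => G (p.eval t) := by fun_prop
  have hcψ : Continuous fun t => psi δ (q.eval t) := (continuous_psi δ).comp (by fun_prop)
  have hcdψ : Continuous fun t => dpsi δ (q.eval t) := (continuous_dpsi δ).comp (by fun_prop)
  have hcΦ : Continuous Φ := continuous_iff_continuousAt.2 fun t => (hΦ t).continuousAt
  -- the part where `|p'|` is small
  have hI1 : |∫ t in a..b, G (p.eval t) * (1 - q.eval t * psi δ (q.eval t))| ≤ B1 * (θ * L) := by
    rw [intervalIntegral.integral_of_le hab]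
    have hmE : MeasurableSet E :=
      measurableSet_Icc.inter (measurableSet_le (by fun_prop) measurable_const)
    have hfinE : volume E ≠ ⊤ := ((measure_mono Set.inter_subset_left).trans_lt (by simp)).ne
    have h1 : ‖∫ t in Set.Ioc a b, G (p.eval t) * (1 - q.eval t * psi δ (q.eval t))‖ ≤
        ∫ t in Set.Ioc a b, E.indicator (fun _ => B1) t := by
      apply norm_integral_le_of_norm_le
      · apply Integrable.integrableOn
        rw [integrable_indicator_iff hmE]; exact integrableOn_const hfinE
      · refine (ae_restrict_iff' measurableSet_Ioc).2 (Filter.Eventually.of_forall ?_)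
        intro t ht
        rw [Real.norm_eq_abs, abs_mul]
        have h2 := one_sub_mul_psi δ hδpos (q.eval t)
        by_cases hqt : |q.eval t| ≤ δ
        · have : t ∈ E := ⟨⟨hua.trans ht.1.le, ht.2.trans hbv⟩, hqt⟩
          rw [Set.indicator_of_mem this]
          rw [Set.indicator_of_mem (by exact hqt)] at h2
          calc _ ≤ B1 * 1 := by gcongr; exact hB1 _
            _ = B1 := mul_one _
        · rw [Set.indicator_of_notMem (by exact hqt)] at h2
          have h3 : |1 - q.eval t * psi δ (q.eval t)| = 0 := le_antisymm h2 (abs_nonneg _)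
          rw [h3, mul_zero]
          exact Set.indicator_nonneg (fun _ _ => hB1') _
    rw [Real.norm_eq_abs] at h1
    refine h1.trans ?_
    calc ∫ t in Set.Ioc a b, E.indicator (fun _ => B1) t
        ≤ ∫ t, E.indicator (fun _ => B1) t := by
          apply setIntegral_le_integral
          · rw [integrable_indicator_iff hmE]; exact integrableOn_const hfinE
          · exact Filter.Eventually.of_forall fun t => Set.indicator_nonneg (fun _ _ => hB1') _
      _ = volume.real E * B1 := by rw [integral_indicator hmE, setIntegral_const, smul_eq_mul]
      _ ≤ B1 * (θ * L) := by rw [mul_comm]; gcongr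
  -- the part where `|p'|` is large, integrated by parts
  have hparts : ∫ t in a..b, G (p.eval t) * (q.eval t * psi δ (q.eval t)) =
      Φ (p.eval b) * psi δ (q.eval b) - Φ (p.eval a) * psi δ (q.eval a) -
      ∫ t in a..b, Φ (p.eval t) * (dpsi δ (q.eval t) * (Polynomial.derivative q).eval t) := by
    have := intervalIntegral.integral_mul_deriv_eq_deriv_mul (a := a) (b := b)
      (u := fun t => Φ (p.eval t))
      (v := fun t => psi δ (q.eval t)) (u' := fun t => G (p.eval t) * q.eval t)
      (v' := fun t => dpsi δ (q.eval t) * (Polynomial.derivative q).eval t)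
      (fun t _ => (hΦ _).comp t (p.hasDerivAt t))
      (fun t _ => (hasDerivAt_psi δ _).comp t (q.hasDerivAt t))
      (Continuous.intervalIntegrable (by fun_prop) _ _)
      (Continuous.intervalIntegrable (by fun_prop) _ _)
    rw [this, sub_sub_cancel]
    simp only [mul_assoc]
  have hI2 : |∫ t in a..b, Φ (p.eval t) * (dpsi δ (q.eval t) * (Polynomial.derivative q).eval t)|
      ≤ B0 * (D * (4 * Real.pi / δ)) := by
    by_cases hs : Polynomial.derivative q = 0
    · simp only [hs, Polynomial.eval_zero, mul_zero, intervalIntegral.integral_zero, abs_zero]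
      positivity
    have hbd : ∀ t, |Φ (p.eval t) * (dpsi δ (q.eval t) * (Polynomial.derivative q).eval t)| ≤
        B0 * ((4 / (δ ^ 2 + (q.eval t) ^ 2)) * |(Polynomial.derivative q).eval t|) := by
      intro t
      rw [abs_mul, abs_mul]
      gcongr
      · exact hB0 _
      · exact abs_dpsi_le δ hδpos _
    have hck : Continuous fun t : ℝ => 4 / (δ ^ 2 + t ^ 2) := by
      have : ∀ t : ℝ, δ ^ 2 + t ^ 2 ≠ 0 := fun t => by positivity
      fun_prop (disch := assumption)
    have htv := integral_comp_mul_abs_deriv_le q hs (fun t => 4 / δ * Real.arctan (t / δ))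
      (fun t => 4 / (δ ^ 2 + t ^ 2)) hck (fun t => by
        have := ((Real.hasDerivAt_arctan (t / δ)).comp t ((hasDerivAt_id t).div_const δ)).const_mul
          (4 / δ)
        refine this.congr_deriv ?_
        have h1 : 0 < δ ^ 2 + t ^ 2 := by positivity
        field_simp) (2 * Real.pi / δ) (fun t => by
        rw [abs_mul, abs_of_pos (by positivity : 0 < 4 / δ)]
        have h1 := Real.arctan_lt_pi_div_two (t / δ)
        have h2 := Real.neg_pi_div_two_lt_arctan (t / δ)
        have h3 : |Real.arctan (t / δ)| ≤ Real.pi / 2 := abs_le.2 ⟨by linarith, h1.le⟩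
        calc 4 / δ * |Real.arctan (t / δ)| ≤ 4 / δ * (Real.pi / 2) := by gcongr
          _ = 2 * Real.pi / δ := by ring) (D - 1) a b hab (by
        refine (Finset.card_filter_le _ _).trans ?_
        refine (Multiset.toFinset_card_le _).trans ?_
        refine (Polynomial.card_roots' _).trans ?_
        refine (Polynomial.natDegree_derivative_le q).trans ?_
        omega)
    have hDcast : ((D - 1 : ℕ) : ℝ) + 1 = D := by
      rw [Nat.cast_sub hD]; simp
    rw [hDcast] at htv
    calc _ ≤ ∫ t in a..b, B0 * ((4 / (δ ^ 2 + (q.eval t) ^ 2)) *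
          |(Polynomial.derivative q).eval t|) := by
          rw [← Real.norm_eq_abs]
          apply intervalIntegral.norm_integral_le_of_norm_le hab
          · exact Filter.Eventually.of_forall fun t _ => hbd t
          · apply Continuous.intervalIntegrable
            exact continuous_const.mul ((hck.comp (by fun_prop)).mul (by fun_prop))
      _ = B0 * ∫ t in a..b, (4 / (δ ^ 2 + (q.eval t) ^ 2)) *
          |(Polynomial.derivative q).eval t| := by rw [intervalIntegral.integral_const_mul]
      _ ≤ B0 * (D * (2 * (2 * Real.pi / δ))) := by gcongr
      _ = _ := by ring
  have hbdry : ∀ t, |Φ (p.eval t) * psi δ (q.eval t)| ≤ B0 * (2 / δ) := by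
    intro t
    rw [abs_mul]
    gcongr
    · exact hB0 _
    · exact abs_psi_le δ hδpos _
  have hsplit : ∫ t in a..b, G (p.eval t) =
      (∫ t in a..b, G (p.eval t) * (1 - q.eval t * psi δ (q.eval t))) +
      ∫ t in a..b, G (p.eval t) * (q.eval t * psi δ (q.eval t)) := by
    rw [← intervalIntegral.integral_add]
    · congr 1; ext t; ring
    · apply Continuous.intervalIntegrable; fun_prop
    · apply Continuous.intervalIntegrable; fun_prop
  rw [hsplit, hparts]
  have hb1 := abs_le.1 (hbdry b)
  have hb2 := abs_le.1 (hbdry a)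
  have h1 := abs_le.1 hI1
  have h2 := abs_le.1 hI2
  have hD1 : (1:ℝ) ≤ D := by exact_mod_cast hD
  have hfinal : B0 * (2 / δ) + B0 * (2 / δ) + B0 * (D * (4 * Real.pi / δ)) ≤
      L * (40 * D * (B0 / σ) * (11 / θ) ^ (D - 1)) := by
    have hδinv : 1 / δ = 2 * (L / σ) * (11 / θ) ^ (D - 1) := by
      rw [hδ]
      rw [show (11 / θ : ℝ) = (θ / 11)⁻¹ by field_simp, inv_pow]
      have : (θ / 11) ^ (D - 1) ≠ 0 := by positivity
      field_simp
    have e1 : B0 * (2 / δ) + B0 * (2 / δ) + B0 * (D * (4 * Real.pi / δ)) =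
        B0 * (4 + D * (4 * Real.pi)) * (1 / δ) := by ring
    have e2 : L * (40 * D * (B0 / σ) * (11 / θ) ^ (D - 1)) = B0 * (20 * D) * (1 / δ) := by
      rw [hδinv]; ring
    rw [e1, e2]
    have hpi := Real.pi_lt_four
    have : (4 + D * (4 * Real.pi)) ≤ 20 * D := by nlinarith
    gcongr
  rw [abs_le]
  constructor <;> nlinarith

/-! ### Log-concave weights -/

/-- A (not necessarily normalized) one-dimensional log-concave weight: measurable, nonnegative,
bounded, compactly supported and log-concave. -/
structure LCWeight (w : ℝ → ℝ) : Prop where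
  meas : Measurable w
  nonneg : ∀ x, 0 ≤ w x
  lc : ∀ x y a b : ℝ, 0 < a → 0 < b → a + b = 1 → w x ^ a * w y ^ b ≤ w (a * x + b * y)
  bdd : ∃ M, ∀ x, w x ≤ M
  supp : ∃ R, ∀ x, R < |x| → w x = 0

lemma integrable_of_bdd_supp {w : ℝ → ℝ} (hm : Measurable w) {M R : ℝ} (hM : ∀ x, |w x| ≤ M)
    (hR : ∀ x, R < |x| → w x = 0) : Integrable w := by
  have h1 : w = (Set.Icc (-R) R).indicator w := by
    ext x
    by_cases hx : x ∈ Set.Icc (-R) R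
    · rw [Set.indicator_of_mem hx]
    · rw [Set.indicator_of_notMem hx]
      apply hR
      by_contra hcon
      push Not at hcon
      exact hx (abs_le.1 hcon)
  rw [h1, integrable_indicator_iff measurableSet_Icc]
  apply Measure.integrableOn_of_bounded (M := M) (by simp) hm.aestronglyMeasurable
  exact Filter.Eventually.of_forall hM

lemma LCWeight.integrable {w : ℝ → ℝ} (hw : LCWeight w) : Integrable w := by
  obtain ⟨M, hM⟩ := hw.bdd
  obtain ⟨R, hR⟩ := hw.supp
  exact integrable_of_bdd_supp hw.meas
    (fun x => by rw [abs_of_nonneg (hw.nonneg x)]; exact hM x) hR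

/-- Superlevel sets of a log-concave function are convex. -/
lemma convex_superlevel {w : ℝ → ℝ} (h0 : ∀ x, 0 ≤ w x)
    (hw : ∀ x y a b : ℝ, 0 < a → 0 < b → a + b = 1 → w x ^ a * w y ^ b ≤ w (a * x + b * y))
    (t : ℝ) : Convex ℝ {x | t < w x} := by
  rcases lt_or_ge t 0 with ht | ht
  · have : {x | t < w x} = Set.univ := by ext x; simp; linarith [h0 x]
    rw [this]; exact convex_univ
  rw [convex_iff_forall_pos]
  intro x hx y hy a b ha hb hab
  have h1 := hw x y a b ha hb hab
  have h2 : t < w x ^ a * w y ^ b := by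
    have e1 : t ^ a * t ^ b = t := by
      rw [← Real.rpow_add_of_nonneg ht ha.le hb.le, hab, Real.rpow_one]
    have hx' : t < w x := hx
    have hy' : t < w y := hy
    calc t = t ^ a * t ^ b := e1.symm
      _ ≤ t ^ a * w y ^ b := by gcongr
      _ < w x ^ a * w y ^ b := by
        have : 0 < w y ^ b := Real.rpow_pos_of_pos (by linarith) _
        have := Real.rpow_lt_rpow ht hx' ha
        gcongr
  exact h2.trans_le h1

/-- Brunn–Minkowski on the line, for convex sets. -/
lemma measure_combo_le (A B C : Set ℝ) (hA : Convex ℝ A) (hB : Convex ℝ B) (hAne : A.Nonempty)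
    (hBne : B.Nonempty) (R : ℝ) (hAR : A ⊆ Set.Icc (-R) R) (hBR : B ⊆ Set.Icc (-R) R) (a b : ℝ)
    (ha : 0 < a) (hb : 0 < b) (hab : a + b = 1)
    (hC : ∀ x ∈ A, ∀ y ∈ B, a * x + b * y ∈ C) :
    ENNReal.ofReal a * volume A + ENNReal.ofReal b * volume B ≤ volume C := by
  have bA : BddBelow A := ⟨-R, fun x hx => (hAR hx).1⟩
  have tA : BddAbove A := ⟨R, fun x hx => (hAR hx).2⟩
  have bB : BddBelow B := ⟨-R, fun x hx => (hBR hx).1⟩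
  have tB : BddAbove B := ⟨R, fun x hx => (hBR hx).2⟩
  have h1 : ∀ S : Set ℝ, BddBelow S → BddAbove S → volume S ≤ ENNReal.ofReal (sSup S - sInf S) := by
    intro S hS1 hS2
    rw [← Real.volume_Icc]
    exact measure_mono fun x hx => ⟨csInf_le hS1 hx, le_csSup hS2 hx⟩
  have nA : 0 ≤ sSup A - sInf A := by linarith [csInf_le_csSup hAne bA tA]
  have nB : 0 ≤ sSup B - sInf B := by linarith [csInf_le_csSup hBne bB tB]
  have hsub : Set.Ioo (a * sInf A + b * sInf B) (a * sSup A + b * sSup B) ⊆ C := by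
    intro z hz
    set ε := z - (a * sInf A + b * sInf B) with hε
    set ε' := (a * sSup A + b * sSup B) - z with hε'
    have hεp : 0 < ε := by rw [hε]; linarith [hz.1]
    have hεp' : 0 < ε' := by rw [hε']; linarith [hz.2]
    obtain ⟨x0, hx0, hx0'⟩ := exists_lt_of_csInf_lt hAne (show sInf A < sInf A + ε by linarith)
    obtain ⟨y0, hy0, hy0'⟩ := exists_lt_of_csInf_lt hBne (show sInf B < sInf B + ε by linarith)
    obtain ⟨x1, hx1, hx1'⟩ := exists_lt_of_lt_csSup hAne (show sSup A - ε' < sSup A by linarith)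
    obtain ⟨y1, hy1, hy1'⟩ := exists_lt_of_lt_csSup hBne (show sSup B - ε' < sSup B by linarith)
    have e0 : a * x0 + b * y0 < z := by nlinarith
    have e1 : z < a * x1 + b * y1 := by nlinarith
    set s := (z - (a * x0 + b * y0)) / ((a * x1 + b * y1) - (a * x0 + b * y0)) with hs
    have hden : 0 < (a * x1 + b * y1) - (a * x0 + b * y0) := by linarith
    have hs0 : 0 ≤ s := div_nonneg (by linarith) hden.le
    have hs1 : s ≤ 1 := by rw [hs, div_le_one hden]; linarith
    have hxm := hA hx0 hx1 (sub_nonneg.2 hs1) hs0 (by ring)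
    have hym := hB hy0 hy1 (sub_nonneg.2 hs1) hs0 (by ring)
    have := hC _ hxm _ hym
    simp only [smul_eq_mul] at this
    convert this using 1
    have : s * ((a * x1 + b * y1) - (a * x0 + b * y0)) = z - (a * x0 + b * y0) := by
      rw [hs]; field_simp
    linarith
  calc ENNReal.ofReal a * volume A + ENNReal.ofReal b * volume B
      ≤ ENNReal.ofReal a * ENNReal.ofReal (sSup A - sInf A) +
        ENNReal.ofReal b * ENNReal.ofReal (sSup B - sInf B) := by
        gcongr
        · exact h1 A bA tA
        · exact h1 B bB tB
    _ = ENNReal.ofReal ((a * sSup A + b * sSup B) - (a * sInf A + b * sInf B)) := by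
        rw [← ENNReal.ofReal_mul ha.le, ← ENNReal.ofReal_mul hb.le,
          ← ENNReal.ofReal_add (by positivity) (by positivity)]
        congr 1; ring
    _ = volume (Set.Ioo (a * sInf A + b * sInf B) (a * sSup A + b * sSup B)) := by
        rw [Real.volume_Ioo]
    _ ≤ volume C := measure_mono hsub

/-- Prékopa–Leindler inequality on the line for functions with supremum `1`: the additive form
follows from `measure_combo_le` and the layer-cake formula. -/
lemma prekopa_leindler_normalized (f g h : ℝ → ℝ) (hf : Measurable f) (hg : Measurable g)
    (hh : Measurable h) (f0 : ∀ x, 0 ≤ f x) (g0 : ∀ x, 0 ≤ g x) (h0 : ∀ x, 0 ≤ h x)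
    (f1 : ∀ x, f x ≤ 1) (g1 : ∀ x, g x ≤ 1) (fs : ∀ t < 1, ∃ x, t < f x)
    (gs : ∀ t < 1, ∃ x, t < g x) (R : ℝ) (fR : ∀ x, R < |x| → f x = 0)
    (gR : ∀ x, R < |x| → g x = 0) (fq : ∀ t, Convex ℝ {x | t < f x})
    (gq : ∀ t, Convex ℝ {x | t < g x}) (a b : ℝ) (ha : 0 < a) (hb : 0 < b) (hab : a + b = 1)
    (hfgh : ∀ x y, f x ^ a * g y ^ b ≤ h (a * x + b * y)) :
    ENNReal.ofReal a * (∫⁻ x, ENNReal.ofReal (f x)) +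
      ENNReal.ofReal b * (∫⁻ x, ENNReal.ofReal (g x)) ≤ ∫⁻ x, ENNReal.ofReal (h x) := by
  rw [lintegral_eq_lintegral_meas_lt volume (Filter.Eventually.of_forall f0) hf.aemeasurable,
    lintegral_eq_lintegral_meas_lt volume (Filter.Eventually.of_forall g0) hg.aemeasurable,
    lintegral_eq_lintegral_meas_lt volume (Filter.Eventually.of_forall h0) hh.aemeasurable,
    ← lintegral_const_mul' _ _ ENNReal.ofReal_ne_top,
    ← lintegral_const_mul' _ _ ENNReal.ofReal_ne_top]
  refine (le_lintegral_add _ _).trans ?_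
  apply setLIntegral_mono' measurableSet_Ioi
  intro t ht
  have ht0 : (0:ℝ) < t := ht
  rcases lt_or_ge t 1 with h1 | h1
  · have hsub : ∀ (u : ℝ → ℝ), (∀ x, R < |x| → u x = 0) → {x | t < u x} ⊆ Set.Icc (-R) R := by
      intro u hu x hx
      by_contra hcon
      have : R < |x| := by
        by_contra h2; push Not at h2; exact hcon (abs_le.1 h2)
      have h3 : t < u x := hx
      rw [hu x this] at h3; linarith
    refine measure_combo_le _ _ _ (fq t) (gq t) (fs t h1) (gs t h1) R (hsub f fR) (hsub g gR)
      a b ha hb hab ?_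
    intro x hx y hy
    have hx' : t < f x := hx
    have hy' : t < g y := hy
    refine lt_of_lt_of_le ?_ (hfgh x y)
    have e1 : t ^ a * t ^ b = t := by
      rw [← Real.rpow_add ht0, hab, Real.rpow_one]
    calc t = t ^ a * t ^ b := e1.symm
      _ ≤ t ^ a * g y ^ b := by gcongr
      _ < f x ^ a * g y ^ b := by
        have : 0 < g y ^ b := Real.rpow_pos_of_pos (by linarith) _
        have := Real.rpow_lt_rpow ht0.le hx' ha
        gcongr
  · have e1 : {x | t < f x} = ∅ := by ext x; simp; linarith [f1 x]
    have e2 : {x | t < g x} = ∅ := by ext x; simp; linarith [g1 x]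
    simp [e1, e2]

/-- Prékopa–Leindler inequality on the line, for log-concave `f`, `g`. -/
lemma prekopa_leindler (f g h : ℝ → ℝ) (hf : LCWeight f) (hg : LCWeight g)
    (hh : Integrable h) (hhm : Measurable h) (h0 : ∀ x, 0 ≤ h x)
    (a b : ℝ) (ha : 0 < a) (hb : 0 < b) (hab : a + b = 1)
    (hfgh : ∀ x y, f x ^ a * g y ^ b ≤ h (a * x + b * y)) :
    (∫ x, f x) ^ a * (∫ x, g x) ^ b ≤ ∫ x, h x := by
  have If0 : 0 ≤ ∫ x, f x := integral_nonneg hf.nonneg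
  have Ig0 : 0 ≤ ∫ x, g x := integral_nonneg hg.nonneg
  have Ih0 : 0 ≤ ∫ x, h x := integral_nonneg h0
  rcases eq_or_lt_of_le If0 with hF | hF
  · rw [← hF, Real.zero_rpow ha.ne', zero_mul]; exact Ih0
  rcases eq_or_lt_of_le Ig0 with hG | hG
  · rw [← hG, Real.zero_rpow hb.ne', mul_zero]; exact Ih0
  obtain ⟨Rf, hRf⟩ := hf.supp
  obtain ⟨Rg, hRg⟩ := hg.supp
  have key : ∀ u : ℝ → ℝ, LCWeight u → 0 < ∫ x, u x →
      ∃ M, 0 < M ∧ (∀ x, u x ≤ M) ∧ ∀ t < M, ∃ x, t < u x := by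
    intro u hu hpos
    obtain ⟨B, hB⟩ := hu.bdd
    have hbb : BddAbove (Set.range u) := ⟨B, by rintro _ ⟨x, rfl⟩; exact hB x⟩
    refine ⟨⨆ x, u x, ?_, fun x => le_ciSup hbb x, fun t ht => exists_lt_of_lt_ciSup ht⟩
    by_contra hcon
    push Not at hcon
    have : ∀ x, u x = 0 := fun x => le_antisymm ((le_ciSup hbb x).trans hcon) (hu.nonneg x)
    simp [this] at hpos
  obtain ⟨Mf, Mf0, Mf1, Mf2⟩ := key f hf hF
  obtain ⟨Mg, Mg0, Mg1, Mg2⟩ := key g hg hG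
  set M := Mf ^ a * Mg ^ b with hM
  have M0 : 0 < M := by positivity
  have hn := prekopa_leindler_normalized (fun x => f x / Mf) (fun x => g x / Mg) (fun x => h x / M)
    (hf.meas.div_const _) (hg.meas.div_const _) (hhm.div_const _)
    (fun x => div_nonneg (hf.nonneg x) Mf0.le) (fun x => div_nonneg (hg.nonneg x) Mg0.le)
    (fun x => div_nonneg (h0 x) M0.le) (fun x => (div_le_one Mf0).2 (Mf1 x))
    (fun x => (div_le_one Mg0).2 (Mg1 x))
    (fun t ht => by
      obtain ⟨x, hx⟩ := Mf2 (t * Mf) (by nlinarith)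
      exact ⟨x, (lt_div_iff₀ Mf0).2 hx⟩)
    (fun t ht => by
      obtain ⟨x, hx⟩ := Mg2 (t * Mg) (by nlinarith)
      exact ⟨x, (lt_div_iff₀ Mg0).2 hx⟩) (max Rf Rg)
    (fun x hx => by rw [hRf x ((le_max_left _ _).trans_lt hx), zero_div])
    (fun x hx => by rw [hRg x ((le_max_right _ _).trans_lt hx), zero_div])
    (fun t => by
      have := convex_superlevel hf.nonneg hf.lc (t * Mf)
      simpa only [lt_div_iff₀ Mf0] using this)
    (fun t => by
      have := convex_superlevel hg.nonneg hg.lc (t * Mg)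
      simpa only [lt_div_iff₀ Mg0] using this) a b ha hb hab
    (fun x y => by
      rw [Real.div_rpow (hf.nonneg x) Mf0.le, Real.div_rpow (hg.nonneg y) Mg0.le, div_mul_div_comm]
      rw [← hM]
      gcongr
      exact hfgh x y)
  have conv : ∀ (u : ℝ → ℝ) (c : ℝ), 0 < c → Integrable u → (∀ x, 0 ≤ u x) →
      ∫⁻ x, ENNReal.ofReal (u x / c) = ENNReal.ofReal ((∫ x, u x) / c) := by
    intro u c hc hu hu0
    rw [← integral_div, ofReal_integral_eq_lintegral_ofReal (hu.div_const c)
      (Filter.Eventually.of_forall fun x => div_nonneg (hu0 x) hc.le)]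
  rw [conv f Mf Mf0 hf.integrable hf.nonneg, conv g Mg Mg0 hg.integrable hg.nonneg,
    conv h M M0 hh h0, ← ENNReal.ofReal_mul ha.le, ← ENNReal.ofReal_mul hb.le,
    ← ENNReal.ofReal_add (by positivity) (by positivity),
    ENNReal.ofReal_le_ofReal_iff (by positivity)] at hn
  have amgm := Real.geom_mean_le_arith_mean2_weighted ha.le hb.le
    (div_nonneg If0 Mf0.le) (div_nonneg Ig0 Mg0.le) hab
  have h3 := amgm.trans hn
  rw [Real.div_rpow If0 Mf0.le, Real.div_rpow Ig0 Mg0.le, div_mul_div_comm, ← hM,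
    div_le_div_iff_of_pos_right M0] at h3
  exact h3

lemma LCWeight.slice {w : ℝ → ℝ} (hw : LCWeight w) {K : Set (ℝ × ℝ)} (hK : Convex ℝ K)
    (hKm : MeasurableSet K) (x : ℝ) : LCWeight fun y => w y * K.indicator (fun _ => (1:ℝ)) (x, y) := by
  obtain ⟨M, hM⟩ := hw.bdd
  obtain ⟨R, hR⟩ := hw.supp
  refine ⟨?_, ?_, ?_, ⟨M, ?_⟩, ⟨R, ?_⟩⟩
  · exact hw.meas.mul ((measurable_const.indicator hKm).comp (by fun_prop))
  · intro y; exact mul_nonneg (hw.nonneg y) (Set.indicator_nonneg (fun _ _ => zero_le_one) _)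
  · intro y z a b ha hb hab
    by_cases hy : (x, y) ∈ K
    · by_cases hz : (x, z) ∈ K
      · have hm : (x, a * y + b * z) ∈ K := by
          have := hK hy hz ha.le hb.le hab
          simp only [Prod.smul_mk, smul_eq_mul, Prod.mk_add_mk] at this
          rwa [← add_mul, hab, one_mul] at this
        simp only [Set.indicator_of_mem hy, Set.indicator_of_mem hz, Set.indicator_of_mem hm, mul_one]
        exact hw.lc y z a b ha hb hab
      · simp only [Set.indicator_of_notMem hz, mul_zero, Real.zero_rpow hb.ne']
        exact mul_nonneg (hw.nonneg _) (Set.indicator_nonneg (fun _ _ => zero_le_one) _)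
    · simp only [Set.indicator_of_notMem hy, mul_zero, Real.zero_rpow ha.ne', zero_mul]
      exact mul_nonneg (hw.nonneg _) (Set.indicator_nonneg (fun _ _ => zero_le_one) _)
  · intro y
    by_cases hy : (x, y) ∈ K
    · simp only [Set.indicator_of_mem hy, mul_one]; exact hM y
    · simp only [Set.indicator_of_notMem hy, mul_zero]; exact (hw.nonneg y).trans (hM y)
  · intro y hy; rw [hR y hy, zero_mul]

/-- The marginal of the product of two log-concave weights restricted to a planar convex set is
log-concave. -/
lemma LCWeight.marginal {w₁ w₂ : ℝ → ℝ} (h₁ : LCWeight w₁) (h₂ : LCWeight w₂) {K : Set (ℝ × ℝ)}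
    (hK : Convex ℝ K) (hKm : MeasurableSet K) :
    LCWeight fun x => w₁ x * ∫ y, w₂ y * K.indicator (fun _ => (1:ℝ)) (x, y) := by
  obtain ⟨M, hM⟩ := h₁.bdd
  obtain ⟨R, hR⟩ := h₁.supp
  have hint0 : ∀ x, 0 ≤ ∫ y, w₂ y * K.indicator (fun _ => (1:ℝ)) (x, y) := fun x =>
    integral_nonneg (h₂.slice hK hKm x).nonneg
  refine ⟨?_, fun x => mul_nonneg (h₁.nonneg x) (hint0 x), ?_, ⟨M * ∫ y, w₂ y, ?_⟩, ⟨R, ?_⟩⟩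
  · apply h₁.meas.mul
    apply StronglyMeasurable.measurable
    apply StronglyMeasurable.integral_prod_right'
      (f := fun p : ℝ × ℝ => w₂ p.2 * K.indicator (fun _ => (1:ℝ)) p)
    exact ((h₂.meas.comp measurable_snd).mul (measurable_const.indicator hKm)).stronglyMeasurable
  · intro x z a b ha hb hab
    rw [Real.mul_rpow (h₁.nonneg x) (hint0 x), Real.mul_rpow (h₁.nonneg z) (hint0 z),
      mul_mul_mul_comm]
    have hs := h₂.slice hK hKm (a * x + b * z)
    apply mul_le_mul (h₁.lc x z a b ha hb hab) _ (by
      have := hint0 x; have := hint0 z; positivity) (h₁.nonneg _)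
    apply prekopa_leindler _ _ _ (h₂.slice hK hKm x) (h₂.slice hK hKm z) hs.integrable hs.meas
      hs.nonneg a b ha hb hab
    intro y y'
    by_cases hy : (x, y) ∈ K
    · by_cases hz : (z, y') ∈ K
      · have hm : (a * x + b * z, a * y + b * y') ∈ K := by
          have := hK hy hz ha.le hb.le hab
          simpa only [Prod.smul_mk, smul_eq_mul, Prod.mk_add_mk] using this
        simp only [Set.indicator_of_mem hy, Set.indicator_of_mem hz, Set.indicator_of_mem hm, mul_one]
        exact h₂.lc y y' a b ha hb hab
      · simp only [Set.indicator_of_notMem hz, mul_zero, Real.zero_rpow hb.ne']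
        exact hs.nonneg _
    · simp only [Set.indicator_of_notMem hy, mul_zero, Real.zero_rpow ha.ne', zero_mul]
      exact hs.nonneg _
  · intro x
    apply mul_le_mul (hM x) _ (hint0 x) ((h₁.nonneg x).trans (hM x))
    apply integral_mono (h₂.slice hK hKm x).integrable h₂.integrable
    intro y
    by_cases hy : (x, y) ∈ K
    · simp only [Set.indicator_of_mem hy, mul_one]; exact le_rfl
    · simp only [Set.indicator_of_notMem hy, mul_zero]; exact h₂.nonneg y
  · intro x hx; rw [hR x hx, zero_mul]

lemma LCWeight.affine {w : ℝ → ℝ} (hw : LCWeight w) (c r s : ℝ) (hc : 0 ≤ c) (hs : s ≠ 0) :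
    LCWeight fun x => c * w (r + s * x) := by
  obtain ⟨M, hM⟩ := hw.bdd
  obtain ⟨R, hR⟩ := hw.supp
  refine ⟨(hw.meas.comp (by fun_prop)).const_mul c, fun x => mul_nonneg hc (hw.nonneg _), ?_,
    ⟨c * M, fun x => mul_le_mul_of_nonneg_left (hM _) hc⟩, ⟨(R + |r|) / |s|, ?_⟩⟩
  · intro x y a b ha hb hab
    rw [Real.mul_rpow hc (hw.nonneg _), Real.mul_rpow hc (hw.nonneg _), mul_mul_mul_comm,
      ← Real.rpow_add_of_nonneg hc ha.le hb.le, hab, Real.rpow_one]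
    apply mul_le_mul_of_nonneg_left _ hc
    have e : r + s * (a * x + b * y) = a * (r + s * x) + b * (r + s * y) := by
      linear_combination (-r) * hab
    rw [e]
    exact hw.lc (r + s * x) (r + s * y) a b ha hb hab
  · intro x hx
    rw [hR, mul_zero]
    have hs' : 0 < |s| := abs_pos.2 hs
    rw [div_lt_iff₀ hs'] at hx
    have h1 : |s * x| ≤ |r + s * x| + |r| := by
      have := abs_sub (r + s * x) r
      simpa using this
    rw [abs_mul] at h1
    linarith

/-! ### Needles -/

/-- A log-concave probability density on the line, translated and dilated so that its scale
is `1`. -/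
structure Needle (w : ℝ → ℝ) : Prop extends LCWeight w where
  le_two : ∀ x, w x ≤ 2
  integral_eq : ∫ x, w x = 1
  tail : ∀ x, w x ≤ 8 * Real.exp (-|x| / 4)

/-- Exponential decay. If `w` exceeded `1/4` at distance `5` from the origin, where `w 0 = 1`, its
integral would exceed `1`; log-concavity propagates the decay from there. -/
lemma tail_of_normalized {w : ℝ → ℝ} (hw : LCWeight w) (h2 : ∀ x, w x ≤ 2) (h1 : ∫ x, w x = 1)
    (h0 : w 0 = 1) (t : ℝ) : w t ≤ 8 * Real.exp (-|t| / 4) := by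
  rcases le_or_gt |t| 5 with ht | ht
  · refine (h2 t).trans ?_
    have e1 : Real.exp (-(5:ℝ) / 4) ≤ Real.exp (-|t| / 4) := Real.exp_le_exp.2 (by linarith)
    have e2 : (1:ℝ) / 4 ≤ Real.exp (-(5:ℝ) / 4) := by
      rw [neg_div, Real.exp_neg, ← one_div]
      apply one_div_le_one_div_of_le (Real.exp_pos _)
      have e3 : Real.exp (5 / 4) ^ 4 = Real.exp 1 ^ 5 := by
        rw [← Real.exp_nat_mul, ← Real.exp_nat_mul]; norm_num
      have e4 : Real.exp 1 ^ 5 ≤ 2.75 ^ 5 := by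
        gcongr
        exact Real.exp_one_lt_d9.le.trans (by norm_num)
      by_contra hcon
      push Not at hcon
      have : (4:ℝ) ^ 4 < Real.exp (5 / 4) ^ 4 := by gcongr
      rw [e3] at this
      have e5 : (2.75:ℝ) ^ 5 < 4 ^ 4 := by norm_num
      exact absurd (this.trans_le e4) (not_lt.2 e5.le)
    linarith
  · have htpos : 0 < |t| := by linarith
    set l := 5 / |t| with hl
    have hl0 : 0 < l := by positivity
    have hl1 : l < 1 := by rw [hl, div_lt_one htpos]; exact ht
    set u := l * t with hu
    have huabs : |u| = 5 := by rw [hu, abs_mul, abs_of_pos hl0, hl]; field_simp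
    have hwu : w u ≤ 1 / 4 := by
      by_contra hcon
      push Not at hcon
      have hconv := convex_superlevel hw.nonneg hw.lc (1 / 4)
      have hseg : Set.uIcc 0 u ⊆ {x | 1 / 4 < w x} := by
        rw [← segment_eq_uIcc]
        exact hconv.segment_subset (by simp only [Set.mem_ofPred_eq, h0]; norm_num) hcon
      have hvol : volume.real (Set.uIcc 0 u) = 5 := by
        rw [Measure.real, Real.volume_interval, sub_zero, huabs]; simp
      have e1 : ∫ x in Set.uIcc 0 u, (1 / 4 : ℝ) ≤ ∫ x in Set.uIcc 0 u, w x := by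
        apply setIntegral_mono_on (integrableOn_const (by rw [Real.volume_interval]; simp))
          hw.integrable.integrableOn measurableSet_uIcc
        intro x hx; exact le_of_lt (hseg hx)
      rw [setIntegral_const, hvol] at e1
      have e2 : ∫ x in Set.uIcc 0 u, w x ≤ ∫ x, w x :=
        setIntegral_le_integral hw.integrable (Filter.Eventually.of_forall hw.nonneg)
      rw [h1] at e2
      norm_num at e1
      linarith
    have h3 := hw.lc 0 t (1 - l) l (by linarith) hl0 (by ring)
    rw [h0, Real.one_rpow, one_mul, mul_zero, zero_add] at h3
    have h4 : w t ^ l ≤ 1 / 4 := h3.trans hwu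
    have h5 : w t ≤ (1 / 4 : ℝ) ^ (1 / l) := by
      have := Real.rpow_le_rpow (Real.rpow_nonneg (hw.nonneg t) _) h4 (by positivity : 0 ≤ 1 / l)
      rwa [← Real.rpow_mul (hw.nonneg t), mul_one_div_cancel hl0.ne', Real.rpow_one] at this
    have h6 : (1 / 4 : ℝ) ^ (1 / l) ≤ Real.exp (-|t| / 4) := by
      rw [Real.rpow_def_of_pos (by norm_num)]
      apply Real.exp_le_exp.2
      have : Real.log (1 / 4) = -(2 * Real.log 2) := by
        rw [one_div, Real.log_inv, show (4:ℝ) = 2 ^ 2 by norm_num, Real.log_pow]; norm_num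
      rw [this, hl]
      have hlog := Real.log_two_gt_d9
      have : 1 / (5 / |t|) = |t| / 5 := by field_simp
      rw [this]
      nlinarith
    have := Real.exp_pos (-|t| / 4)
    linarith

/-- Every nontrivial log-concave weight becomes a `Needle` after an affine change of variable. -/
lemma LCWeight.exists_needle {w : ℝ → ℝ} (hw : LCWeight w) (hpos : 0 < ∫ x, w x) :
    ∃ (r s : ℝ) (v : ℝ → ℝ), Needle v ∧
      ∀ Ψ : ℝ → ℝ, ∫ x, Ψ (r + s * x) * v x = (∫ x, Ψ x * w x) / ∫ x, w x := by
  set Z := ∫ x, w x with hZ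
  obtain ⟨B, hB⟩ := hw.bdd
  have hbb : BddAbove (Set.range w) := ⟨B, by rintro _ ⟨x, rfl⟩; exact hB x⟩
  have hM0 : 0 < ⨆ x, w x := by
    by_contra hcon
    push Not at hcon
    have : ∀ x, w x = 0 := fun x => le_antisymm ((le_ciSup hbb x).trans hcon) (hw.nonneg x)
    simp [hZ, this] at hpos
  obtain ⟨t0, ht0⟩ := exists_lt_of_lt_ciSup (show (⨆ x, w x) / 2 < ⨆ x, w x by linarith)
  have hle : ∀ x, w x ≤ 2 * w t0 := fun x => by have := le_ciSup hbb x; linarith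
  have hw0 : 0 < w t0 := by linarith
  set s := Z / w t0 with hs
  have hs0 : 0 < s := by positivity
  have hlc := hw.affine (1 / w t0) t0 s (by positivity) hs0.ne'
  have hch : ∀ Ψ : ℝ → ℝ, ∫ x, Ψ (t0 + s * x) * (1 / w t0 * w (t0 + s * x)) =
      (∫ x, Ψ x * w x) / Z := by
    intro Ψ
    have e1 := Measure.integral_comp_mul_left (fun y => Ψ (t0 + y) * (1 / w t0 * w (t0 + y))) s
    have e2 := integral_add_left_eq_self (μ := volume)
      (fun y => Ψ y * (1 / w t0 * w y)) t0
    rw [e1, e2, smul_eq_mul, abs_of_pos (by positivity)]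
    have : ∀ y, Ψ y * (1 / w t0 * w y) = (1 / w t0) * (Ψ y * w y) := fun y => by ring
    simp only [this]
    rw [integral_const_mul, hs]
    field_simp
  have hone : ∫ x, 1 / w t0 * w (t0 + s * x) = 1 := by
    have := hch (fun _ => 1)
    simp only [one_mul] at this
    rw [this, ← hZ, div_self hpos.ne']
  have htwo : ∀ x, 1 / w t0 * w (t0 + s * x) ≤ 2 := by
    intro x
    rw [one_div, inv_mul_le_iff₀ hw0]; linarith [hle (t0 + s * x)]
  refine ⟨t0, s, fun x => 1 / w t0 * w (t0 + s * x), ⟨hlc, htwo, hone, ?_⟩, hch⟩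
  exact tail_of_normalized hlc htwo hone (by simp [ne_of_gt hw0])

/-! ### Localization: from product weights to needles -/

/-- The closed half-plane through `q` with inner normal `(cos θ, sin θ)`. -/
def halfPlane (q : ℝ × ℝ) (θ : ℝ) : Set (ℝ × ℝ) :=
  {z | 0 ≤ Real.cos θ * (z.1 - q.1) + Real.sin θ * (z.2 - q.2)}

lemma halfPlane_closed (q : ℝ × ℝ) (θ : ℝ) : IsClosed (halfPlane q θ) :=
  isClosed_le continuous_const (by fun_prop)

lemma halfPlane_convex (q : ℝ × ℝ) (θ : ℝ) : Convex ℝ (halfPlane q θ) := by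
  intro x hx y hy a b ha hb hab
  simp only [halfPlane, Set.mem_ofPred_eq, Prod.fst_add, Prod.snd_add, Prod.smul_fst,
    Prod.smul_snd, smul_eq_mul] at hx hy ⊢
  have h1 := mul_nonneg ha hx
  have h2 := mul_nonneg hb hy
  have hb' : b = 1 - a := by linarith
  subst hb'
  nlinarith

lemma mem_halfPlane {q z : ℝ × ℝ} {θ : ℝ} : z ∈ halfPlane q θ ↔
    0 ≤ Real.cos θ * (z.1 - q.1) + Real.sin θ * (z.2 - q.2) := Iff.rfl

lemma line_null (c s : ℝ) (q : ℝ × ℝ) (h : c ≠ 0 ∨ s ≠ 0) :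
    ∀ᵐ z : ℝ × ℝ, c * (z.1 - q.1) + s * (z.2 - q.2) ≠ 0 := by
  rw [ae_iff]
  simp only [not_not]
  have hm : MeasurableSet {z : ℝ × ℝ | c * (z.1 - q.1) + s * (z.2 - q.2) = 0} :=
    (isClosed_eq (by fun_prop) continuous_const).measurableSet
  rw [Measure.volume_eq_prod, Measure.measure_prod_null hm]
  have : ∀ᵐ x : ℝ, x ≠ q.1 := by simp [ae_iff]
  filter_upwards [this] with x hx
  apply Set.Subsingleton.measure_zero
  intro y hy z hz
  simp only [Set.mem_preimage, Set.mem_ofPred_eq] at hy hz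
  rcases eq_or_ne s 0 with hs | hs
  · subst hs
    exfalso
    have : c * (x - q.1) = 0 := by linarith
    rcases mul_eq_zero.1 this with h' | h'
    · simp [h'] at h
    · exact hx (by linarith)
  · have : s * (y - z) = 0 := by linarith
    rcases mul_eq_zero.1 this with h' | h'
    · exact absurd h' hs
    · linarith

/-- Turning the normal by `π` gives the complementary half-plane, up to the boundary line, which is a
null set. -/
lemma halfPlane_integral_add (q : ℝ × ℝ) (θ : ℝ) (f : ℝ × ℝ → ℝ) (hf : Integrable f) :
    (∫ z, (halfPlane q θ).indicator f z) + (∫ z, (halfPlane q (θ + Real.pi)).indicator f z)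
      = ∫ z, f z := by
  have hm := fun θ => (halfPlane_closed q θ).measurableSet
  rw [← integral_add (hf.indicator (hm _)) (hf.indicator (hm _))]
  apply integral_congr_ae
  have := line_null (Real.cos θ) (Real.sin θ) q (by
    by_contra hcon
    push Not at hcon
    have := Real.sin_sq_add_cos_sq θ
    simp [hcon.1, hcon.2] at this)
  filter_upwards [this] with z hz
  rcases lt_or_gt_of_ne hz with h | h
  · rw [Set.indicator_of_notMem (by rw [mem_halfPlane]; linarith), Set.indicator_of_mem, zero_add]
    rw [mem_halfPlane, Real.cos_add_pi, Real.sin_add_pi]; linarith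
  · rw [Set.indicator_of_mem (by rw [mem_halfPlane]; linarith), Set.indicator_of_notMem, add_zero]
    rw [mem_halfPlane, Real.cos_add_pi, Real.sin_add_pi]; linarith

lemma halfPlane_integral_continuous (q : ℝ × ℝ) (f : ℝ × ℝ → ℝ) (hf : Integrable f) :
    Continuous fun θ => ∫ z, (halfPlane q θ).indicator f z := by
  rw [continuous_iff_continuousAt]
  intro θ
  have hm := fun θ => (halfPlane_closed q θ).measurableSet
  apply continuousAt_of_dominated (bound := fun z => ‖f z‖)
  · exact Filter.Eventually.of_forall fun θ => (hf.indicator (hm _)).aestronglyMeasurable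
  · exact Filter.Eventually.of_forall fun θ => Filter.Eventually.of_forall fun z =>
      norm_indicator_le_norm_self _ _
  · exact hf.norm
  · have := line_null (Real.cos θ) (Real.sin θ) q (by
      by_contra hcon
      push Not at hcon
      have := Real.sin_sq_add_cos_sq θ
      simp [hcon.1, hcon.2] at this)
    filter_upwards [this] with z hz
    have hc : Continuous fun θ => Real.cos θ * (z.1 - q.1) + Real.sin θ * (z.2 - q.2) := by
      fun_prop
    rcases lt_or_gt_of_ne hz with h | h
    · have he := (hc.tendsto θ).eventually (gt_mem_nhds h)
      apply ContinuousAt.congr (f := fun _ => (0:ℝ)) continuousAt_const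
      filter_upwards [he] with θ' h'
      rw [Set.indicator_of_notMem (by rw [mem_halfPlane]; linarith)]
    · have he := (hc.tendsto θ).eventually (lt_mem_nhds h)
      apply ContinuousAt.congr (f := fun _ => f z) continuousAt_const
      filter_upwards [he] with θ' h'
      rw [Set.indicator_of_mem (by rw [mem_halfPlane]; linarith)]

/-- The intermediate value theorem in the angle gives a half-plane carrying exactly half of
the integral of `f`; one of the two halves keeps a positive integral of `g`. -/
lemma bisect (q : ℝ × ℝ) (f g : ℝ × ℝ → ℝ) (hf : Integrable f) (hg : Integrable g)
    (hfp : 0 < ∫ z, f z) (hgp : 0 < ∫ z, g z) :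
    ∃ θ, 0 < (∫ z, (halfPlane q θ).indicator f z) ∧
      0 < ∫ z, (halfPlane q θ).indicator g z := by
  set F := fun θ => ∫ z, (halfPlane q θ).indicator f z with hF
  have hFc : Continuous F := halfPlane_integral_continuous q f hf
  have hadd : ∀ θ, F θ + F (θ + Real.pi) = ∫ z, f z := fun θ => halfPlane_integral_add q θ f hf
  have h0 := hadd 0
  rw [zero_add] at h0
  have hmem : (∫ z, f z) / 2 ∈ Set.uIcc (F 0) (F Real.pi) := by
    rw [Set.mem_uIcc]
    rcases le_total (F 0) (F Real.pi) with h | h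
    · left; constructor <;> linarith
    · right; constructor <;> linarith
  obtain ⟨θ, -, hθ⟩ := intermediate_value_uIcc (f := F) hFc.continuousOn hmem
  have h1 := hadd θ
  have h2 := halfPlane_integral_add q θ g hg
  rcases lt_or_ge 0 (∫ z, (halfPlane q θ).indicator g z) with h | h
  · exact ⟨θ, by show 0 < F θ; linarith, h⟩
  · exact ⟨θ + Real.pi, by show 0 < F (θ + Real.pi); linarith, by linarith⟩

/-- A planar convex set with empty interior lies in a line. -/
lemma Convex.exists_functional {K : Set (ℝ × ℝ)} (hK : Convex ℝ K) (hIg : interior K = ∅) :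
    ∃ u v c : ℝ, (u ≠ 0 ∨ v ≠ 0) ∧ ∀ z ∈ K, u * z.1 + v * z.2 = c := by
  rcases K.eq_empty_or_nonempty with rfl | ⟨x0, hx0⟩
  · exact ⟨1, 0, 0, by simp, by simp⟩
  have h1 : affineSpan ℝ K ≠ ⊤ := by
    rw [Ne, ← hK.interior_nonempty_iff_affineSpan_eq_top, hIg]; simp
  have h2 : (affineSpan ℝ K).direction < ⊤ := by
    rw [lt_top_iff_ne_top]
    intro h
    exact h1 ((AffineSubspace.direction_eq_top_iff_of_nonempty
      ⟨x0, subset_affineSpan ℝ K hx0⟩).1 h)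
  obtain ⟨f, hf0, hf⟩ := Submodule.exists_le_ker_of_lt_top _ h2
  have hfz : ∀ z : ℝ × ℝ, f z = f (1, 0) * z.1 + f (0, 1) * z.2 := by
    intro z
    have : z = z.1 • ((1:ℝ), (0:ℝ)) + z.2 • ((0:ℝ), (1:ℝ)) := by ext <;> simp
    conv_lhs => rw [this]
    rw [map_add, map_smul, map_smul, smul_eq_mul, smul_eq_mul]; ring
  refine ⟨f (1, 0), f (0, 1), f x0, ?_, fun z hz => ?_⟩
  · by_contra hcon
    push Not at hcon
    apply hf0
    ext <;> simp [hcon.1, hcon.2]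
  · rw [← hfz]
    have : z - x0 ∈ (affineSpan ℝ K).direction :=
      AffineSubspace.vsub_mem_direction (subset_affineSpan ℝ K hz) (subset_affineSpan ℝ K hx0)
    have := hf this
    rw [LinearMap.mem_ker, map_sub] at this
    linarith

/-- Repeated bisection through a dense sequence of points shrinks the plane to a set with
empty interior, hence to a subset of a line. -/
lemma exists_thin {f g : ℝ × ℝ → ℝ} (hf : Integrable f) (hg : Integrable g)
    (K₀ : Set (ℝ × ℝ)) (hK₀ : IsCompact K₀) (hK₀c : Convex ℝ K₀)
    (hfp : 0 < ∫ z, K₀.indicator f z) (hgp : 0 < ∫ z, K₀.indicator g z) :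
    ∃ u v c : ℝ, (u ≠ 0 ∨ v ≠ 0) ∧ ∀ U : Set (ℝ × ℝ), IsOpen U →
      {z | u * z.1 + v * z.2 = c} ⊆ U → ∃ K ⊆ U, IsCompact K ∧ Convex ℝ K ∧
        0 < (∫ z, K.indicator f z) ∧ 0 < ∫ z, K.indicator g z := by
  let T := {K : Set (ℝ × ℝ) // IsCompact K ∧ Convex ℝ K ∧
        0 < (∫ z, K.indicator f z) ∧ 0 < ∫ z, K.indicator g z}
  have hstep : ∀ (K : T) (q : ℝ × ℝ), ∃ K' : T, ∃ θ, K'.1 = K.1 ∩ halfPlane q θ := by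
    rintro ⟨K, hK1, hK2, hK3, hK4⟩ q
    obtain ⟨θ, h1, h2⟩ := bisect q (K.indicator f) (K.indicator g)
      (hf.indicator hK1.measurableSet) (hg.indicator hK1.measurableSet) hK3 hK4
    refine ⟨⟨K ∩ halfPlane q θ, hK1.inter_right (halfPlane_closed q θ),
      hK2.inter (halfPlane_convex q θ), ?_, ?_⟩, θ, rfl⟩
    · rw [Set.inter_comm, ← Set.indicator_indicator]; exact h1
    · rw [Set.inter_comm, ← Set.indicator_indicator]; exact h2
  choose nxt ang hnxt using hstep
  let seq : ℕ → T := fun i => Nat.rec ⟨K₀, hK₀, hK₀c, hfp, hgp⟩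
    (fun i K => nxt K (TopologicalSpace.denseSeq (ℝ × ℝ) i)) i
  have hseq : ∀ i, (seq (i + 1)).1 = (seq i).1 ∩
      halfPlane (TopologicalSpace.denseSeq (ℝ × ℝ) i)
        (ang (seq i) (TopologicalSpace.denseSeq (ℝ × ℝ) i)) := fun i => hnxt _ _
  have hanti : Antitone fun i => (seq i).1 :=
    antitone_nat_of_succ_le fun i => by rw [hseq]; exact Set.inter_subset_left
  have hIg : interior (⋂ i, (seq i).1) = ∅ := by
    -- an interior point from the dense sequence would lie on the boundary line of a half-plane
    -- that contains the whole interior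
    by_contra hne
    rw [← Ne, ← Set.nonempty_iff_ne_empty] at hne
    obtain ⟨i, hi⟩ := (TopologicalSpace.denseRange_denseSeq (ℝ × ℝ)).exists_mem_open
      isOpen_interior hne
    set q := TopologicalSpace.denseSeq (ℝ × ℝ) i with hq
    set θ := ang (seq i) q with hθ
    have hsub : interior (⋂ i, (seq i).1) ⊆ halfPlane q θ := by
      refine interior_subset.trans ((Set.iInter_subset _ (i + 1)).trans ?_)
      rw [hseq i]; exact Set.inter_subset_right
    have hc : Continuous fun t : ℝ => (q.1 - t * Real.cos θ, q.2 - t * Real.sin θ) := by fun_prop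
    have h0 : (fun t : ℝ => (q.1 - t * Real.cos θ, q.2 - t * Real.sin θ)) 0 = q := by simp
    have hev := (hc.tendsto 0).eventually_mem (isOpen_interior.mem_nhds
      (show (fun t : ℝ => (q.1 - t * Real.cos θ, q.2 - t * Real.sin θ)) 0 ∈ _ by rw [h0]; exact hi))
    obtain ⟨t, ht, ht0⟩ := ((hev.filter_mono nhdsWithin_le_nhds).and
      (self_mem_nhdsWithin : Set.Ioi (0:ℝ) ∈ nhdsWithin 0 (Set.Ioi 0))).exists
    have h1 := mem_halfPlane.1 (hsub ht)
    have h2 := Real.sin_sq_add_cos_sq θ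
    have ht0' : 0 < t := ht0
    simp only at h1
    nlinarith
  obtain ⟨u, v, c, huv, hc⟩ := Convex.exists_functional
    (convex_iInter fun i => (seq i).2.2.1) hIg
  refine ⟨u, v, c, huv, fun U hU hsub => ?_⟩
  obtain ⟨i, hi⟩ := exists_subset_nhds_of_isCompact' (V := fun i => (seq i).1)
    hanti.directed_ge (fun i => (seq i).2.1) (fun i => (seq i).2.1.isClosed) (U := U)
    (fun x hx => hU.mem_nhds (hsub (hc x hx)))
  exact ⟨(seq i).1, hi, (seq i).2⟩

/-- Replacing `g` by its restriction to the line `y = α + βx` on a thin convex set. -/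
lemma line_compare {w₁ w₂ : ℝ → ℝ} (h₁ : LCWeight w₁) (h₂ : LCWeight w₂) {g : ℝ × ℝ → ℝ}
    (hg : Continuous g) {η α β : ℝ} {K : Set (ℝ × ℝ)} (hK : IsCompact K)
    (hclose : ∀ z ∈ K, g z - η ≤ g (z.1, α + β * z.1))
    (hpos : 0 < ∫ z, K.indicator (fun z => (g z - η) * (w₁ z.1 * w₂ z.2)) z) :
    0 < ∫ x, g (x, α + β * x) * (w₁ x * ∫ y, w₂ y * K.indicator (fun _ => (1:ℝ)) (x, y)) := by
  have hWi : Integrable (fun z : ℝ × ℝ => w₁ z.1 * w₂ z.2) := by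
    rw [Measure.volume_eq_prod]; exact h₁.integrable.mul_prod h₂.integrable
  have hKi : ∀ q : ℝ × ℝ → ℝ, Continuous q →
      Integrable (K.indicator (fun z => q z * (w₁ z.1 * w₂ z.2))) := by
    intro q hq
    rw [integrable_indicator_iff hK.measurableSet]
    exact hWi.integrableOn.continuousOn_mul hq.continuousOn hK
  have hq : Continuous fun z : ℝ × ℝ => g (z.1, α + β * z.1) := by fun_prop
  have h3 : ∫ z, K.indicator (fun z => (g z - η) * (w₁ z.1 * w₂ z.2)) z ≤
      ∫ z, K.indicator (fun z => g (z.1, α + β * z.1) * (w₁ z.1 * w₂ z.2)) z := by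
    apply integral_mono (hKi _ (hg.sub continuous_const)) (hKi _ hq)
    intro z
    by_cases hz : z ∈ K
    · rw [Set.indicator_of_mem hz, Set.indicator_of_mem hz]
      exact mul_le_mul_of_nonneg_right (hclose z hz) (mul_nonneg (h₁.nonneg _) (h₂.nonneg _))
    · rw [Set.indicator_of_notMem hz, Set.indicator_of_notMem hz]
  refine (hpos.trans_le h3).trans_eq ?_
  have h4 := hKi _ hq
  rw [Measure.volume_eq_prod] at h4 ⊢
  rw [integral_prod _ h4]
  congr 1
  ext x
  rw [← integral_const_mul, ← integral_const_mul]
  congr 1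
  ext y
  by_cases hz : (x, y) ∈ K
  · rw [Set.indicator_of_mem hz, Set.indicator_of_mem hz]; ring
  · rw [Set.indicator_of_notMem hz, Set.indicator_of_notMem hz]; ring

/-- Localization to a non-vertical line. The new weight is the marginal of the product weight on a
convex set `K` so close to the line that `g` and `h` vary by less than `η` in the vertical
direction. -/
lemma loc_two_graph {w₁ w₂ : ℝ → ℝ} (h₁ : LCWeight w₁) (h₂ : LCWeight w₂) {g h : ℝ × ℝ → ℝ}
    (hg : Continuous g) (hh : Continuous h) {η : ℝ} (hη : 0 < η) {u v c : ℝ} (hv : v ≠ 0)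
    (H : ∀ U : Set (ℝ × ℝ), IsOpen U →
      {z | u * z.1 + v * z.2 = c} ⊆ U → ∃ K ⊆ U, IsCompact K ∧ Convex ℝ K ∧
        0 < (∫ z, K.indicator (fun z => (g z - η) * (w₁ z.1 * w₂ z.2)) z) ∧
        0 < ∫ z, K.indicator (fun z => (h z - η) * (w₁ z.1 * w₂ z.2)) z) :
    ∃ (α β : ℝ) (w : ℝ → ℝ), LCWeight w ∧ 0 < (∫ x, g (x, α + β * x) * w x) ∧
      0 < ∫ x, h (x, α + β * x) * w x := by
  set α := c / v
  set β := -u / v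
  obtain ⟨K, hKU, hK, hKc, h3, h4⟩ := H
    ({z | g z - g (z.1, α + β * z.1) < η} ∩ {z | h z - h (z.1, α + β * z.1) < η})
    ((isOpen_lt (by fun_prop) continuous_const).inter (isOpen_lt (by fun_prop) continuous_const))
    (by
      rintro ⟨x, y⟩ hz
      have hz' : u * x + v * y = c := hz
      have : α + β * x = y := by
        simp only [α, β]; field_simp; linarith
      simp only [Set.mem_inter_iff, Set.mem_ofPred_eq, this, sub_self]
      exact ⟨hη, hη⟩)
  refine ⟨α, β, _, h₁.marginal h₂ hKc hK.measurableSet, ?_, ?_⟩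
  · exact line_compare h₁ h₂ hg hK (fun z hz => by have : g z - g (z.1, α + β * z.1) < η := (hKU hz).1; linarith) h3
  · exact line_compare h₁ h₂ hh hK (fun z hz => by have : h z - h (z.1, α + β * z.1) < η := (hKU hz).2; linarith) h4

/-- Two integral inequalities against a product of two log-concave weights survive the passage
to a suitable line carrying a suitable log-concave weight. -/
lemma loc_two {w₁ w₂ : ℝ → ℝ} (h₁ : LCWeight w₁) (h₂ : LCWeight w₂) {g h : ℝ × ℝ → ℝ}
    (hg : Continuous g) (hh : Continuous h)
    (hgp : 0 < ∫ x, ∫ y, g (x, y) * (w₁ x * w₂ y))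
    (hhp : 0 < ∫ x, ∫ y, h (x, y) * (w₁ x * w₂ y)) :
    ∃ (α₁ β₁ α₂ β₂ : ℝ) (w : ℝ → ℝ), LCWeight w ∧
      0 < (∫ t, g (α₁ + β₁ * t, α₂ + β₂ * t) * w t) ∧
      0 < ∫ t, h (α₁ + β₁ * t, α₂ + β₂ * t) * w t := by
  obtain ⟨R₁, hR₁⟩ := h₁.supp
  obtain ⟨R₂, hR₂⟩ := h₂.supp
  set K₀ : Set (ℝ × ℝ) := Set.Icc (-R₁) R₁ ×ˢ Set.Icc (-R₂) R₂ with hK₀def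
  have hK₀ : IsCompact K₀ := isCompact_Icc.prod isCompact_Icc
  have hK₀c : Convex ℝ K₀ := (convex_Icc _ _).prod (convex_Icc _ _)
  have hWi : Integrable (fun z : ℝ × ℝ => w₁ z.1 * w₂ z.2) := by
    rw [Measure.volume_eq_prod]; exact h₁.integrable.mul_prod h₂.integrable
  have hW0 : ∀ z ∉ K₀, w₁ z.1 * w₂ z.2 = 0 := by
    intro z hz
    by_cases hz1 : z.1 ∈ Set.Icc (-R₁) R₁
    · have hz2 : z.2 ∉ Set.Icc (-R₂) R₂ := fun h => hz ⟨hz1, h⟩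
      rw [hR₂ z.2 (by by_contra hcon; push Not at hcon; exact hz2 (abs_le.1 hcon)), mul_zero]
    · rw [hR₁ z.1 (by by_contra hcon; push Not at hcon; exact hz1 (abs_le.1 hcon)), zero_mul]
  have hind : ∀ q : ℝ × ℝ → ℝ, K₀.indicator (fun z => q z * (w₁ z.1 * w₂ z.2)) =
      fun z => q z * (w₁ z.1 * w₂ z.2) := by
    intro q
    rw [Set.indicator_eq_self]
    intro z hz
    by_contra hcon
    exact hz (by simp only [hW0 z hcon, mul_zero])
  have hKi : ∀ q : ℝ × ℝ → ℝ, Continuous q →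
      Integrable (fun z => q z * (w₁ z.1 * w₂ z.2)) := by
    intro q hq
    rw [← hind, integrable_indicator_iff hK₀.measurableSet]
    exact hWi.integrableOn.continuousOn_mul hq.continuousOn hK₀
  have hprod : ∀ q : ℝ × ℝ → ℝ, Continuous q →
      ∫ x, ∫ y, q (x, y) * (w₁ x * w₂ y) = ∫ z, q z * (w₁ z.1 * w₂ z.2) := by
    intro q hq
    have := hKi q hq
    rw [Measure.volume_eq_prod] at this ⊢
    rw [integral_prod _ this]
  rw [hprod g hg] at hgp
  rw [hprod h hh] at hhp
  set I := ∫ z : ℝ × ℝ, w₁ z.1 * w₂ z.2 with hI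
  have hI0 : 0 ≤ I := integral_nonneg fun z => mul_nonneg (h₁.nonneg _) (h₂.nonneg _)
  set m := min (∫ z, g z * (w₁ z.1 * w₂ z.2)) (∫ z, h z * (w₁ z.1 * w₂ z.2)) with hm
  have hm0 : 0 < m := lt_min hgp hhp
  -- `η` is so small that `g - η` and `h - η` keep positive integrals
  set η := m / (2 * (I + 1)) with hηdef
  have hη : 0 < η := by positivity
  have hηI : η * I < m := by
    rw [hηdef, div_mul_eq_mul_div, div_lt_iff₀ (by positivity)]; nlinarith
  have hsub : ∀ q : ℝ × ℝ → ℝ, Continuous q → m ≤ ∫ z, q z * (w₁ z.1 * w₂ z.2) →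
      0 < ∫ z, K₀.indicator (fun z => (q z - η) * (w₁ z.1 * w₂ z.2)) z := by
    intro q hq hmq
    rw [hind]
    have : ∀ z : ℝ × ℝ, (q z - η) * (w₁ z.1 * w₂ z.2) =
      q z * (w₁ z.1 * w₂ z.2) - η * (w₁ z.1 * w₂ z.2) := fun z => by ring
    simp only [this]
    rw [integral_sub (hKi q hq) (hWi.const_mul η), integral_const_mul]
    linarith
  obtain ⟨u, v, c, huv, H⟩ := exists_thin (hKi _ (hg.sub (continuous_const (y := η))))
    (hKi _ (hh.sub (continuous_const (y := η)))) K₀ hK₀ hK₀c (hsub g hg (min_le_left _ _))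
    (hsub h hh (min_le_right _ _))
  by_cases hv : v = 0
  · have hu : u ≠ 0 := by simpa [hv] using huv
    have hswap : ∀ (K : Set (ℝ × ℝ)) (q : ℝ × ℝ → ℝ),
        ∫ z, (Prod.swap ⁻¹' K).indicator (fun z => (q z.swap - η) * (w₂ z.1 * w₁ z.2)) z =
        ∫ z, K.indicator (fun z => (q z - η) * (w₁ z.1 * w₂ z.2)) z := by
      intro K q
      rw [Measure.volume_eq_prod, ← integral_prod_swap]
      congr 1
      ext z
      by_cases hz : z ∈ K
      · rw [Set.indicator_of_mem hz, Set.indicator_of_mem (by simpa using hz)]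
        simp only [Prod.fst_swap, Prod.snd_swap, Prod.swap_swap]; ring
      · rw [Set.indicator_of_notMem hz, Set.indicator_of_notMem (by simpa using hz)]
    obtain ⟨α, β, w, hw, h3, h4⟩ := loc_two_graph h₂ h₁ (g := fun z => g z.swap)
      (h := fun z => h z.swap) (hg.comp continuous_swap) (hh.comp continuous_swap) hη
      (u := v) (v := u) (c := c) hu (by
        intro U hU hsubU
        obtain ⟨K, hKU, hK, hKc, h3, h4⟩ := H (Prod.swap ⁻¹' U) (hU.preimage continuous_swap) (by
          intro z hz
          apply hsubU
          have hz' : u * z.1 + v * z.2 = c := hz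
          show v * z.2 + u * z.1 = c
          linarith)
        refine ⟨Prod.swap ⁻¹' K, fun z hz => ?_, ?_, ?_, ?_, ?_⟩
        · simpa using hKU hz
        · exact (Homeomorph.prodComm ℝ ℝ).isCompact_preimage.2 hK
        · exact hKc.linear_preimage (LinearEquiv.prodComm ℝ ℝ ℝ).toLinearMap
        · rw [hswap]; exact h3
        · rw [hswap]; exact h4)
    exact ⟨α, β, 0, 1, w, hw, by simpa using h3, by simpa using h4⟩
  · obtain ⟨α, β, w, hw, h3, h4⟩ := loc_two_graph h₁ h₂ hg hh hη hv H
    exact ⟨0, 1, α, β, w, hw, by simpa using h3, by simpa using h4⟩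

/-! ### The unit cube -/

/-- The uniform probability measure on `[0, 1]`. -/
def unitM : Measure ℝ := volume.restrict (Set.Icc 0 1)

instance : IsProbabilityMeasure unitM := ⟨by simp [unitM]⟩

/-- The uniform probability measure on the unit cube. -/
def cubeM (n : ℕ) : Measure (Fin n → ℝ) := Measure.pi fun _ => unitM

instance (n : ℕ) : IsProbabilityMeasure (cubeM n) := by unfold cubeM; infer_instance

lemma cubeM_eq (n : ℕ) :
    cubeM n = volume.restrict (Set.univ.pi fun _ : Fin n => Set.Icc (0:ℝ) 1) := by
  rw [cubeM, volume_pi, Measure.restrict_pi_pi]; rfl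

lemma isCompact_cube (n : ℕ) : IsCompact (Set.univ.pi fun _ : Fin n => Set.Icc (0:ℝ) 1) :=
  isCompact_univ_pi fun _ => isCompact_Icc

lemma integrable_cubeM {n : ℕ} {g : (Fin n → ℝ) → ℝ} (hg : Continuous g) :
    Integrable g (cubeM n) := by
  rw [cubeM_eq]
  exact hg.continuousOn.integrableOn_compact (isCompact_cube n)

lemma measurePreserving_update {n : ℕ} (i : Fin n) :
    MeasurePreserving (fun z : ℝ × (Fin n → ℝ) => Function.update z.2 i z.1)
      (unitM.prod (cubeM n)) (cubeM n) := by
  have hm : Measurable fun z : ℝ × (Fin n → ℝ) => Function.update z.2 i z.1 := by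
    rw [measurable_pi_iff]
    intro j
    by_cases h : j = i
    · subst h; simpa using measurable_fst
    · simp only [Function.update_of_ne h]; fun_prop
  refine ⟨hm, ?_⟩
  symm
  apply Measure.pi_eq
  intro s hs
  rw [Measure.map_apply hm (MeasurableSet.univ_pi hs)]
  have : (fun z : ℝ × (Fin n → ℝ) => Function.update z.2 i z.1) ⁻¹' Set.univ.pi s =
      s i ×ˢ Set.univ.pi (Function.update s i Set.univ) := by
    ext ⟨y, x⟩
    simp only [Set.mem_preimage, Set.mem_pi, Set.mem_univ, true_imp_iff, Set.mem_prod]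
    constructor
    · intro h
      refine ⟨by simpa using h i, fun j => ?_⟩
      by_cases hj : j = i
      · subst hj; simp
      · simpa [Function.update_of_ne hj] using h j
    · rintro ⟨h1, h2⟩ j
      by_cases hj : j = i
      · subst hj; simpa using h1
      · simpa [Function.update_of_ne hj] using h2 j
  rw [this, Measure.prod_prod, cubeM, Measure.pi_pi, ← Finset.mul_prod_erase _ _ (Finset.mem_univ i),
    ← Finset.mul_prod_erase _ _ (Finset.mem_univ i), Function.update_self, measure_univ, one_mul]
  congr 1
  apply Finset.prod_congr rfl
  intro j hj
  rw [Function.update_of_ne (Finset.ne_of_mem_erase hj)]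

lemma integrable_unit_prod {n : ℕ} {g : ℝ × (Fin n → ℝ) → ℝ} (hg : Continuous g) :
    Integrable g (unitM.prod (cubeM n)) := by
  rw [cubeM_eq, unitM, Measure.prod_restrict]
  exact hg.continuousOn.integrableOn_compact (isCompact_Icc.prod (isCompact_cube n))

lemma integral_update {n : ℕ} (i : Fin n) {g : (Fin n → ℝ) → ℝ} (hg : Continuous g) :
    ∫ x, g x ∂(cubeM n) = ∫ y, ∫ x, g (Function.update x i y) ∂(cubeM n) ∂unitM := by
  have hc : Continuous fun z : ℝ × (Fin n → ℝ) => g (Function.update z.2 i z.1) :=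
    hg.comp (continuous_snd.update i continuous_fst)
  rw [← (measurePreserving_update i).map_eq,
    integral_map (measurePreserving_update i).measurable.aemeasurable
      hg.measurable.stronglyMeasurable.aestronglyMeasurable,
    integral_prod _ (integrable_unit_prod hc)]
  rw [(measurePreserving_update i).map_eq]

lemma lcweight_unit : LCWeight ((Set.Icc (0:ℝ) 1).indicator fun _ => 1) := by
  refine ⟨measurable_const.indicator measurableSet_Icc,
    fun x => Set.indicator_nonneg (fun _ _ => zero_le_one) _, ?_, ⟨1, ?_⟩, ⟨1, ?_⟩⟩
  · intro x y a b ha hb hab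
    by_cases hx : x ∈ Set.Icc (0:ℝ) 1
    · by_cases hy : y ∈ Set.Icc (0:ℝ) 1
      · have := convex_Icc (0:ℝ) 1 hx hy ha.le hb.le hab
        rw [smul_eq_mul, smul_eq_mul] at this
        rw [Set.indicator_of_mem hx, Set.indicator_of_mem hy, Set.indicator_of_mem this]
        simp
      · rw [Set.indicator_of_notMem hy, Real.zero_rpow hb.ne', mul_zero]
        exact Set.indicator_nonneg (fun _ _ => zero_le_one) _
    · rw [Set.indicator_of_notMem hx, Real.zero_rpow ha.ne', zero_mul]
      exact Set.indicator_nonneg (fun _ _ => zero_le_one) _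
  · intro x
    exact Set.indicator_le_self' (s := Set.Icc (0:ℝ) 1) (f := fun _ => (1:ℝ))
      (fun _ _ => zero_le_one) x
  · intro x hx
    apply Set.indicator_of_notMem
    rintro ⟨h1, h2⟩
    rw [abs_of_nonneg h1] at hx
    linarith

lemma integral_mul_unit (q : ℝ → ℝ) :
    ∫ y, q y * (Set.Icc (0:ℝ) 1).indicator (fun _ => 1) y = ∫ y, q y ∂unitM := by
  rw [unitM, ← integral_indicator measurableSet_Icc]
  congr 1
  ext y
  by_cases hy : y ∈ Set.Icc (0:ℝ) 1
  · rw [Set.indicator_of_mem hy, Set.indicator_of_mem hy, mul_one]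
  · rw [Set.indicator_of_notMem hy, Set.indicator_of_notMem hy, mul_zero]

/-- The coordinates in `S` are moved along the line `t ↦ α + t β`, the others are kept. -/
def mix {n : ℕ} (S : Finset (Fin n)) (α β : Fin n → ℝ) (t : ℝ) (x : Fin n → ℝ) : Fin n → ℝ :=
  fun j => if j ∈ S then α j + β j * t else x j

lemma mix_empty {n : ℕ} (α β : Fin n → ℝ) (t : ℝ) (x : Fin n → ℝ) : mix ∅ α β t x = x := by
  ext j; simp [mix]

lemma mix_univ {n : ℕ} (α β : Fin n → ℝ) (t : ℝ) (x : Fin n → ℝ) :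
    mix Finset.univ α β t x = fun j => α j + β j * t := by
  ext j; simp [mix]

lemma continuous_mix {n : ℕ} (S : Finset (Fin n)) (α β : Fin n → ℝ) :
    Continuous fun z : ℝ × (Fin n → ℝ) => mix S α β z.1 z.2 := by
  apply continuous_pi
  intro j
  unfold mix
  split_ifs <;> fun_prop

/-- The coordinates are moved to a line one at a time: the planar statement `loc_two` is applied to
the pair formed by the parameter `t` of the line built so far and the next coordinate, with the
remaining coordinates averaged out. -/
lemma localize_aux {n : ℕ} {g h : (Fin n → ℝ) → ℝ} (hg : Continuous g) (hh : Continuous h)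
    (hgp : 0 < ∫ x, g x ∂(cubeM n)) (hhp : 0 < ∫ x, h x ∂(cubeM n)) (S : Finset (Fin n)) :
    ∃ (α β : Fin n → ℝ) (w : ℝ → ℝ), LCWeight w ∧
      0 < (∫ t, (∫ x, g (mix S α β t x) ∂(cubeM n)) * w t) ∧
      0 < ∫ t, (∫ x, h (mix S α β t x) ∂(cubeM n)) * w t := by
  induction S using Finset.induction_on with
  | empty =>
    refine ⟨0, 0, _, lcweight_unit, ?_, ?_⟩
    · rw [integral_mul_unit]; simpa [mix_empty] using hgp
    · rw [integral_mul_unit]; simpa [mix_empty] using hhp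
  | insert i S hi ih =>
    obtain ⟨α, β, w, hw, h1, h2⟩ := ih
    have hcu : Continuous fun z : (ℝ × ℝ) × (Fin n → ℝ) =>
        mix S α β z.1.1 (Function.update z.2 i z.1.2) :=
      (continuous_mix S α β).comp ((continuous_fst.comp continuous_fst).prodMk
        (continuous_snd.update i (continuous_snd.comp continuous_fst)))
    have key : ∀ q : (Fin n → ℝ) → ℝ, Continuous q →
        Continuous (fun z : ℝ × ℝ => ∫ x, q (mix S α β z.1 (Function.update x i z.2)) ∂(cubeM n)) ∧
        ∫ t, (∫ x, q (mix S α β t x) ∂(cubeM n)) * w t =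
        ∫ t, ∫ y, (∫ x, q (mix S α β t (Function.update x i y)) ∂(cubeM n)) *
          (w t * (Set.Icc (0:ℝ) 1).indicator (fun _ => 1) y) := by
      intro q hq
      constructor
      · simp only [cubeM_eq]
        exact continuous_parametric_integral_of_continuous
          (f := fun (z : ℝ × ℝ) x => q (mix S α β z.1 (Function.update x i z.2)))
          (hq.comp hcu) (isCompact_cube n)
      · congr 1
        ext t
        have hqt : Continuous fun x => q (mix S α β t x) :=
          hq.comp ((continuous_mix S α β).comp (continuous_const.prodMk continuous_id))
        rw [integral_update i hqt, ← integral_mul_unit, ← integral_mul_const]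
        congr 1
        ext y
        ring
    obtain ⟨hgc, hge⟩ := key g hg
    obtain ⟨hhc, hhe⟩ := key h hh
    rw [hge] at h1
    rw [hhe] at h2
    obtain ⟨α₁, β₁, α₂, β₂, v, hv, h3, h4⟩ := loc_two hw lcweight_unit hgc hhc h1 h2
    have hmix : ∀ t x, mix (insert i S) (fun j => if j = i then α₂ else α j + β j * α₁)
        (fun j => if j = i then β₂ else β j * β₁) t x =
        mix S α β (α₁ + β₁ * t) (Function.update x i (α₂ + β₂ * t)) := by
      intro t x
      ext j
      unfold mix
      by_cases hj : j = i
      · subst hj; simp [hi]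
      · simp only [Finset.mem_insert, hj, false_or, if_false, Function.update_of_ne hj]
        split_ifs
        · ring
        · rfl
    refine ⟨fun j => if j = i then α₂ else α j + β j * α₁,
      fun j => if j = i then β₂ else β j * β₁, v, hv, ?_, ?_⟩
    · simp only [hmix]; exact h3
    · simp only [hmix]; exact h4

/-- **Localization.**  Two integral inequalities over the unit cube restrict to a line carrying
a normalized log-concave weight. -/
lemma localize {n : ℕ} {g h : (Fin n → ℝ) → ℝ} (hg : Continuous g) (hh : Continuous h)
    (hgp : 0 < ∫ x, g x ∂(cubeM n)) (hhp : 0 < ∫ x, h x ∂(cubeM n)) :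
    ∃ (α β : Fin n → ℝ) (w : ℝ → ℝ), Needle w ∧
      0 < (∫ t, g (fun j => α j + β j * t) * w t) ∧
      0 < ∫ t, h (fun j => α j + β j * t) * w t := by
  obtain ⟨α, β, w, hw, h1, h2⟩ := localize_aux hg hh hgp hhp Finset.univ
  simp only [mix_univ, integral_const, probReal_univ, one_smul] at h1 h2
  have hpos : 0 < ∫ x, w x := by
    rcases (integral_nonneg hw.nonneg : 0 ≤ ∫ x, w x).lt_or_eq with h | h
    · exact h
    · exfalso
      have h0 := (integral_eq_zero_iff_of_nonneg (fun x => hw.nonneg x) hw.integrable).1 h.symm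
      have : ∫ t, g (fun j => α j + β j * t) * w t = 0 := by
        rw [← integral_zero ℝ ℝ]
        apply integral_congr_ae
        filter_upwards [h0] with t ht
        simp [ht]
      linarith
  obtain ⟨r, s, v, hv, hch⟩ := hw.exists_needle hpos
  have hline : ∀ t, (fun j => (α j + β j * r) + β j * s * t) =
      fun j => α j + β j * (r + s * t) := fun t => by ext j; ring
  refine ⟨fun j => α j + β j * r, fun j => β j * s, v, hv, ?_, ?_⟩
  · simp only [hline]
    rw [hch (fun t => g (fun j => α j + β j * t))]; positivity
  · simp only [hline]
    rw [hch (fun t => h (fun j => α j + β j * t))]; positivity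

/-! ### Oscillatory integrals against a needle -/

lemma integral_exp_neg_abs_eight : ∫ t : ℝ, Real.exp (-|t| / 8) = 16 := by
  have h := integral_comp_abs (f := fun x => Real.exp (-x / 8))
  rw [h]
  have h2 := integral_exp_mul_Ioi (a := -(1/8)) (by norm_num) 0
  have : ∀ x : ℝ, -x / 8 = -(1/8) * x := fun x => by ring
  simp only [this]
  rw [h2]; norm_num

lemma integrable_exp_neg_abs_eight : Integrable fun t : ℝ => Real.exp (-|t| / 8) := by
  by_contra hcon
  have := integral_undef hcon
  rw [integral_exp_neg_abs_eight] at this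
  norm_num at this

lemma Needle.integrable_mul {w : ℝ → ℝ} (hw : Needle w) {q : ℝ → ℝ} (hq : Continuous q) :
    Integrable fun t => q t * w t := by
  obtain ⟨R, hR⟩ := hw.supp
  have : (fun t => q t * w t) = (Set.Icc (-R) R).indicator fun t => q t * w t := by
    symm
    rw [Set.indicator_eq_self]
    intro t ht
    rw [Function.mem_support] at ht
    by_contra hcon
    apply ht
    rw [hR t (by by_contra h; push Not at h; exact hcon (abs_le.1 h)), mul_zero]
  rw [this, integrable_indicator_iff measurableSet_Icc]
  exact hw.integrable.integrableOn.continuousOn_mul hq.continuousOn isCompact_Icc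

/-- Needles have a uniformly bounded exponential moment. -/
lemma Needle.exp_moment {w : ℝ → ℝ} (hw : Needle w) : ∫ t, Real.exp (|t| / 8) * w t ≤ 128 := by
  have h1 : ∫ t, Real.exp (|t| / 8) * w t ≤ ∫ t, 8 * Real.exp (-|t| / 8) := by
    apply integral_mono (hw.integrable_mul (by fun_prop)) (integrable_exp_neg_abs_eight.const_mul 8)
    intro t
    calc Real.exp (|t| / 8) * w t ≤ Real.exp (|t| / 8) * (8 * Real.exp (-|t| / 4)) := by
          gcongr; exact hw.tail t
      _ = 8 * Real.exp (-|t| / 8) := by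
          rw [mul_left_comm, ← Real.exp_add]; ring_nf
  rw [integral_const_mul, integral_exp_neg_abs_eight] at h1
  linarith

lemma exp_neg_eight_le : Real.exp (-8) ≤ 1 / 2048 := by
  rw [Real.exp_neg, ← one_div]
  apply one_div_le_one_div_of_le (by norm_num)
  have : Real.exp 8 = Real.exp 1 ^ 8 := by rw [← Real.exp_nat_mul]; norm_num
  rw [this]
  calc (2048:ℝ) ≤ 2.7 ^ 8 := by norm_num
    _ ≤ Real.exp 1 ^ 8 := by
        gcongr
        exact (by norm_num : (2.7:ℝ) ≤ 2.7182818283).trans Real.exp_one_gt_d9.le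

/-- A needle puts little mass outside `[-64, 64]`. -/
lemma Needle.exists_abs_le {w : ℝ → ℝ} (hw : Needle w) {q : ℝ → ℝ} (hq : Continuous q)
    (hq1 : ∀ t, q t ≤ 1) (h : 0 < ∫ t, (q t - 1 / 16) * w t) : ∃ t, |t| ≤ 64 ∧ 0 < q t := by
  by_contra hcon
  push Not at hcon
  have h1 : ∀ t, q t ≤ Real.exp (-8) * Real.exp (|t| / 8) := by
    intro t
    rcases le_or_gt |t| 64 with ht | ht
    · exact (hcon t ht).trans (by positivity)
    · rw [← Real.exp_add]
      exact (hq1 t).trans (Real.one_le_exp (by linarith))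
  have h2 : ∫ t, q t * w t ≤ ∫ t, Real.exp (-8) * (Real.exp (|t| / 8) * w t) := by
    apply integral_mono (hw.integrable_mul hq) ((hw.integrable_mul (by fun_prop)).const_mul _)
    intro t
    show q t * w t ≤ Real.exp (-8) * (Real.exp (|t| / 8) * w t)
    rw [← mul_assoc]
    exact mul_le_mul_of_nonneg_right (h1 t) (hw.nonneg t)
  rw [integral_const_mul] at h2
  have h3 : ∫ t, (q t - 1 / 16) * w t = (∫ t, q t * w t) - 1 / 16 := by
    simp only [sub_mul]
    rw [integral_sub (hw.integrable_mul hq) (hw.integrable.const_mul _), integral_const_mul,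
      hw.integral_eq, mul_one]
  have h4 := exp_neg_eight_le
  have h5 := hw.exp_moment
  have h6 : Real.exp (-8) * ∫ t, Real.exp (|t| / 8) * w t ≤ 1 / 2048 * 128 := by
    apply mul_le_mul h4 h5 _ (by norm_num)
    exact integral_nonneg fun t => mul_nonneg (Real.exp_pos _).le (hw.nonneg t)
  rw [h3] at h
  linarith

/-- Integrals over a bounded convex set of reals are interval integrals. -/
lemma convex_integral_eq {I : Set ℝ} (hI : Convex ℝ I) {r : ℝ} (hr : 0 ≤ r)
    (hIr : I ⊆ Set.Icc (-r) r) (f : ℝ → ℝ) :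
    ∃ a b, -r ≤ a ∧ a ≤ b ∧ b ≤ r ∧ ∫ t in I, f t = ∫ t in a..b, f t := by
  rcases I.eq_empty_or_nonempty with rfl | hne
  · exact ⟨0, 0, by linarith, le_rfl, hr, by simp⟩
  have hbb : BddBelow I := bddBelow_Icc.mono hIr
  have hba : BddAbove I := bddAbove_Icc.mono hIr
  have hab : sInf I ≤ sSup I := csInf_le_csSup hne hbb hba
  refine ⟨sInf I, sSup I, le_csInf hne fun x hx => (hIr hx).1, hab,
    csSup_le hne fun x hx => (hIr hx).2, ?_⟩
  rw [intervalIntegral.integral_of_le hab, integral_Ioc_eq_integral_Ioo]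
  apply setIntegral_congr_set
  apply Filter.EventuallyLE.antisymm
  · have h1 : I ⊆ Set.Icc (sInf I) (sSup I) := fun x hx => ⟨csInf_le hbb hx, le_csSup hba hx⟩
    exact (LE.le.eventuallyLE h1).trans Ioo_ae_eq_Icc.symm.le
  · apply LE.le.eventuallyLE
    rintro x ⟨h1, h2⟩
    obtain ⟨y, hy, hyx⟩ := exists_lt_of_csInf_lt hne h1
    obtain ⟨z, hz, hxz⟩ := exists_lt_of_lt_csSup hne h2
    exact hI.ordConnected.out hy hz ⟨hyx.le, hxz.le⟩

/-- The superlevel set at height `s` has length `O(s^{-1/2})`, which is integrable in `s` near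
zero. -/
lemma Needle.level_subset {w : ℝ → ℝ} (hw : Needle w) {s : ℝ} (hs : 0 < s) {t : ℝ}
    (ht : s < w t) : |t| ≤ 16 * s ^ (-(1/2 : ℝ)) := by
  rcases eq_or_ne t 0 with rfl | h0
  · rw [abs_zero]; positivity
  have ht0 : 0 < |t| := abs_pos.2 h0
  have h1 : s < 256 / |t| ^ 2 := by
    refine (ht.trans_le (hw.tail t)).trans_le ?_
    have h2 := Real.quadratic_le_exp_of_nonneg (x := |t| / 4) (by positivity)
    rw [neg_div, Real.exp_neg, ← div_eq_mul_inv, div_le_div_iff₀ (Real.exp_pos _) (by positivity)]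
    nlinarith
  rw [lt_div_iff₀ (by positivity)] at h1
  rw [Real.rpow_neg hs.le, ← Real.sqrt_eq_rpow, ← div_eq_mul_inv, le_div_iff₀ (Real.sqrt_pos.2 hs)]
  apply abs_le_of_sq_le_sq' _ (by norm_num) |>.2
  rw [mul_pow, Real.sq_sqrt hs.le]
  linarith

/-- Oscillation estimate on a needle, for `G` vanishing below `m + σ` and a point `t₁` in the bulk with
`p t₁ ≤ m`. The weight is a superposition of indicators of its superlevel intervals. On each of
them either `G ∘ p` vanishes, or `p` oscillates by `σ` on an enlarged interval containing `t₁` and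
`osc_one_dim` applies. -/
lemma Needle.osc {w : ℝ → ℝ} (hw : Needle w) (p : Polynomial ℝ) (D : ℕ) (hD : 1 ≤ D)
    (hp : p.natDegree ≤ D) {m σ θ B0 B1 t₁ : ℝ} (hσ : 0 < σ) (hθ : 0 < θ) (ht₁ : |t₁| ≤ 64)
    (hp₁ : p.eval t₁ ≤ m) (G Φ : ℝ → ℝ) (hG : Continuous G) (hΦ : ∀ t, HasDerivAt Φ (G t) t)
    (hB0 : ∀ t, |Φ t| ≤ B0) (hB1 : ∀ t, |G t| ≤ B1) (hG0 : ∀ y ≤ m + σ, G y = 0) :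
    |∫ t, G (p.eval t) * w t| ≤ 400 * (B1 * θ + 40 * D * (B0 / σ) * (11 / θ) ^ (D - 1)) := by
  set Q := B1 * θ + 40 * D * (B0 / σ) * (11 / θ) ^ (D - 1) with hQ
  have hB0' : 0 ≤ B0 := (abs_nonneg _).trans (hB0 0)
  have hB1' : 0 ≤ B1 := (abs_nonneg _).trans (hB1 0)
  have hQ0 : 0 ≤ Q := by positivity
  have hGp : Continuous fun t => G (p.eval t) := hG.comp p.continuous
  -- layer-cake representation of the weight
  have hlayer : ∀ t, G (p.eval t) * w t =
      ∫ s in Set.Ioc (0:ℝ) 2, {z : ℝ × ℝ | z.2 < w z.1}.indicator (fun z => G (p.eval z.1)) (t, s) := by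
    intro t
    have e1 : ∀ s, {z : ℝ × ℝ | z.2 < w z.1}.indicator (fun z => G (p.eval z.1)) (t, s) =
        (Set.Iio (w t)).indicator (fun _ => G (p.eval t)) s := fun s => by
      by_cases hs : s < w t
      · rw [Set.indicator_of_mem (by exact hs), Set.indicator_of_mem (by exact hs)]
      · rw [Set.indicator_of_notMem (by exact hs), Set.indicator_of_notMem (by exact hs)]
    simp only [e1]
    rw [setIntegral_indicator measurableSet_Iio, setIntegral_const, smul_eq_mul, mul_comm]
    congr 1
    have e2 : Set.Ioc 0 2 ∩ Set.Iio (w t) = Set.Ioo 0 (w t) := by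
      ext s
      have := hw.le_two t
      simp only [Set.mem_inter_iff, Set.mem_Ioc, Set.mem_Iio, Set.mem_Ioo]
      constructor
      · rintro ⟨⟨h1, h2⟩, h3⟩; exact ⟨h1, h3⟩
      · rintro ⟨h1, h2⟩; exact ⟨⟨h1, by linarith⟩, h2⟩
    rw [e2, Measure.real, Real.volume_Ioo, sub_zero, ENNReal.toReal_ofReal (hw.nonneg t)]
  have hmeasS : MeasurableSet {z : ℝ × ℝ | z.2 < w z.1} :=
    measurableSet_lt (f := fun z : ℝ × ℝ => z.2) (g := fun z : ℝ × ℝ => w z.1) measurable_snd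
      (hw.meas.comp measurable_fst)
  obtain ⟨R, hR⟩ := hw.supp
  have hIg : Integrable ({z : ℝ × ℝ | z.2 < w z.1}.indicator (fun z => G (p.eval z.1)))
      (volume.prod (volume.restrict (Set.Ioc (0:ℝ) 2))) := by
    have e1 : {z : ℝ × ℝ | z.2 < w z.1}.indicator (fun z => G (p.eval z.1)) =ᵐ[volume.prod
        (volume.restrict (Set.Ioc (0:ℝ) 2))] (Set.Icc (-R) R ×ˢ Set.univ).indicator
        ({z : ℝ × ℝ | z.2 < w z.1}.indicator (fun z => G (p.eval z.1))) := by
      have e2 : ∀ᵐ z : ℝ × ℝ ∂((volume : Measure ℝ).prod (volume.restrict (Set.Ioc (0:ℝ) 2))),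
          (0:ℝ) < z.2 := by
        have : ∀ᵐ s ∂(volume.restrict (Set.Ioc (0:ℝ) 2)), 0 < s :=
          (ae_restrict_mem measurableSet_Ioc).mono fun s hs => hs.1
        exact (Measure.quasiMeasurePreserving_snd (μ := (volume : Measure ℝ))
          (ν := volume.restrict (Set.Ioc (0:ℝ) 2))).ae this
      filter_upwards [e2] with z hz
      by_cases h1 : z.1 ∈ Set.Icc (-R) R
      · have h2 : z ∈ Set.Icc (-R) R ×ˢ (Set.univ : Set ℝ) := ⟨h1, trivial⟩
        rw [Set.indicator_of_mem h2]
      · have h2 : z ∉ Set.Icc (-R) R ×ˢ (Set.univ : Set ℝ) := fun h => h1 h.1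
        rw [Set.indicator_of_notMem h2]
        apply Set.indicator_of_notMem
        show ¬ z.2 < w z.1
        rw [hR z.1 (by by_contra h; push Not at h; exact h1 (abs_le.1 h))]
        linarith
    rw [integrable_congr e1, integrable_indicator_iff (measurableSet_Icc.prod MeasurableSet.univ)]
    apply Measure.integrableOn_of_bounded (M := B1)
    · rw [Measure.prod_prod]; simp [ENNReal.mul_eq_top]
    · exact ((hGp.measurable.comp measurable_fst).indicator hmeasS).aestronglyMeasurable
    · apply Filter.Eventually.of_forall
      intro z
      refine (norm_indicator_le_norm_self _ _).trans (hB1 _)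
  have hlevel : ∀ s ∈ Set.Ioc (0:ℝ) 2,
      ‖∫ t, {z : ℝ × ℝ | z.2 < w z.1}.indicator (fun z => G (p.eval z.1)) (t, s)‖ ≤
        (128 + 32 * s ^ (-(1/2:ℝ))) * Q := by
    intro s hs
    set r := 64 + 16 * s ^ (-(1/2:ℝ)) with hr
    have hs0 : 0 < s ^ (-(1/2:ℝ)) := Real.rpow_pos_of_pos hs.1 _
    have hconv := convex_superlevel hw.nonneg hw.lc s
    have e1 : ∀ t, {z : ℝ × ℝ | z.2 < w z.1}.indicator (fun z => G (p.eval z.1)) (t, s) =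
        {t | s < w t}.indicator (fun t => G (p.eval t)) t := fun t => by
      by_cases hs : s < w t
      · rw [Set.indicator_of_mem (by exact hs), Set.indicator_of_mem (by exact hs)]
      · rw [Set.indicator_of_notMem (by exact hs), Set.indicator_of_notMem (by exact hs)]
    simp only [e1]
    rw [integral_indicator (measurableSet_lt measurable_const hw.meas)]
    obtain ⟨a, b, ha, hab, hb, hI⟩ := convex_integral_eq hconv (r := r) (by positivity)
      (fun t ht => by
        have := hw.level_subset hs.1 ht
        exact abs_le.1 (by linarith)) (fun t => G (p.eval t))
    rw [hI, Real.norm_eq_abs]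
    by_cases hex : ∃ y ∈ Set.Icc (-r) r, G (p.eval y) ≠ 0
    · obtain ⟨y, hy, hGy⟩ := hex
      have hpy : m + σ < p.eval y := by
        by_contra hcon
        push Not at hcon
        exact hGy (hG0 _ hcon)
      have := osc_one_dim p D hD hp (-r) r a b t₁ y σ θ B0 B1 ha hab hb
        (abs_le.1 (by linarith)) hy hσ (by linarith) hθ G Φ hG hΦ hB0 hB1
      refine this.trans (le_of_eq ?_)
      rw [hr, hQ]; ring
    · push Not at hex
      have : ∫ t in a..b, G (p.eval t) = 0 := by
        apply intervalIntegral.integral_zero_ae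
        apply Filter.Eventually.of_forall
        intro t ht
        rw [Set.uIoc_of_le hab] at ht
        exact hex t ⟨by linarith [ht.1], by linarith [ht.2]⟩
      rw [this, abs_zero]
      positivity
  have hri : IntervalIntegrable (fun s : ℝ => s ^ (-(1/2:ℝ))) volume 0 2 :=
    intervalIntegral.intervalIntegrable_rpow' (by norm_num)
  have hbi : IntervalIntegrable (fun s : ℝ => (128 + 32 * s ^ (-(1/2:ℝ))) * Q) volume 0 2 :=
    ((intervalIntegrable_const).add (hri.const_mul 32)).mul_const Q
  calc |∫ t, G (p.eval t) * w t|
      = ‖∫ s in Set.Ioc (0:ℝ) 2, ∫ t,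
          {z : ℝ × ℝ | z.2 < w z.1}.indicator (fun z => G (p.eval z.1)) (t, s)‖ := by
        simp only [hlayer]
        rw [integral_integral_swap (f := fun t s =>
          {z : ℝ × ℝ | z.2 < w z.1}.indicator (fun z => G (p.eval z.1)) (t, s)) hIg,
          Real.norm_eq_abs]
    _ ≤ ∫ s in Set.Ioc (0:ℝ) 2, (128 + 32 * s ^ (-(1/2:ℝ))) * Q := by
        apply norm_integral_le_of_norm_le
          ((intervalIntegrable_iff_integrableOn_Ioc_of_le (by norm_num)).1 hbi)
        exact (ae_restrict_iff' measurableSet_Ioc).2 (Filter.Eventually.of_forall hlevel)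
    _ = (∫ s in (0:ℝ)..2, (128 + 32 * s ^ (-(1/2:ℝ)))) * Q := by
        rw [← intervalIntegral.integral_of_le (by norm_num), intervalIntegral.integral_mul_const]
    _ ≤ 400 * Q := by
        gcongr
        rw [intervalIntegral.integral_add intervalIntegrable_const (hri.const_mul 32),
          intervalIntegral.integral_const_mul, integral_rpow (by norm_num)]
        have e1 : (2:ℝ) ^ (-(1/2:ℝ) + 1) ≤ 2 := by
          calc (2:ℝ) ^ (-(1/2:ℝ) + 1) ≤ 2 ^ (1:ℝ) :=
                Real.rpow_le_rpow_of_exponent_le (by norm_num) (by norm_num)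
            _ = 2 := by norm_num
        rw [Real.zero_rpow (by norm_num)]
        simp only [intervalIntegral.integral_const, smul_eq_mul]
        norm_num at e1 ⊢
        linarith

/-! ### Polynomials on lines through the cube -/

/-- `F` is continuous and restricts to a polynomial of degree at most `D` on every line. -/
structure PolyOnLines {n : ℕ} (D : ℕ) (F : (Fin n → ℝ) → ℝ) : Prop where
  cont : Continuous F
  line : ∀ α β : Fin n → ℝ, ∃ p : Polynomial ℝ, p.natDegree ≤ D ∧
    ∀ t, F (fun j => α j + β j * t) = p.eval t

lemma PolyOnLines.neg {n D : ℕ} {F : (Fin n → ℝ) → ℝ} (hF : PolyOnLines D F) :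
    PolyOnLines D fun x => -F x := by
  refine ⟨hF.cont.neg, fun α β => ?_⟩
  obtain ⟨p, hp, h⟩ := hF.line α β
  exact ⟨-p, by simpa using hp, fun t => by simp [h]⟩

lemma PolyOnLines.sub_const {n D : ℕ} {F : (Fin n → ℝ) → ℝ} (hF : PolyOnLines D F) (m : ℝ) :
    PolyOnLines D fun x => F x - m := by
  refine ⟨hF.cont.sub continuous_const, fun α β => ?_⟩
  obtain ⟨p, hp, h⟩ := hF.line α β
  refine ⟨p - Polynomial.C m, ?_, fun t => by simp [h]⟩
  exact (Polynomial.natDegree_sub_le _ _).trans (by simpa using hp)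

/-- A continuous function equal to `1` on `y ≤ m`, to `0` on `m + σ ≤ y`. -/
def ramp (m σ y : ℝ) : ℝ := max 0 (min 1 ((m + σ - y) / σ))

lemma ramp_le_one (m σ y : ℝ) : ramp m σ y ≤ 1 := max_le zero_le_one (min_le_left _ _)

lemma ramp_nonneg (m σ y : ℝ) : 0 ≤ ramp m σ y := le_max_left _ _

lemma ramp_eq_one {m σ y : ℝ} (hσ : 0 < σ) (h : y ≤ m) : ramp m σ y = 1 := by
  have : 1 ≤ (m + σ - y) / σ := by rw [le_div_iff₀ hσ]; linarith
  rw [ramp, min_eq_left this, max_eq_right zero_le_one]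

lemma lt_of_ramp_pos {m σ y : ℝ} (hσ : 0 < σ) (h : 0 < ramp m σ y) : y < m + σ := by
  by_contra hcon
  push Not at hcon
  have : (m + σ - y) / σ ≤ 0 := div_nonpos_of_nonpos_of_nonneg (by linarith) hσ.le
  rw [ramp, max_eq_left ((min_le_right _ _).trans this)] at h
  exact lt_irrefl _ h

lemma continuous_ramp (m σ : ℝ) : Continuous (ramp m σ) := by unfold ramp; fun_prop

lemma measure_le_integral_ramp {n : ℕ} {F : (Fin n → ℝ) → ℝ} (hF : Continuous F) {m σ : ℝ}
    (hσ : 0 < σ) : (cubeM n).real {x | F x ≤ m} ≤ ∫ x, ramp m σ (F x) ∂(cubeM n) := by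
  have hm : MeasurableSet {x | F x ≤ m} := (isClosed_le hF continuous_const).measurableSet
  rw [← integral_indicator_one hm]
  apply integral_mono ((integrable_const (1:ℝ)).indicator hm)
    (integrable_cubeM ((continuous_ramp m σ).comp hF))
  intro x
  by_cases hx : F x ≤ m
  · rw [Set.indicator_of_mem (by exact hx)]
    show (1:ℝ) ≤ ramp m σ (F x)
    rw [ramp_eq_one hσ hx]
  · rw [Set.indicator_of_notMem (by exact hx)]
    exact ramp_nonneg _ _ _

/-- Were the integral larger, localization of `G ∘ F - Q` together with `ramp m σ F - 1/16` would
produce a needle violating `Needle.osc`; the second function supplies a point in the bulk of the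
needle at which `F < m + σ`. -/
lemma cube_osc_upper {n D : ℕ} (hD : 1 ≤ D) {F : (Fin n → ℝ) → ℝ} (hF : PolyOnLines D F)
    {m σ θ B0 B1 : ℝ} (hσ : 0 < σ) (hθ : 0 < θ)
    (hm : 1 / 8 ≤ (cubeM n).real {x | F x ≤ m}) (G Φ : ℝ → ℝ) (hG : Continuous G)
    (hΦ : ∀ t, HasDerivAt Φ (G t) t) (hB0 : ∀ t, |Φ t| ≤ B0) (hB1 : ∀ t, |G t| ≤ B1)
    (hG0 : ∀ y ≤ m + 2 * σ, G y = 0) :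
    ∫ x, G (F x) ∂(cubeM n) ≤
      400 * (B1 * θ + 40 * D * (B0 / σ) * (11 / θ) ^ (D - 1)) := by
  set Q := 400 * (B1 * θ + 40 * D * (B0 / σ) * (11 / θ) ^ (D - 1)) with hQ
  by_contra hcon
  push Not at hcon
  have hGF : Continuous fun x => G (F x) := hG.comp hF.cont
  have hrF : Continuous fun x => ramp m σ (F x) := (continuous_ramp m σ).comp hF.cont
  have h1 : 0 < ∫ x, (G (F x) - Q) ∂(cubeM n) := by
    rw [integral_sub (integrable_cubeM hGF) (integrable_const _)]
    simpa using hcon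
  have h2 : 0 < ∫ x, (ramp m σ (F x) - 1 / 16) ∂(cubeM n) := by
    rw [integral_sub (integrable_cubeM hrF) (integrable_const _)]
    have := hm.trans (measure_le_integral_ramp hF.cont hσ)
    simp only [integral_const, probReal_univ, one_smul]
    linarith
  obtain ⟨α, β, w, hw, h3, h4⟩ := localize (g := fun x => G (F x) - Q)
    (h := fun x => ramp m σ (F x) - 1 / 16) (hGF.sub continuous_const)
    (hrF.sub continuous_const) h1 h2
  obtain ⟨p, hp, hFp⟩ := hF.line α β
  simp only [hFp] at h3 h4
  obtain ⟨t₁, ht₁, hpos⟩ := hw.exists_abs_le ((continuous_ramp m σ).comp p.continuous)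
    (fun t => ramp_le_one _ _ _) h4
  have h5 := hw.osc p D hD hp hσ hθ ht₁ (lt_of_ramp_pos hσ hpos).le G Φ hG hΦ hB0 hB1
    (fun y hy => hG0 y (by linarith))
  have h6 : ∫ t, (G (p.eval t) - Q) * w t = (∫ t, G (p.eval t) * w t) - Q := by
    simp only [sub_mul]
    rw [integral_sub (hw.integrable_mul (q := fun t => G (p.eval t)) (hG.comp p.continuous)) (hw.integrable.const_mul _),
      integral_const_mul, hw.integral_eq, mul_one]
  rw [h6] at h3
  have := le_abs_self (∫ t, G (p.eval t) * w t)
  rw [← hQ] at h5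
  linarith

lemma cube_osc_one_sided {n D : ℕ} (hD : 1 ≤ D) {F : (Fin n → ℝ) → ℝ} (hF : PolyOnLines D F)
    {m σ θ B0 B1 : ℝ} (hσ : 0 < σ) (hθ : 0 < θ)
    (hm : 1 / 8 ≤ (cubeM n).real {x | F x ≤ m}) (G Φ : ℝ → ℝ) (hG : Continuous G)
    (hΦ : ∀ t, HasDerivAt Φ (G t) t) (hB0 : ∀ t, |Φ t| ≤ B0) (hB1 : ∀ t, |G t| ≤ B1)
    (hG0 : ∀ y ≤ m + 2 * σ, G y = 0) :
    |∫ x, G (F x) ∂(cubeM n)| ≤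
      400 * (B1 * θ + 40 * D * (B0 / σ) * (11 / θ) ^ (D - 1)) := by
  rw [abs_le]
  constructor
  · have := cube_osc_upper hD hF hσ hθ hm (fun t => -G t) (fun t => -Φ t) hG.neg
      (fun t => (hΦ t).neg) (by simpa using hB0) (by simpa using hB1)
      (fun y hy => by rw [hG0 y hy, neg_zero])
    rw [integral_neg] at this
    linarith
  · exact cube_osc_upper hD hF hσ hθ hm G Φ hG hΦ hB0 hB1 hG0

/-- Smooth monotone step from `0` (for `t ≤ a`) to `1` (for `a + σ ≤ t`). -/
def step (a σ t : ℝ) : ℝ := Real.smoothTransition ((t - a) / σ)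

lemma step_nonneg (a σ t : ℝ) : 0 ≤ step a σ t := Real.smoothTransition.nonneg _

lemma step_le_one (a σ t : ℝ) : step a σ t ≤ 1 := Real.smoothTransition.le_one _

lemma step_zero {a σ t : ℝ} (hσ : 0 < σ) (h : t ≤ a) : step a σ t = 0 :=
  Real.smoothTransition.zero_of_nonpos (div_nonpos_of_nonpos_of_nonneg (by linarith) hσ.le)

lemma step_one {a σ t : ℝ} (hσ : 0 < σ) (h : a + σ ≤ t) : step a σ t = 1 :=
  Real.smoothTransition.one_of_one_le (by rw [le_div_iff₀ hσ]; linarith)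

lemma step_contDiff (a σ : ℝ) : ContDiff ℝ 1 (step a σ) := by
  unfold step
  exact Real.smoothTransition.contDiff.comp ((contDiff_id.sub contDiff_const).div_const σ)

/-- Integrating by parts, the primitive of `φ'` times a step stays bounded by `3 sup |φ|`. -/
lemma primitive_step_bound {φ φ' : ℝ → ℝ} (hφ : ∀ t, HasDerivAt φ (φ' t) t)
    (hφ' : Continuous φ') {B a σ : ℝ} (hσ : 0 < σ) (hB : ∀ t, |φ t| ≤ B) (y : ℝ) :
    |∫ t in (0:ℝ)..y, φ' t * step a σ t| ≤ 3 * B := by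
  have hφc : Continuous φ := continuous_iff_continuousAt.2 fun t => (hφ t).continuousAt
  have hs := step_contDiff a σ
  have hsd : ∀ t, HasDerivAt (step a σ) (deriv (step a σ) t) t := fun t =>
    (hs.differentiable one_ne_zero t).hasDerivAt
  have hsc : Continuous (deriv (step a σ)) := hs.continuous_deriv le_rfl
  have hmono : Monotone (step a σ) := fun s t hst =>
    Real.smoothTransition.monotone (by gcongr)
  have hpos : ∀ t, 0 ≤ deriv (step a σ) t := fun t => hmono.deriv_nonneg
  have hparts := intervalIntegral.integral_deriv_mul_eq_sub (a := 0) (b := y)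
    (fun t _ => hφ t) (fun t _ => hsd t) (hφ'.intervalIntegrable _ _)
    (hsc.intervalIntegrable _ _)
  have hadd : ∫ t in (0:ℝ)..y, (φ' t * step a σ t + φ t * deriv (step a σ) t) =
      (∫ t in (0:ℝ)..y, φ' t * step a σ t) + ∫ t in (0:ℝ)..y, φ t * deriv (step a σ) t :=
    intervalIntegral.integral_add ((hφ'.mul hs.continuous).intervalIntegrable _ _)
      ((hφc.mul hsc).intervalIntegrable _ _)
  rw [hadd] at hparts
  have hB0 : 0 ≤ B := (abs_nonneg _).trans (hB 0)
  have h1 : |∫ t in (0:ℝ)..y, φ t * deriv (step a σ) t| ≤ B := by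
    have h2 : |∫ t in (0:ℝ)..y, φ t * deriv (step a σ) t| ≤
        |∫ t in (0:ℝ)..y, B * deriv (step a σ) t| := by
      rw [← Real.norm_eq_abs]
      apply intervalIntegral.norm_integral_le_abs_of_norm_le
      · apply Filter.Eventually.of_forall
        intro t
        rw [Real.norm_eq_abs, abs_mul, abs_of_nonneg (hpos t)]
        exact mul_le_mul_of_nonneg_right (hB t) (hpos t)
      · exact (hsc.const_mul B).intervalIntegrable _ _
    rw [intervalIntegral.integral_const_mul, intervalIntegral.integral_eq_sub_of_hasDerivAt
      (fun t _ => hsd t) (hsc.intervalIntegrable _ _), abs_mul, abs_of_nonneg hB0] at h2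
    refine h2.trans ?_
    have : |step a σ y - step a σ 0| ≤ 1 := by
      rw [abs_le]
      constructor <;> linarith [step_nonneg a σ y, step_nonneg a σ 0, step_le_one a σ y,
        step_le_one a σ 0]
    nlinarith
  have h3 : ∀ t, |φ t * step a σ t| ≤ B := fun t => by
    rw [abs_mul, abs_of_nonneg (step_nonneg a σ t)]
    have := hB t
    nlinarith [step_nonneg a σ t, step_le_one a σ t, abs_nonneg (φ t)]
  have h4 := abs_le.1 (h3 y)
  have h5 := abs_le.1 (h3 0)
  have h6 := abs_le.1 h1
  rw [abs_le]
  constructor <;> linarith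

/-- A step between `m + 2σ` and `m + 3σ` splits `φ'` into a part vanishing below `m + 2σ` and a part
vanishing above `m + 3σ`; the latter is treated by passing from `F` to `-F`. -/
lemma cube_osc {n D : ℕ} (hD : 1 ≤ D) {F : (Fin n → ℝ) → ℝ} (hF : PolyOnLines D F)
    {m σ θ B0 B1 : ℝ} (hσ : 0 < σ) (hθ : 0 < θ)
    (hm : 1 / 8 ≤ (cubeM n).real {x | F x ≤ m})
    (hm' : 1 / 8 ≤ (cubeM n).real {x | m + 5 * σ ≤ F x}) (φ φ' : ℝ → ℝ) (hφ' : Continuous φ')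
    (hφ : ∀ t, HasDerivAt φ (φ' t) t) (hB0 : ∀ t, |φ t| ≤ B0) (hB1 : ∀ t, |φ' t| ≤ B1) :
    |∫ x, φ' (F x) ∂(cubeM n)| ≤
      800 * (B1 * θ + 40 * D * (4 * B0 / σ) * (11 / θ) ^ (D - 1)) := by
  have hsc : Continuous (step (m + 2 * σ) σ) := (step_contDiff _ _).continuous
  set Φ : ℝ → ℝ := fun y => ∫ t in (0:ℝ)..y, φ' t * step (m + 2 * σ) σ t with hΦ
  have hmc : Continuous fun t => φ' t * step (m + 2 * σ) σ t := hφ'.mul hsc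
  have hΦd : ∀ t, HasDerivAt Φ (φ' t * step (m + 2 * σ) σ t) t := fun t =>
    intervalIntegral.integral_hasDerivAt_right (hmc.intervalIntegrable _ _)
      (hmc.stronglyMeasurableAtFilter _ _) hmc.continuousAt
  have hΦb : ∀ t, |Φ t| ≤ 3 * B0 := fun y => primitive_step_bound hφ hφ' hσ hB0 y
  have hB00 : 0 ≤ B0 := (abs_nonneg _).trans (hB0 0)
  have hs0 := step_nonneg (m + 2 * σ) σ
  have hs1 := step_le_one (m + 2 * σ) σ
  have h1 := cube_osc_one_sided hD hF hσ hθ hm (fun t => φ' t * step (m + 2 * σ) σ t) Φ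
    (hφ'.mul hsc) hΦd (B0 := 4 * B0) (B1 := B1) (fun t => (hΦb t).trans (by linarith))
    (fun t => by
      rw [abs_mul, abs_of_nonneg (hs0 t)]
      nlinarith [hB1 t, hs0 t, hs1 t, abs_nonneg (φ' t)])
    (fun y hy => by rw [step_zero hσ hy, mul_zero])
  have hset : {x | -F x ≤ -(m + 5 * σ)} = {x | m + 5 * σ ≤ F x} := by
    ext x; simp only [Set.mem_ofPred_eq, neg_le_neg_iff]
  have h2 := cube_osc_one_sided hD hF.neg hσ hθ (m := -(m + 5 * σ)) (by rw [hset]; exact hm')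
    (fun t => φ' (-t) * (1 - step (m + 2 * σ) σ (-t))) (fun t => -(φ (-t) - Φ (-t)))
    (by fun_prop) (fun t => by
      have h3 := ((hφ (-t)).sub (hΦd (-t))).scomp t (hasDerivAt_neg t)
      have h5 : φ' (-t) * (1 - step (m + 2 * σ) σ (-t)) =
          -((-1:ℝ) • (φ' (-t) - φ' (-t) * step (m + 2 * σ) σ (-t))) := by
        rw [smul_eq_mul]; ring
      rw [h5]
      exact h3.neg) (B0 := 4 * B0) (B1 := B1)
    (fun t => by
      rw [abs_neg]
      exact (abs_sub _ _).trans (by linarith [hB0 (-t), hΦb (-t)]))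
    (fun t => by
      rw [abs_mul, abs_of_nonneg (by linarith [hs1 (-t)] : 0 ≤ 1 - step (m + 2 * σ) σ (-t))]
      nlinarith [hB1 (-t), hs0 (-t), hs1 (-t), abs_nonneg (φ' (-t))])
    (fun y hy => by rw [step_one hσ (by linarith), sub_self, mul_zero])
  simp only [neg_neg] at h2
  have h3 : ∫ x, φ' (F x) ∂(cubeM n) = (∫ x, φ' (F x) * step (m + 2 * σ) σ (F x) ∂(cubeM n)) +
      ∫ x, φ' (F x) * (1 - step (m + 2 * σ) σ (F x)) ∂(cubeM n) := by
    have hFc := hF.cont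
    rw [← integral_add (integrable_cubeM (by fun_prop)) (integrable_cubeM (by fun_prop))]
    congr 1
    ext x
    ring
  rw [h3]
  exact (abs_add_le _ _).trans (by linarith)

lemma rpow_self_inv_le_two {D : ℕ} (hD : 1 ≤ D) : (D : ℝ) ^ (1 / (D : ℝ)) ≤ 2 := by
  have h : (D : ℝ) ≤ 2 ^ (D : ℝ) := by
    rw [Real.rpow_natCast]; exact_mod_cast Nat.lt_two_pow_self.le
  have hD0 : (0:ℝ) < D := by exact_mod_cast hD
  calc (D : ℝ) ^ (1 / (D : ℝ)) ≤ ((2:ℝ) ^ (D : ℝ)) ^ (1 / (D : ℝ)) :=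
        Real.rpow_le_rpow hD0.le h (by positivity)
    _ = 2 := by rw [← Real.rpow_mul (by norm_num), mul_one_div_cancel hD0.ne', Real.rpow_one]

/-- Oscillation estimate on the cube for a polynomial with two-sided spread `σ`, after optimizing in
`θ`. -/
lemma cube_osc_opt {n D : ℕ} (hD : 1 ≤ D) {F : (Fin n → ℝ) → ℝ} (hF : PolyOnLines D F)
    {m σ B0 B1 : ℝ} (hσ : 0 < σ)
    (hm : 1 / 8 ≤ (cubeM n).real {x | F x ≤ m})
    (hm' : 1 / 8 ≤ (cubeM n).real {x | m + 5 * σ ≤ F x}) (φ φ' : ℝ → ℝ) (hφ' : Continuous φ')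
    (hφ : ∀ t, HasDerivAt φ (φ' t) t) (hB0 : ∀ t, |φ t| ≤ B0) (hB1 : ∀ t, |φ' t| ≤ B1)
    (hB0p : 0 < B0) (hB1p : 0 < B1) :
    |∫ x, φ' (F x) ∂(cubeM n)| ≤ 300000 * B1 * (B0 / (σ * B1)) ^ (1 / (D : ℝ)) := by
  have hD0 : (0:ℝ) < D := by exact_mod_cast hD
  set x := B0 / (σ * B1) with hx
  have hx0 : 0 < x := by positivity
  set y := (D * x) ^ (1 / (D : ℝ)) with hy
  have hy0 : 0 < y := by positivity
  -- the choice of `θ` balancing the two terms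
  have h := cube_osc hD hF hσ (θ := 11 * y) (by positivity) hm hm' φ φ' hφ' hφ hB0 hB1
  have e1 : 11 / (11 * y) = y⁻¹ := by field_simp
  have e2 : y ^ D = D * x := by
    rw [hy, ← Real.rpow_natCast, ← Real.rpow_mul (by positivity), one_div_mul_cancel hD0.ne',
      Real.rpow_one]
  have e3 : D * x * y⁻¹ ^ (D - 1) = y := by
    obtain ⟨k, rfl⟩ : ∃ k, D = k + 1 := ⟨D - 1, by omega⟩
    rw [← e2, Nat.add_sub_cancel, pow_succ, inv_pow]
    field_simp
  have e4 : B0 / σ = B1 * x := by rw [hx]; field_simp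
  have e5 : B1 * (11 * y) + 40 * D * (4 * B0 / σ) * (11 / (11 * y)) ^ (D - 1) = 171 * B1 * y := by
    rw [e1, mul_div_assoc, e4]
    linear_combination 160 * B1 * e3
  rw [e5] at h
  have e6 : y ≤ 2 * x ^ (1 / (D : ℝ)) := by
    rw [hy, Real.mul_rpow hD0.le hx0.le]
    gcongr
    exact rpow_self_inv_le_two hD
  have h7 : 0 < x ^ (1 / (D : ℝ)) := by positivity
  nlinarith [mul_pos hB1p h7]

/-! ### Concentration forces a small variance -/

lemma cube_bound {n : ℕ} {F : (Fin n → ℝ) → ℝ} (hF : Continuous F) :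
    ∃ M, 0 < M ∧ ∀ᵐ x ∂(cubeM n), |F x| ≤ M := by
  obtain ⟨M, hM⟩ := (isCompact_cube n).exists_bound_of_continuousOn hF.continuousOn
  refine ⟨max M 1, by positivity, ?_⟩
  rw [cubeM_eq, ae_restrict_iff' (isCompact_cube n).measurableSet]
  exact Filter.Eventually.of_forall fun x hx => (hM x hx).trans (le_max_left _ _)

/-- If mass `1/8` of `F ≤ m` always forces mass less than `1/8` of `F ≥ m + τ`, then `F` is within
`τ` of some value on a set of mass `3/4`. That value is the least multiple of `τ` below which lies
mass `1/8`. -/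
lemma exists_concentrated {n : ℕ} {F : (Fin n → ℝ) → ℝ} (hF : Continuous F) {τ : ℝ} (hτ : 0 < τ)
    (h : ∀ m, 1 / 8 ≤ (cubeM n).real {x | F x ≤ m} →
      (cubeM n).real {x | m + τ ≤ F x} < 1 / 8) :
    ∃ m, 3 / 4 ≤ (cubeM n).real {x | |F x - m| ≤ τ} := by
  obtain ⟨M, hM0, hM⟩ := cube_bound hF
  obtain ⟨b, hb⟩ := exists_nat_gt (M / τ)
  rw [div_lt_iff₀ hτ] at hb
  obtain ⟨k, hk, hmin⟩ := Int.exists_least_of_bdd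
    (P := fun k : ℤ => 1 / 8 ≤ (cubeM n).real {x | F x ≤ k * τ})
    ⟨-b, fun z hz => by
      by_contra hcon
      push Not at hcon
      have hz0 : (cubeM n).real {x | F x ≤ z * τ} = 0 := by
        rw [measureReal_def, measure_eq_zero_iff_ae_notMem.2, ENNReal.toReal_zero]
        filter_upwards [hM] with x hx hx'
        have h1 : F x ≤ z * τ := hx'
        have h2 : (z : ℝ) ≤ -b := by exact_mod_cast hcon.le
        have := neg_le_of_abs_le hx
        nlinarith
      rw [hz0] at hz
      norm_num at hz⟩
    ⟨b, by
      have : (cubeM n).real {x | F x ≤ ((b : ℤ) : ℝ) * τ} = 1 := by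
        rw [measureReal_def, (prob_compl_eq_zero_iff
          (isClosed_le hF continuous_const).measurableSet).1, ENNReal.toReal_one]
        rw [measure_eq_zero_iff_ae_notMem]
        filter_upwards [hM] with x hx hx'
        apply hx'
        show F x ≤ ((b : ℤ) : ℝ) * τ
        have := le_of_abs_le hx
        push_cast
        linarith
      rw [this]; norm_num⟩
  refine ⟨k * τ, ?_⟩
  have h1 := h _ hk
  have h2 : (cubeM n).real {x | F x ≤ (k - 1 : ℤ) * τ} < 1 / 8 := by
    by_contra hcon
    push Not at hcon
    have := hmin _ hcon
    omega
  have hcov : (Set.univ : Set (Fin n → ℝ)) ⊆ {x | |F x - k * τ| ≤ τ} ∪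
      ({x | k * τ + τ ≤ F x} ∪ {x | F x ≤ (k - 1 : ℤ) * τ}) := by
    intro x _
    by_cases hx : |F x - k * τ| ≤ τ
    · exact Or.inl hx
    · right
      push Not at hx
      rcases lt_abs.1 hx with h3 | h3
      · left; show k * τ + τ ≤ F x; linarith
      · right; show F x ≤ (k - 1 : ℤ) * τ; push_cast; linarith
  have h3 := measureReal_mono hcov (μ := cubeM n)
  rw [probReal_univ] at h3
  have h4 := measureReal_union_le (μ := cubeM n) {x | |F x - k * τ| ≤ τ}
    ({x | k * τ + τ ≤ F x} ∪ {x | F x ≤ (k - 1 : ℤ) * τ})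
  have h5 := measureReal_union_le (μ := cubeM n) {x | k * τ + τ ≤ F x}
    {x | F x ≤ (k - 1 : ℤ) * τ}
  linarith

/-- Dimension-dependent bound: shrinking the cube towards `x₀` by factors in
`[1 - 1 / (2 n), 1]` loses at most half of the volume, so some ray through `x₀` meets the set of
concentration in length `1 / (4 n)`, and Remez' inequality applies on it. -/
lemma sup_bound_dim {n D : ℕ} (hn : 0 < n) {F : (Fin n → ℝ) → ℝ} (hF : PolyOnLines D F) {τ m : ℝ}
    (hm : 3 / 4 ≤ (cubeM n).real {x | |F x - m| ≤ τ}) (x₀ : Fin n → ℝ)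
    (hx₀ : x₀ ∈ Set.univ.pi fun _ : Fin n => Set.Icc (0:ℝ) 1) :
    |F x₀ - m| ≤ (44 * n) ^ D * τ := by
  have hn0 : (1:ℝ) ≤ n := by exact_mod_cast hn
  set cube := Set.univ.pi fun _ : Fin n => Set.Icc (0:ℝ) 1 with hcube
  set E := {x | |F x - m| ≤ τ} with hE
  have hEm : MeasurableSet E :=
    (isClosed_le (hF.cont.sub continuous_const).abs continuous_const).measurableSet
  set J := Set.Icc (1 - 1 / (2 * n) : ℝ) 1 with hJ
  have hJ0 : 1 / (2 * n : ℝ) ≤ 1 / 2 := by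
    apply one_div_le_one_div_of_le <;> linarith
  have hTc : Continuous fun z : (Fin n → ℝ) × ℝ => (fun j => x₀ j + z.2 * (z.1 j - x₀ j)) := by
    fun_prop
  have hZm : MeasurableSet {z : (Fin n → ℝ) × ℝ | (fun j => x₀ j + z.2 * (z.1 j - x₀ j)) ∈ E} :=
    hTc.measurable hEm
  have hslice : ∀ s ∈ J, 1 / 2 ≤ (cubeM n).real {x | (fun j => x₀ j + s * (x j - x₀ j)) ∈ E} := by
    intro s hs
    have hs0 : 1 / 2 ≤ s := by linarith [hs.1]
    have hsm : MeasurableSet {x : Fin n → ℝ | (fun j => x₀ j + s * (x j - x₀ j)) ∈ E} :=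
      (show Continuous fun x : Fin n → ℝ => (fun j => x₀ j + s * (x j - x₀ j)) by
        fun_prop).measurable hEm
    have h1 : AffineMap.homothety x₀ s ''
        ({x | (fun j => x₀ j + s * (x j - x₀ j)) ∈ E}ᶜ ∩ cube) ⊆ Eᶜ ∩ cube := by
      rintro _ ⟨x, ⟨hx1, hx2⟩, rfl⟩
      have : AffineMap.homothety x₀ s x = fun j => x₀ j + s * (x j - x₀ j) := by
        ext j; simp [AffineMap.homothety_apply]; ring
      rw [this]
      refine ⟨hx1, fun j _ => ?_⟩
      have h2 := hx2 j trivial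
      have h3 := hx₀ j trivial
      constructor
      · nlinarith [h2.1, h3.1, hs.2]
      · nlinarith [h2.2, h3.2, hs.2]
    have h2 := measure_mono (μ := volume) h1
    rw [Measure.addHaar_image_homothety, Module.finrank_fin_fun] at h2
    have hpow : (1:ℝ) / 2 ≤ s ^ n := by
      have := one_add_mul_le_pow (a := s - 1) (by linarith) n
      have h3 : (n:ℝ) * (s - 1) ≥ -(1/2) := by
        have h4 : -(1 / (2 * n : ℝ)) ≤ s - 1 := by linarith [hs.1]
        calc (n:ℝ) * (s - 1) ≥ n * (-(1 / (2 * n : ℝ))) := by gcongr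
          _ = -(1/2) := by field_simp
      rw [add_sub_cancel] at this
      linarith
    have h3 : (cubeM n).real Eᶜ ≤ 1 / 4 := by
      rw [probReal_compl_eq_one_sub hEm]; linarith
    have hsE : ∀ A, MeasurableSet A → (cubeM n) A = volume (A ∩ cube) := fun A hA => by
      rw [cubeM_eq, Measure.restrict_apply hA]
    rw [← hsE _ hEm.compl, ← hsE _ hsm.compl] at h2
    have h4 := ENNReal.toReal_mono (measure_ne_top _ _) h2
    rw [ENNReal.toReal_mul, ENNReal.toReal_ofReal (abs_nonneg _), abs_of_nonneg (by linarith),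
      ← measureReal_def, ← measureReal_def, probReal_compl_eq_one_sub hsm] at h4
    have h5 : (cubeM n).real {x | (fun j => x₀ j + s * (x j - x₀ j)) ∈ E} ≤ 1 := measureReal_le_one
    nlinarith
  -- average over the dilation factor
  set ind : (Fin n → ℝ) → ℝ → ℝ := fun x s =>
    {z : (Fin n → ℝ) × ℝ | (fun j => x₀ j + z.2 * (z.1 j - x₀ j)) ∈ E}.indicator
      (fun _ => (1:ℝ)) (x, s) with hind
  have hIg : Integrable (Function.uncurry ind) ((cubeM n).prod (volume.restrict J)) :=
    (integrable_const (1:ℝ)).indicator hZm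
  have hswap := integral_integral_swap hIg
  have hlow : 1 / (4 * n : ℝ) ≤ ∫ x, (∫ s in J, ind x s) ∂(cubeM n) := by
    rw [hswap]
    have h1 : ∫ s in J, (1/2 : ℝ) ≤ ∫ s in J, ∫ x, ind x s ∂(cubeM n) := by
      apply setIntegral_mono_on (integrable_const _) hIg.integral_prod_right measurableSet_Icc
      intro s hs
      have : ∀ x, ind x s = {x | (fun j => x₀ j + s * (x j - x₀ j)) ∈ E}.indicator
        (fun _ => (1:ℝ)) x := fun x => rfl
      show 1 / 2 ≤ ∫ x, ind x s ∂(cubeM n)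
      rw [integral_congr_ae (Filter.Eventually.of_forall this), integral_indicator_const]
      · simpa using hslice s hs
      · exact (show Continuous fun x : Fin n → ℝ => (fun j => x₀ j + s * (x j - x₀ j)) by
          fun_prop).measurable hEm
    rw [setIntegral_const, measureReal_def, Real.volume_Icc, ENNReal.toReal_ofReal (by linarith [show 0 ≤ 1 / (2 * n : ℝ) by positivity])] at h1
    refine le_trans (le_of_eq ?_) h1
    rw [smul_eq_mul]; field_simp; ring
  obtain ⟨x, hx⟩ := exists_integral_le hIg.integral_prod_left
  have hx' := hlow.trans hx
  have h6 : ∫ s in J, ind x s = volume.real ({s | (fun j => x₀ j + s * (x j - x₀ j)) ∈ E} ∩ J) := by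
    have : ∀ s, ind x s = {s | (fun j => x₀ j + s * (x j - x₀ j)) ∈ E}.indicator
        (fun _ => (1:ℝ)) s := fun s => rfl
    simp only [this]
    have hms : MeasurableSet {s : ℝ | (fun j => x₀ j + s * (x j - x₀ j)) ∈ E} :=
      (show Continuous fun s : ℝ => (fun j => x₀ j + s * (x j - x₀ j)) by
          fun_prop).measurable hEm
    rw [integral_indicator_const _ hms, measureReal_restrict_apply hms]
    simp
  have hx'' : 1 / (4 * n : ℝ) ≤ volume.real ({s | (fun j => x₀ j + s * (x j - x₀ j)) ∈ E} ∩ J) := by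
    rw [← h6]; exact hx'
  obtain ⟨p, hp, hFp⟩ := (hF.sub_const m).line x₀ (fun j => x j - x₀ j)
  have hFp' : ∀ s, F (fun j => x₀ j + s * (x j - x₀ j)) - m = p.eval s := fun s => by
    rw [← hFp]; simp only [mul_comm]
  have h7 := remez p D hp 0 1 (1 / (4 * n : ℝ)) τ _ (fun s hs => ⟨by linarith [hs.2.1], hs.2.2⟩)
    (by positivity) hx'' (fun s hs => by rw [← hFp']; exact hs.1) 0 ⟨le_rfl, zero_le_one⟩
  rw [← hFp'] at h7
  simp only [zero_mul, add_zero] at h7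
  refine h7.trans (le_of_eq ?_)
  congr 2
  field_simp
  ring

lemma sq_bound_dim {n D : ℕ} (hn : 0 < n) {F : (Fin n → ℝ) → ℝ} (hF : PolyOnLines D F) {τ m : ℝ}
    (hm : 3 / 4 ≤ (cubeM n).real {x | |F x - m| ≤ τ}) :
    ∫ x, (F x - m) ^ 2 ∂(cubeM n) ≤ ((44 * n) ^ D * τ) ^ 2 := by
  have h1 : ∫ x, (F x - m) ^ 2 ∂(cubeM n) ≤ ∫ x, ((44 * n) ^ D * τ) ^ 2 ∂(cubeM n) := by
    have hFc := hF.cont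
    apply integral_mono_ae (integrable_cubeM (by fun_prop)) (integrable_const _)
    rw [cubeM_eq]
    refine (ae_restrict_iff' (isCompact_cube n).measurableSet).2
      (Filter.Eventually.of_forall fun x hx => ?_)
    exact sq_le_sq.2 ((sup_bound_dim hn hF hm x hx).trans (le_abs_self _))
  simpa using h1

lemma pow_le_exp {D : ℕ} (hD : 1 ≤ D) {x : ℝ} (hx : 0 ≤ x) :
    x ^ (2 * D) ≤ (16 * D) ^ (2 * D) * Real.exp (x / 8) := by
  have hD0 : (0:ℝ) < D := by exact_mod_cast hD
  have h1 : x ≤ 16 * D * Real.exp (x / (16 * D)) := by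
    have := Real.add_one_le_exp (x / (16 * D))
    have h2 : x / (16 * D) ≤ Real.exp (x / (16 * D)) := by linarith
    rw [div_le_iff₀ (by positivity)] at h2
    linarith
  calc x ^ (2 * D) ≤ (16 * D * Real.exp (x / (16 * D))) ^ (2 * D) := by gcongr
    _ = (16 * D) ^ (2 * D) * Real.exp (x / 8) := by
      rw [mul_pow, ← Real.exp_nat_mul]
      congr 2
      push_cast
      field_simp
      ring

lemma exp_eight_le : Real.exp 8 ≤ 3000 := by
  have : Real.exp 8 = Real.exp 1 ^ 8 := by rw [← Real.exp_nat_mul]; norm_num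
  rw [this]
  calc Real.exp 1 ^ 8 ≤ 2.72 ^ 8 := by
        gcongr; exact Real.exp_one_lt_d9.le.trans (by norm_num)
    _ ≤ 3000 := by norm_num

/-- On a needle, concentration of a polynomial at scale `τ` bounds its second moment: the set of
concentration has length at least `1/5`, so by Remez' inequality the polynomial grows at most like
a power of `|t|` times `τ`, against the exponential tail of the needle. -/
lemma Needle.sq_bound {w : ℝ → ℝ} (hw : Needle w) {p : Polynomial ℝ} {D : ℕ} (hD : 1 ≤ D)
    (hp : p.natDegree ≤ D) {τ : ℝ} (hτ : 0 < τ)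
    (h : 0 < ∫ t, (ramp τ τ |p.eval t| - 1 / 2) * w t) :
    ∫ t, p.eval t ^ 2 * w t ≤ 1536000 * (1760 * D) ^ (2 * D) * τ ^ 2 := by
  set E := {t : ℝ | |p.eval t| ≤ 2 * τ} ∩ Set.Icc (-64) 64 with hE
  have hEm : MeasurableSet E :=
    (isClosed_le p.continuous.abs continuous_const).measurableSet.inter measurableSet_Icc
  have hq : Continuous fun t => ramp τ τ |p.eval t| :=
    (continuous_ramp _ _).comp p.continuous.abs
  have hEvol : 1 / 5 ≤ volume.real E := by
    have h1 : ∀ t, ramp τ τ |p.eval t| * w t ≤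
        E.indicator (fun _ => (2:ℝ)) t + Real.exp (-8) * (Real.exp (|t| / 8) * w t) := by
      intro t
      have h0 : 0 ≤ Real.exp (-8) * (Real.exp (|t| / 8) * w t) := by
        have := hw.nonneg t; positivity
      have h0' : 0 ≤ E.indicator (fun _ => (2:ℝ)) t := Set.indicator_nonneg (fun _ _ => by norm_num) _
      rcases (ramp_nonneg τ τ |p.eval t|).lt_or_eq with hr | hr
      · have h2 := lt_of_ramp_pos hτ hr
        have h3 : ramp τ τ |p.eval t| * w t ≤ w t := by
          have := ramp_le_one τ τ |p.eval t|
          have := hw.nonneg t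
          nlinarith
        by_cases ht : t ∈ Set.Icc (-64:ℝ) 64
        · have htE : t ∈ E := ⟨by show |p.eval t| ≤ 2 * τ; linarith, ht⟩
          rw [Set.indicator_of_mem htE]
          linarith [hw.le_two t]
        · have h4 : 64 < |t| := by
            by_contra hcon; push Not at hcon; exact ht (abs_le.1 hcon)
          have h5 : w t ≤ Real.exp (-8) * (Real.exp (|t| / 8) * w t) := by
            rw [← mul_assoc, ← Real.exp_add]
            exact le_mul_of_one_le_left (hw.nonneg t) (Real.one_le_exp (by linarith))
          linarith
      · rw [← hr, zero_mul]; positivity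
    have hEfin : volume E ≠ ⊤ :=
      ((measure_mono Set.inter_subset_right).trans_lt (by simp [Real.volume_Icc])).ne
    have hi1 : Integrable (E.indicator (fun _ => (2:ℝ))) :=
      (integrable_indicator_iff hEm).2 (integrableOn_const hEfin)
    have hi2 : Integrable fun t => Real.exp (-8) * (Real.exp (|t| / 8) * w t) :=
      (hw.integrable_mul (by fun_prop)).const_mul _
    have h2 := integral_mono (hw.integrable_mul hq) (hi1.add hi2) h1
    have h2' : ∫ t, (E.indicator (fun _ => (2:ℝ)) + fun t => Real.exp (-8) *
        (Real.exp (|t| / 8) * w t)) t = volume.real E * 2 + Real.exp (-8) *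
        ∫ t, Real.exp (|t| / 8) * w t := by
      rw [integral_add' hi1 hi2, integral_indicator_const _ hEm, integral_const_mul, smul_eq_mul]
    rw [h2'] at h2
    have h3 : ∫ t, (ramp τ τ |p.eval t| - 1 / 2) * w t =
        (∫ t, ramp τ τ |p.eval t| * w t) - 1 / 2 := by
      simp only [sub_mul]
      rw [integral_sub (hw.integrable_mul hq) (hw.integrable.const_mul _), integral_const_mul,
        hw.integral_eq, mul_one]
    rw [h3] at h
    have h4 : Real.exp (-8) * ∫ t, Real.exp (|t| / 8) * w t ≤ 1 / 2048 * 128 := by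
      apply mul_le_mul exp_neg_eight_le hw.exp_moment _ (by norm_num)
      exact integral_nonneg fun t => mul_nonneg (Real.exp_pos _).le (hw.nonneg t)
    have h5 : ∫ t, (fun t => ramp τ τ |p.eval t| * w t) t ≤ volume.real E * 2 + Real.exp (-8) *
        ∫ t, Real.exp (|t| / 8) * w t := h2
    linarith
  have hpt : ∀ t, p.eval t ^ 2 ≤
      4 * τ ^ 2 * (1760 * D) ^ (2 * D) * Real.exp 8 * Real.exp (|t| / 8) := by
    intro t
    have h1 := remez p D hp (-(64 + |t|)) (64 + |t|) (1 / 5) (2 * τ) E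
      (fun s hs => ⟨by linarith [hs.2.1, abs_nonneg t], by linarith [hs.2.2, abs_nonneg t]⟩)
      (by norm_num) hEvol (fun s hs => hs.1) t
      ⟨by linarith [neg_abs_le t], by linarith [le_abs_self t]⟩
    have h2 : p.eval t ^ 2 ≤ ((110 * (64 + |t|)) ^ D * (2 * τ)) ^ 2 := by
      rw [← sq_abs]
      have : 11 * (64 + |t| - -(64 + |t|)) / (1 / 5) = 110 * (64 + |t|) := by ring
      rw [this] at h1
      gcongr
    refine h2.trans ?_
    have h3 := pow_le_exp hD (x := 64 + |t|) (by positivity)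
    calc ((110 * (64 + |t|)) ^ D * (2 * τ)) ^ 2
        = 4 * τ ^ 2 * 110 ^ (2 * D) * (64 + |t|) ^ (2 * D) := by
          rw [mul_pow, ← pow_mul, mul_comm D 2, mul_pow 110]; ring
      _ ≤ 4 * τ ^ 2 * 110 ^ (2 * D) * ((16 * D) ^ (2 * D) * Real.exp ((64 + |t|) / 8)) := by
          gcongr
      _ = _ := by
          rw [add_div, Real.exp_add, show (1760:ℝ) * D = 110 * (16 * D) by ring,
            mul_pow 110 (16 * (D:ℝ))]
          norm_num
          ring
  calc ∫ t, p.eval t ^ 2 * w t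
      ≤ ∫ t, 4 * τ ^ 2 * (1760 * D) ^ (2 * D) * Real.exp 8 * (Real.exp (|t| / 8) * w t) := by
        apply integral_mono (hw.integrable_mul (q := fun t => p.eval t ^ 2) (by fun_prop))
          ((hw.integrable_mul (by fun_prop)).const_mul _)
        intro t
        show p.eval t ^ 2 * w t ≤ _ * (_ * w t)
        rw [← mul_assoc]
        exact mul_le_mul_of_nonneg_right (hpt t) (hw.nonneg t)
    _ ≤ 4 * τ ^ 2 * (1760 * D) ^ (2 * D) * 3000 * 128 := by
        rw [integral_const_mul]
        gcongr
        · exact integral_nonneg fun t => mul_nonneg (Real.exp_pos _).le (hw.nonneg t)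
        · exact exp_eight_le
        · exact hw.exp_moment
    _ = _ := by ring

/-- Degree-dependent bound: were the second moment larger, localization would produce a needle
violating `Needle.sq_bound`. -/
lemma sq_bound_degree {n D : ℕ} (hD : 1 ≤ D) {F : (Fin n → ℝ) → ℝ} (hF : PolyOnLines D F)
    {τ m : ℝ} (hτ : 0 < τ) (hm : 3 / 4 ≤ (cubeM n).real {x | |F x - m| ≤ τ}) :
    ∫ x, (F x - m) ^ 2 ∂(cubeM n) ≤ 1536000 * (1760 * D) ^ (2 * D) * τ ^ 2 := by
  set M := 1536000 * (1760 * D : ℝ) ^ (2 * D) * τ ^ 2 with hM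
  by_contra hcon
  push Not at hcon
  have hFm := hF.sub_const m
  have hFc := hFm.cont
  have hrc : Continuous fun x => ramp τ τ |F x - m| := (continuous_ramp _ _).comp hFc.abs
  have h1 : 0 < ∫ x, ((F x - m) ^ 2 - M) ∂(cubeM n) := by
    rw [integral_sub (integrable_cubeM (by fun_prop)) (integrable_const _)]
    simpa using hcon
  have h2 : 0 < ∫ x, (ramp τ τ |F x - m| - 1 / 2) ∂(cubeM n) := by
    rw [integral_sub (integrable_cubeM hrc) (integrable_const _)]
    have := hm.trans (measure_le_integral_ramp hFc.abs hτ)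
    simp only [integral_const, probReal_univ, one_smul]
    linarith
  obtain ⟨α, β, w, hw, h3, h4⟩ := localize (g := fun x => (F x - m) ^ 2 - M)
    (h := fun x => ramp τ τ |F x - m| - 1 / 2) (by fun_prop) (hrc.sub continuous_const) h1 h2
  obtain ⟨p, hp, hFp⟩ := hFm.line α β
  simp only [hFp] at h3 h4
  have h5 := hw.sq_bound hD hp hτ h4
  have h6 : ∫ t, (p.eval t ^ 2 - M) * w t = (∫ t, p.eval t ^ 2 * w t) - M := by
    simp only [sub_mul]
    rw [integral_sub (hw.integrable_mul (q := fun t => p.eval t ^ 2) (by fun_prop))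
      (hw.integrable.const_mul _), integral_const_mul, hw.integral_eq, mul_one]
  rw [h6] at h3
  linarith

/-- A polynomial whose variance over the cube is at least `V²` has two-sided spread at scale
`V / (C min(D, n))^D`: otherwise it is concentrated at that scale, and its variance is too small,
by `sq_bound_dim` if `n ≤ D` and by `sq_bound_degree` if `D ≤ n`. -/
lemma exists_spread {n D : ℕ} (hn : 0 < n) (hD : 1 ≤ D) {F : (Fin n → ℝ) → ℝ}
    (hF : PolyOnLines D F) {V : ℝ} (hV : 0 < V)
    (h : ∀ m, V ^ 2 ≤ ∫ x, (F x - m) ^ 2 ∂(cubeM n)) :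
    ∃ m, 1 / 8 ≤ (cubeM n).real {x | F x ≤ m} ∧
      1 / 8 ≤ (cubeM n).real
        {x | m + 5 * (V / (10 * (2182400 * min (D : ℝ) n) ^ D)) ≤ F x} := by
  have hn0 : (1:ℝ) ≤ n := by exact_mod_cast hn
  have hD0 : (1:ℝ) ≤ D := by exact_mod_cast hD
  set P := (2182400 * min (D : ℝ) n) ^ D with hP
  have hN : 1 ≤ min (D : ℝ) n := le_min hD0 hn0
  have hP0 : 0 < P := by positivity
  by_contra hcon
  push Not at hcon
  set τ := 5 * (V / (10 * P)) with hτ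
  have hτ0 : 0 < τ := by positivity
  have hτV : P * τ = V / 2 := by rw [hτ]; field_simp; norm_num
  obtain ⟨m, hm⟩ := exists_concentrated hF.cont hτ0 hcon
  have key : ∫ x, (F x - m) ^ 2 ∂(cubeM n) ≤ (P * τ) ^ 2 := by
    rcases le_total (D : ℝ) n with hle | hle
    · refine (sq_bound_degree hD hF hτ0 hm).trans ?_
      rw [hP, min_eq_left hle]
      have h1 : (1536000:ℝ) ≤ 1240 ^ (2 * D) :=
        calc (1536000:ℝ) ≤ 1240 ^ (2 * 1) := by norm_num
          _ ≤ 1240 ^ (2 * D) := by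
            apply pow_le_pow_right₀ (by norm_num); omega
      calc 1536000 * (1760 * D : ℝ) ^ (2 * D) * τ ^ 2
          ≤ 1240 ^ (2 * D) * (1760 * D : ℝ) ^ (2 * D) * τ ^ 2 := by gcongr
        _ = ((2182400 * D : ℝ) ^ D * τ) ^ 2 := by
          rw [show (2182400:ℝ) * D = 1240 * (1760 * D) by ring, mul_pow 1240 (1760 * (D:ℝ)) D]
          ring
    · refine (sq_bound_dim hn hF hm).trans ?_
      rw [hP, min_eq_right hle]
      gcongr
      norm_num
  have := h m
  rw [hτV] at key
  nlinarith

/-! ### A lower bound for the variance of a polynomial on a box -/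

lemma integrable_unit_poly (p : Polynomial ℝ) : Integrable (fun y => p.eval y) unitM :=
  p.continuous.continuousOn.integrableOn_compact isCompact_Icc

/-- Integration over `[0, 1]` as a linear functional on polynomials. -/
def polyInt : Polynomial ℝ →ₗ[ℝ] ℝ where
  toFun p := ∫ y, p.eval y ∂unitM
  map_add' p q := by
    simp only [Polynomial.eval_add]
    exact integral_add (integrable_unit_poly p) (integrable_unit_poly q)
  map_smul' c p := by
    simp only [Polynomial.eval_smul, smul_eq_mul, RingHom.id_apply]
    exact integral_const_mul _ _

lemma polyInt_apply (p : Polynomial ℝ) : polyInt p = ∫ y, p.eval y ∂unitM := rfl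

/-- By Markov's inequality the part of `[0, 1]` where `p²` is at most twice its mean has length at
least `1/2`. Remez' inequality from this set to `[0, X]`, with `X → ∞`, bounds the leading
coefficient, which is `1`. -/
lemma polyInt_sq_ge {p : Polynomial ℝ} {k : ℕ} (hp : p.natDegree ≤ k) (hk : p.coeff k = 1) :
    (1 / 968 : ℝ) ^ k ≤ polyInt (p * p) := by
  set N := polyInt (p * p) with hN
  rcases Nat.eq_zero_or_pos k with rfl | hk0
  · have : p = 1 := by
      rw [Polynomial.eq_C_of_natDegree_le_zero hp, hk, map_one]
    rw [hN, this, polyInt_apply]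
    simp
  have hN0 : 0 ≤ N := by
    rw [hN, polyInt_apply]
    exact integral_nonneg fun y => by simpa using mul_self_nonneg (p.eval y)
  -- levels `δ` with `δ² ≥ 2 N`, since `N` itself may still be zero here
  have key : ∀ δ : ℝ, 0 < δ → 2 * N ≤ δ ^ 2 → 1 ≤ 22 ^ k * δ := by
    intro δ hδ hNδ
    set E := {y | |p.eval y| ≤ δ} ∩ Set.Icc (0:ℝ) 1 with hE
    have hEm : MeasurableSet {y | |p.eval y| ≤ δ} :=
      (isClosed_le p.continuous.abs continuous_const).measurableSet
    have hEv : 1 / 2 ≤ volume.real E := by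
      have h1 := mul_meas_ge_le_integral_of_nonneg (μ := unitM) (f := fun y => (p * p).eval y)
        (Filter.Eventually.of_forall fun y => by simpa using mul_self_nonneg (p.eval y))
        (integrable_unit_poly _) (δ ^ 2)
      have h2 : unitM.real {y | |p.eval y| ≤ δ}ᶜ ≤ unitM.real {y | δ ^ 2 ≤ (p * p).eval y} := by
        refine measureReal_mono (fun y hy => ?_) (measure_ne_top _ _)
        have h3 : δ < |p.eval y| := not_le.1 hy
        show δ ^ 2 ≤ (p * p).eval y
        rw [Polynomial.eval_mul, ← sq, ← sq_abs (p.eval y)]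
        gcongr
      rw [probReal_compl_eq_one_sub hEm] at h2
      have h3 : unitM.real {y | |p.eval y| ≤ δ} = volume.real E := measureReal_restrict_apply hEm
      rw [← h3]
      have h4 : δ ^ 2 * unitM.real {y | δ ^ 2 ≤ (p * p).eval y} ≤ N := h1
      by_contra hcon
      push Not at hcon
      have h5 : 1 / 2 < unitM.real {y | δ ^ 2 ≤ (p * p).eval y} := by linarith
      have : 0 < δ ^ 2 := by positivity
      nlinarith
    have hb : ∀ X : ℝ, 1 ≤ X → p.eval X / X ^ k ≤ 22 ^ k * δ := by
      intro X hX
      have h1 := remez p k hp 0 X (1 / 2) δ E (fun s hs => ⟨hs.2.1, hs.2.2.trans hX⟩)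
        (by norm_num) hEv (fun s hs => hs.1) X ⟨by linarith, le_rfl⟩
      rw [div_le_iff₀ (by positivity)]
      refine (le_abs_self _).trans (h1.trans (le_of_eq ?_))
      rw [show 11 * (X - 0) / (1 / 2) = 22 * X by ring, mul_pow]
      ring
    have hlim : Filter.Tendsto (fun X : ℝ => p.eval X / X ^ k) Filter.atTop (nhds 1) := by
      have hnd : p.natDegree = k := le_antisymm hp (Polynomial.le_natDegree_of_ne_zero (by simp [hk]))
      have hdeg : p.degree = (Polynomial.X ^ k : Polynomial ℝ).degree := by
        rw [Polynomial.degree_X_pow, Polynomial.degree_eq_natDegree, hnd]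
        rintro rfl
        simp at hk
      have := Polynomial.div_tendsto_atTop_leadingCoeff_div_of_degree_eq p (Polynomial.X ^ k) hdeg
      simpa [Polynomial.leadingCoeff, hnd, hk] using this
    exact le_of_tendsto hlim (Filter.eventually_atTop.2 ⟨1, fun X hX => hb X hX⟩)
  have h1 : 1 ≤ 2 * N * 22 ^ (2 * k) := by
    by_contra hcon
    push Not at hcon
    have h2 : 2 * N < ((1:ℝ) / 22 ^ k) ^ 2 := by
      rw [div_pow, one_pow, lt_div_iff₀ (by positivity), ← pow_mul, mul_comm k 2]
      exact hcon
    have h3 : √(2 * N) < 1 / 22 ^ k := by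
      rw [Real.sqrt_lt' (by positivity)]; exact h2
    obtain ⟨δ, hδ1, hδ2⟩ := exists_between h3
    have hδ0 : 0 < δ := (Real.sqrt_nonneg _).trans_lt hδ1
    have h4 := key δ hδ0 ((Real.sqrt_le_left hδ0.le).1 hδ1.le)
    rw [lt_div_iff₀ (by positivity)] at hδ2
    linarith
  have h2 : (968:ℝ) ^ k = 2 ^ k * 22 ^ (2 * k) := by
    rw [pow_mul, ← mul_pow]; norm_num
  have h3 : (2:ℝ) ≤ 2 ^ k := by
    calc (2:ℝ) = 2 ^ 1 := by norm_num
      _ ≤ 2 ^ k := pow_le_pow_right₀ (by norm_num) hk0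
  rw [one_div, inv_pow, inv_le_iff_one_le_mul₀ (by positivity), h2]
  refine h1.trans ?_
  calc 2 * N * 22 ^ (2 * k) ≤ 2 ^ k * N * 22 ^ (2 * k) := by gcongr
    _ = _ := by ring

lemma polyInt_sq_pos {p : Polynomial ℝ} (hp : p ≠ 0) : 0 < polyInt (p * p) := by
  have h := polyInt_sq_ge (p := Polynomial.C p.leadingCoeff⁻¹ * p) (k := p.natDegree)
    (Polynomial.natDegree_C_mul_le _ _)
    (by rw [Polynomial.coeff_C_mul]
        exact inv_mul_cancel₀ (Polynomial.leadingCoeff_ne_zero.2 hp))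
  have h2 : Polynomial.C p.leadingCoeff⁻¹ * p * (Polynomial.C p.leadingCoeff⁻¹ * p) =
      (p.leadingCoeff⁻¹ ^ 2) • (p * p) := by
    rw [Polynomial.smul_eq_C_mul, map_pow]; ring
  rw [h2, map_smul, smul_eq_mul] at h
  have h3 : 0 < p.leadingCoeff⁻¹ ^ 2 * polyInt (p * p) := lt_of_lt_of_le (by positivity) h
  exact pos_of_mul_pos_right h3 (sq_nonneg _)

/-- Existence of monic orthogonal polynomials on `[0, 1]` in each degree. -/
lemma exists_orthogonal (k : ℕ) : ∃ R : Polynomial ℝ, R.natDegree ≤ k ∧ R.coeff k = 1 ∧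
    ∀ p : Polynomial ℝ, p.degree < k → polyInt (p * R) = 0 := by
  let W := Polynomial.degreeLT ℝ k
  have : FiniteDimensional ℝ W :=
    (Polynomial.degreeLTEquiv ℝ k).symm.finiteDimensional
  let T : W →ₗ[ℝ] Module.Dual ℝ W :=
    LinearMap.mk₂ ℝ (fun q p : W => polyInt ((p : Polynomial ℝ) * q))
      (fun a b c => by simp [mul_add]) (fun c a b => by simp)
      (fun a b c => by simp [add_mul]) (fun c a b => by simp)
  have hT : Function.Injective T := by
    rw [injective_iff_map_eq_zero]
    intro q hq
    by_contra hne
    have h1 : T q q = 0 := by rw [hq]; rfl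
    have h2 : polyInt ((q : Polynomial ℝ) * q) = 0 := h1
    exact (polyInt_sq_pos (p := q) (by simpa using hne)).ne' h2
  have hTs : Function.Surjective T :=
    (LinearMap.injective_iff_surjective_of_finrank_eq_finrank
      (Subspace.dual_finrank_eq (K := ℝ) (V := W)).symm).1 hT
  let ℓ : Module.Dual ℝ W :=
    (polyInt ∘ₗ LinearMap.mulRight ℝ (Polynomial.X ^ k)) ∘ₗ W.subtype
  obtain ⟨q, hq⟩ := hTs ℓ
  have hqd : (q : Polynomial ℝ).degree < k := Polynomial.mem_degreeLT.1 q.2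
  refine ⟨Polynomial.X ^ k - (q : Polynomial ℝ), ?_, ?_, ?_⟩
  · apply Polynomial.natDegree_le_of_degree_le
    refine (Polynomial.degree_sub_le _ _).trans (max_le ?_ hqd.le)
    exact Polynomial.degree_X_pow_le k
  · rw [Polynomial.coeff_sub, Polynomial.coeff_eq_zero_of_degree_lt hqd]
    simp
  · intro p hp
    have h1 : T q ⟨p, Polynomial.mem_degreeLT.2 hp⟩ = ℓ ⟨p, Polynomial.mem_degreeLT.2 hp⟩ := by
      rw [hq]
    have h2 : polyInt (p * q) = polyInt (p * Polynomial.X ^ k) := h1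
    rw [mul_sub, map_sub, h2, sub_self]

/-- The monic orthogonal polynomial of degree `k` for Lebesgue measure on `[0, 1]`. -/
def orthoPoly (k : ℕ) : Polynomial ℝ := (exists_orthogonal k).choose

lemma orthoPoly_natDegree (k : ℕ) : (orthoPoly k).natDegree ≤ k :=
  (exists_orthogonal k).choose_spec.1

lemma orthoPoly_coeff (k : ℕ) : (orthoPoly k).coeff k = 1 :=
  (exists_orthogonal k).choose_spec.2.1

lemma orthoPoly_lt (k : ℕ) {p : Polynomial ℝ} (hp : p.degree < k) :
    polyInt (p * orthoPoly k) = 0 :=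
  (exists_orthogonal k).choose_spec.2.2 p hp

lemma orthoPoly_eq (k : ℕ) {p : Polynomial ℝ} (hp : p.natDegree ≤ k) :
    polyInt (p * orthoPoly k) = p.coeff k * polyInt (orthoPoly k * orthoPoly k) := by
  have h1 : (p - Polynomial.C (p.coeff k) * orthoPoly k).degree < k := by
    rw [Polynomial.degree_lt_iff_coeff_zero]
    intro m hm
    rw [Polynomial.coeff_sub, Polynomial.coeff_C_mul]
    rcases hm.eq_or_lt with rfl | hm
    · rw [orthoPoly_coeff]; ring
    · rw [Polynomial.coeff_eq_zero_of_natDegree_lt (hp.trans_lt hm),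
        Polynomial.coeff_eq_zero_of_natDegree_lt ((orthoPoly_natDegree k).trans_lt hm)]
      ring
  have h2 := orthoPoly_lt k h1
  rw [sub_mul, map_sub, mul_assoc, ← Polynomial.smul_eq_C_mul, map_smul, smul_eq_mul] at h2
  linarith

/-- The product `∏ⱼ R_{uⱼ}(yⱼ)` of orthogonal polynomials. -/
def orthoProd {n : ℕ} (u : Fin n →₀ ℕ) (y : Fin n → ℝ) : ℝ := ∏ j, (orthoPoly (u j)).eval (y j)

lemma continuous_orthoProd {n : ℕ} (u : Fin n →₀ ℕ) : Continuous (orthoProd u) := by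
  unfold orthoProd
  fun_prop

/-- The squared `L²`-norm of `orthoProd u`. -/
def orthoNorm {n : ℕ} (u : Fin n →₀ ℕ) : ℝ := ∏ j, polyInt (orthoPoly (u j) * orthoPoly (u j))

lemma orthoNorm_ge {n : ℕ} (u : Fin n →₀ ℕ) : (1 / 968 : ℝ) ^ (∑ j, u j) ≤ orthoNorm u := by
  rw [← Finset.prod_pow_eq_pow_sum]
  apply Finset.prod_le_prod (fun _ _ => by positivity)
  intro j _
  exact polyInt_sq_ge (orthoPoly_natDegree _) (orthoPoly_coeff _)

lemma integral_prod_orthoProd {n : ℕ} (P : Fin n → Polynomial ℝ) (u : Fin n →₀ ℕ) :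
    ∫ y, (∏ j, (P j).eval (y j)) * orthoProd u y ∂(cubeM n) =
      ∏ j, polyInt (P j * orthoPoly (u j)) := by
  unfold orthoProd cubeM
  simp only [← Finset.prod_mul_distrib]
  rw [integral_fintype_prod_eq_prod (fun j y => (P j).eval y * (orthoPoly (u j)).eval y)]
  simp [polyInt_apply]

/-- A monomial-type product whose multidegree `v` differs from `u`, with `|v| ≤ |u|`, is
orthogonal to `orthoProd u`, because `v j < u j` for some `j`. -/
lemma integral_prod_orthoProd_eq {n : ℕ} (P : Fin n → Polynomial ℝ) (u v : Fin n →₀ ℕ)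
    (hP : ∀ j, (P j).natDegree ≤ v j) (huv : ∑ j, v j ≤ ∑ j, u j) :
    ∫ y, (∏ j, (P j).eval (y j)) * orthoProd u y ∂(cubeM n) =
      if v = u then (∏ j, (P j).coeff (u j)) * orthoNorm u else 0 := by
  rw [integral_prod_orthoProd]
  split_ifs with h
  · subst h
    rw [orthoNorm, ← Finset.prod_mul_distrib]
    exact Finset.prod_congr rfl fun j _ => orthoPoly_eq _ (hP j)
  · have : ∃ j, v j < u j := by
      by_contra hcon
      push Not at hcon
      have h1 : ∀ j ∈ Finset.univ, u j = v j :=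
        (Finset.sum_eq_sum_iff_of_le fun j _ => hcon j).1
          (le_antisymm (Finset.sum_le_sum fun j _ => hcon j) huv)
      exact h (Finsupp.ext fun j => (h1 j (Finset.mem_univ j)).symm)
    obtain ⟨j, hj⟩ := this
    refine Finset.prod_eq_zero (Finset.mem_univ j) (orthoPoly_lt _ ?_)
    exact (Polynomial.degree_le_natDegree).trans_lt (by exact_mod_cast (hP j).trans_lt hj)

/-- The polynomial `f` on the box `a + ∏ [0, Lⱼ]`, in coordinates of the unit cube. -/
def boxFun {n : ℕ} (f : MvPolynomial (Fin n) ℝ) (a L : Fin n → ℝ) (y : Fin n → ℝ) : ℝ :=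
  MvPolynomial.eval (fun j => a j + L j * y j) f

lemma polyOnLines_boxFun {n : ℕ} (f : MvPolynomial (Fin n) ℝ) (a L : Fin n → ℝ) :
    PolyOnLines f.totalDegree (boxFun f a L) := by
  constructor
  · unfold boxFun
    exact f.continuous_eval.comp (by fun_prop)
  · intro α β
    refine ⟨MvPolynomial.aeval (fun j => Polynomial.C (a j + L j * α j) +
      Polynomial.C (L j * β j) * Polynomial.X) f, ?_, fun t => ?_⟩
    · rw [MvPolynomial.aeval_def, MvPolynomial.eval₂_eq']
      apply Polynomial.natDegree_sum_le_of_forall_le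
      intro u hu
      refine (Polynomial.natDegree_C_mul_le _ _).trans ?_
      refine (Polynomial.natDegree_prod_le _ _).trans ?_
      have h1 : (∑ j, u j) ≤ f.totalDegree := by
        have := MvPolynomial.le_totalDegree hu
        rwa [Finsupp.sum_fintype _ _ (fun _ => rfl)] at this
      refine (Finset.sum_le_sum fun j _ => ?_).trans h1
      refine Polynomial.natDegree_pow_le.trans ?_
      have : (Polynomial.C (a j + L j * α j) +
        Polynomial.C (L j * β j) * Polynomial.X : Polynomial ℝ).natDegree ≤ 1 := by
        rw [add_comm]; exact Polynomial.natDegree_linear_le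
      calc u j * _ ≤ u j * 1 := by gcongr
        _ = u j := mul_one _
    · rw [← Polynomial.coe_evalRingHom, MvPolynomial.aeval_def, MvPolynomial.hom_eval₂]
      unfold boxFun
      rw [← MvPolynomial.eval₂_id]
      congr 1
      · ext; simp
      · ext j; simp; ring

/-- The support of the leading homogeneous part of `f`. -/
def topSupp {n : ℕ} (f : MvPolynomial (Fin n) ℝ) : Finset (Fin n →₀ ℕ) :=
  f.support.filter fun u => (u.sum fun _ e => e) = f.totalDegree

lemma sum_of_mem_topSupp {n : ℕ} {f : MvPolynomial (Fin n) ℝ} {u : Fin n →₀ ℕ}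
    (hu : u ∈ topSupp f) : ∑ j, u j = f.totalDegree := by
  have := (Finset.mem_filter.1 hu).2
  rwa [Finsupp.sum_fintype _ _ (fun _ => rfl)] at this

/-- Only the monomial `u` of `f` contributes: all others of degree at most `|u|` are orthogonal to
`orthoProd u`, and so are constants since `|u| ≥ 1`. -/
lemma integral_boxFun_orthoProd {n : ℕ} {f : MvPolynomial (Fin n) ℝ} (hf : 1 ≤ f.totalDegree)
    (a L : Fin n → ℝ) (m : ℝ) {u : Fin n →₀ ℕ} (hu : u ∈ topSupp f) :
    ∫ y, (boxFun f a L y - m) * orthoProd u y ∂(cubeM n) =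
      f.coeff u * (∏ j, L j ^ u j) * orthoNorm u := by
  have hus := sum_of_mem_topSupp hu
  set P : ℕ → Fin n → Polynomial ℝ := fun i j =>
    (Polynomial.C (L j) * Polynomial.X + Polynomial.C (a j)) ^ i with hPdef
  have hPe : ∀ i j t, (P i j).eval t = (a j + L j * t) ^ i := by
    intro i j t; simp [hPdef]; ring
  have hPd : ∀ i j, (P i j).natDegree ≤ i := by
    intro i j
    refine Polynomial.natDegree_pow_le.trans ?_
    have := Polynomial.natDegree_linear_le (a := L j) (b := a j)
    calc i * _ ≤ i * 1 := by gcongr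
      _ = i := mul_one _
  have hPc : ∀ i j, (P i j).coeff i = L j ^ i := by
    intro i j
    have h := Polynomial.coeff_pow_of_natDegree_le (m := i)
      (Polynomial.natDegree_linear_le (a := L j) (b := a j))
    rw [mul_one] at h
    rw [hPdef]
    simpa using h
  have hcP : ∀ v : Fin n →₀ ℕ, Continuous fun y : Fin n → ℝ =>
      (∏ j, (P (v j) j).eval (y j)) * orthoProd u y := fun v =>
    (continuous_finsetProd _ fun j _ => (P (v j) j).continuous.comp (continuous_apply j)).mul
      (continuous_orthoProd u)
  have h1 : ∀ y, (boxFun f a L y - m) * orthoProd u y =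
      (∑ v ∈ f.support, f.coeff v * ((∏ j, (P (v j) j).eval (y j)) * orthoProd u y)) -
        m * ((∏ j, (P ((0 : Fin n →₀ ℕ) j) j).eval (y j)) * orthoProd u y) := by
    intro y
    unfold boxFun
    rw [MvPolynomial.eval_eq', sub_mul, Finset.sum_mul]
    simp [hPe, mul_assoc]
  simp only [h1]
  rw [integral_sub, integral_finsetSum, integral_const_mul]
  · simp only [integral_const_mul]
    rw [integral_prod_orthoProd_eq _ u 0 (fun j => hPd _ _) (by simp), if_neg, mul_zero, sub_zero,
      Finset.sum_eq_single u]
    · rw [integral_prod_orthoProd_eq _ u u (fun j => hPd _ _) le_rfl, if_pos rfl]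
      simp [hPc, mul_assoc]
    · intro v hv hvu
      rw [integral_prod_orthoProd_eq _ u v (fun j => hPd _ _), if_neg hvu, mul_zero]
      rw [hus]
      have := MvPolynomial.le_totalDegree hv
      rwa [Finsupp.sum_fintype _ _ (fun _ => rfl)] at this
    · intro h
      exact absurd (Finset.mem_filter.1 hu).1 h
    · rintro rfl
      simp at hus
      omega
  · intro v _
    exact (integrable_cubeM (hcP v)).const_mul _
  · exact integrable_finsetSum _ fun v _ => (integrable_cubeM (hcP v)).const_mul _
  · exact (integrable_cubeM (hcP 0)).const_mul _

lemma integral_orthoProd_mul {n : ℕ} {f : MvPolynomial (Fin n) ℝ} {u v : Fin n →₀ ℕ}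
    (hu : u ∈ topSupp f) (hv : v ∈ topSupp f) :
    ∫ y, orthoProd v y * orthoProd u y ∂(cubeM n) = if v = u then orthoNorm u else 0 := by
  have := integral_prod_orthoProd_eq (fun j => orthoPoly (v j)) u v
    (fun j => orthoPoly_natDegree _) (by rw [sum_of_mem_topSupp hu, sum_of_mem_topSupp hv])
  rw [show (∫ y, orthoProd v y * orthoProd u y ∂(cubeM n)) = _ from this]
  split_ifs with h
  · subst h; simp [orthoPoly_coeff]
  · rfl

/-- The `ℓ²`-norm of the leading coefficients of `f(a + L y)` as a polynomial in `y`. -/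
def boxNorm {n : ℕ} (f : MvPolynomial (Fin n) ℝ) (L : Fin n → ℝ) : ℝ :=
  √(∑ u ∈ topSupp f, (f.coeff u * ∏ j, L j ^ u j) ^ 2)

/-- Bessel's inequality for the orthogonal system `orthoProd u`, `|u| = deg f`. -/
lemma variance_ge {n : ℕ} {f : MvPolynomial (Fin n) ℝ} (hf : 1 ≤ f.totalDegree)
    (a L : Fin n → ℝ) (m : ℝ) :
    ((1 / 32) ^ f.totalDegree * boxNorm f L) ^ 2 ≤
      ∫ y, (boxFun f a L y - m) ^ 2 ∂(cubeM n) := by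
  set c : (Fin n →₀ ℕ) → ℝ := fun u => f.coeff u * ∏ j, L j ^ u j with hc
  set g : (Fin n → ℝ) → ℝ := fun y => boxFun f a L y - m with hg
  have hgc : Continuous g := (polyOnLines_boxFun f a L).cont.sub continuous_const
  set r : (Fin n → ℝ) → ℝ := fun y => ∑ u ∈ topSupp f, c u * orthoProd u y with hr
  have hrc : Continuous r :=
    continuous_finsetSum _ fun u _ => continuous_const.mul (continuous_orthoProd u)
  have h1 : ∀ G : (Fin n → ℝ) → ℝ, Continuous G → ∫ y, G y * r y ∂(cubeM n) =
      ∑ u ∈ topSupp f, c u * ∫ y, G y * orthoProd u y ∂(cubeM n) := by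
    intro G hG
    simp only [hr, Finset.mul_sum]
    rw [integral_finsetSum]
    · refine Finset.sum_congr rfl fun u _ => ?_
      rw [← integral_const_mul]
      congr 1; ext y; ring
    · intro u _
      exact integrable_cubeM (hG.mul (continuous_const.mul (continuous_orthoProd u)))
  have h2 : ∫ y, g y * r y ∂(cubeM n) = ∑ u ∈ topSupp f, c u ^ 2 * orthoNorm u := by
    rw [h1 g hgc]
    refine Finset.sum_congr rfl fun u hu => ?_
    rw [integral_boxFun_orthoProd hf a L m hu]
    ring
  have h3 : ∫ y, r y * r y ∂(cubeM n) = ∑ u ∈ topSupp f, c u ^ 2 * orthoNorm u := by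
    rw [h1 r hrc]
    refine Finset.sum_congr rfl fun u hu => ?_
    have h4 : ∫ y, r y * orthoProd u y ∂(cubeM n) = ∫ y, orthoProd u y * r y ∂(cubeM n) := by
      simp only [mul_comm]
    rw [h4, h1 _ (continuous_orthoProd u), Finset.sum_eq_single u]
    · rw [integral_orthoProd_mul hu hu, if_pos rfl]; ring
    · intro v hv hvu
      rw [integral_orthoProd_mul hv hu, if_neg hvu.symm, mul_zero]
    · intro h; exact absurd hu h
  have h5 : 0 ≤ ∫ y, (g y - r y) ^ 2 ∂(cubeM n) := integral_nonneg fun y => sq_nonneg _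
  have h6 : ∫ y, (g y - r y) ^ 2 ∂(cubeM n) = (∫ y, g y ^ 2 ∂(cubeM n)) -
      2 * (∫ y, g y * r y ∂(cubeM n)) + ∫ y, r y * r y ∂(cubeM n) := by
    rw [← integral_const_mul, ← integral_sub, ← integral_add]
    · congr 1; ext y; ring
    · exact integrable_cubeM (by fun_prop)
    · exact integrable_cubeM (by fun_prop)
    · exact integrable_cubeM (by fun_prop)
    · exact integrable_cubeM (by fun_prop)
  have h7 : ((1 / 32) ^ f.totalDegree * boxNorm f L) ^ 2 ≤
      ∑ u ∈ topSupp f, c u ^ 2 * orthoNorm u := by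
    rw [mul_pow, boxNorm, Real.sq_sqrt (Finset.sum_nonneg fun _ _ => sq_nonneg _), Finset.mul_sum]
    apply Finset.sum_le_sum
    intro u hu
    rw [mul_comm]
    gcongr
    refine le_trans ?_ (orthoNorm_ge u)
    rw [sum_of_mem_topSupp hu, ← pow_mul, mul_comm, pow_mul]
    gcongr
    norm_num
  linarith

/-! ### The estimate on boxes -/

/-- `∫ φ'(F)` over the cube for a polynomial with standard deviation at least `V`. -/
lemma cube_estimate {n D : ℕ} (hn : 0 < n) (hD : 1 ≤ D) {F : (Fin n → ℝ) → ℝ}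
    (hF : PolyOnLines D F) {V : ℝ} (hV : 0 < V)
    (h : ∀ m, V ^ 2 ≤ ∫ x, (F x - m) ^ 2 ∂(cubeM n)) {φ φ' : ℝ → ℝ} {B0 B1 : ℝ}
    (hφ' : Continuous φ') (hφ : ∀ t, HasDerivAt φ (φ' t) t) (hB0 : ∀ t, |φ t| ≤ B0)
    (hB1 : ∀ t, |φ' t| ≤ B1) (hB0p : 0 < B0) (hB1p : 0 < B1) :
    |∫ x, φ' (F x) ∂(cubeM n)| ≤
      10 ^ 13 * min (D : ℝ) n * (B1 * (B0 / (V * B1)) ^ (1 / (D : ℝ))) := by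
  have hn0 : (1:ℝ) ≤ n := by exact_mod_cast hn
  have hD0 : (1:ℝ) ≤ D := by exact_mod_cast hD
  have hN : 1 ≤ min (D : ℝ) n := le_min hD0 hn0
  set N := min (D : ℝ) n with hNdef
  have hP0 : 0 < (2182400 * N) ^ D := by positivity
  obtain ⟨m, hm, hm'⟩ := exists_spread hn hD hF hV h
  have h1 := cube_osc_opt hD hF (by positivity) hm hm' φ φ' hφ' hφ hB0 hB1 hB0p hB1p
  refine h1.trans ?_
  have h2 : B0 / (V / (10 * (2182400 * N) ^ D) * B1) =
      10 * (2182400 * N) ^ D * (B0 / (V * B1)) := by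
    field_simp
  have h3 : ((2182400 * N) ^ D) ^ (1 / (D : ℝ)) = 2182400 * N := by
    rw [one_div, Real.pow_rpow_inv_natCast (by positivity) (by omega)]
  have h4 : (10:ℝ) ^ (1 / (D : ℝ)) ≤ 10 := by
    calc (10:ℝ) ^ (1 / (D : ℝ)) ≤ 10 ^ (1:ℝ) :=
          Real.rpow_le_rpow_of_exponent_le (by norm_num) (by rw [div_le_one (by positivity)]; exact hD0)
      _ = 10 := Real.rpow_one _
  rw [h2, Real.mul_rpow (by positivity) (by positivity), Real.mul_rpow (by norm_num) hP0.le, h3]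
  have h5 : 0 ≤ (B0 / (V * B1)) ^ (1 / (D : ℝ)) := by positivity
  calc 300000 * B1 * ((10:ℝ) ^ (1 / (D : ℝ)) * (2182400 * N) * (B0 / (V * B1)) ^ (1 / (D : ℝ)))
      ≤ 300000 * B1 * (10 * (2182400 * N) * (B0 / (V * B1)) ^ (1 / (D : ℝ))) := by gcongr
    _ = 6547200000000 * N * (B1 * (B0 / (V * B1)) ^ (1 / (D : ℝ))) := by ring
    _ ≤ _ := by gcongr; norm_num

/-- The average exponent of the variable `xⱼ` in the leading part of `f`, relative to the
degree; the monomials are weighted by their squared coefficients. -/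
def avgExp {n : ℕ} (f : MvPolynomial (Fin n) ℝ) (j : Fin n) : ℝ :=
  ∑ u ∈ topSupp f, f.coeff u ^ 2 / leadingL2 f ^ 2 * (u j / f.totalDegree)

lemma avgExp_nonneg {n : ℕ} (f : MvPolynomial (Fin n) ℝ) (j : Fin n) : 0 ≤ avgExp f j :=
  Finset.sum_nonneg fun _ _ => by positivity

lemma leadingL2_sq {n : ℕ} (f : MvPolynomial (Fin n) ℝ) :
    leadingL2 f ^ 2 = ∑ u ∈ topSupp f, f.coeff u ^ 2 :=
  Real.sq_sqrt (Finset.sum_nonneg fun _ _ => sq_nonneg _)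

lemma leadingL2_pos {n : ℕ} {f : MvPolynomial (Fin n) ℝ} (hf : 1 ≤ f.totalDegree) :
    0 < leadingL2 f := by
  have hne : f.support.Nonempty := by
    rw [Finset.nonempty_iff_ne_empty]
    intro h
    rw [MvPolynomial.support_eq_empty] at h
    rw [h] at hf
    simp at hf
  obtain ⟨u, hu, hus⟩ := f.support.exists_mem_eq_sup hne (fun u => u.sum fun _ e => e)
  have hu' : u ∈ topSupp f := Finset.mem_filter.2 ⟨hu, hus.symm⟩
  apply Real.sqrt_pos.2
  have h1 : 0 < f.coeff u ^ 2 := by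
    have := MvPolynomial.mem_support_iff.1 hu
    positivity
  exact h1.trans_le (Finset.single_le_sum (f := fun u => f.coeff u ^ 2)
    (fun _ _ => sq_nonneg _) hu')

lemma sum_avgExp {n : ℕ} {f : MvPolynomial (Fin n) ℝ} (hf : 1 ≤ f.totalDegree) :
    ∑ j, avgExp f j = 1 := by
  have h0 := leadingL2_pos hf
  have hD : (f.totalDegree : ℝ) ≠ 0 := by positivity
  unfold avgExp
  rw [Finset.sum_comm]
  have : ∀ u ∈ topSupp f, ∑ j, f.coeff u ^ 2 / leadingL2 f ^ 2 * (u j / f.totalDegree : ℝ) =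
      f.coeff u ^ 2 / leadingL2 f ^ 2 := by
    intro u hu
    rw [← Finset.mul_sum, ← Finset.sum_div]
    have h1 : (∑ j, (u j : ℝ)) = f.totalDegree := by exact_mod_cast sum_of_mem_topSupp hu
    rw [h1, div_self hD, mul_one]
  rw [Finset.sum_congr rfl this, ← Finset.sum_div, ← leadingL2_sq, div_self (by positivity)]

/-- The weighted arithmetic-geometric mean inequality applied to the leading coefficients. -/
lemma boxNorm_ge {n : ℕ} {f : MvPolynomial (Fin n) ℝ} (hf : 1 ≤ f.totalDegree) {L : Fin n → ℝ}
    (hL : ∀ j, 0 < L j) :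
    leadingL2 f * (∏ j, L j ^ avgExp f j) ^ f.totalDegree ≤ boxNorm f L := by
  have h0 := leadingL2_pos hf
  have hD : (f.totalDegree : ℝ) ≠ 0 := by positivity
  have hamgm := Real.geom_mean_le_arith_mean_weighted (topSupp f)
    (fun u => f.coeff u ^ 2 / leadingL2 f ^ 2) (fun u => (∏ j, L j ^ u j) ^ 2)
    (fun _ _ => by positivity)
    (by rw [← Finset.sum_div, ← leadingL2_sq, div_self (by positivity)])
    (fun _ _ => by positivity)
  have h1 : ∏ u ∈ topSupp f, ((∏ j, L j ^ u j) ^ 2) ^ (f.coeff u ^ 2 / leadingL2 f ^ 2) =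
      ((∏ j, L j ^ avgExp f j) ^ f.totalDegree) ^ 2 := by
    have hprod : 0 < ∏ j, L j ^ avgExp f j :=
      Finset.prod_pos fun j _ => Real.rpow_pos_of_pos (hL j) _
    have hpu : ∀ u : Fin n →₀ ℕ, 0 < ∏ j, L j ^ u j := fun u =>
      Finset.prod_pos fun j _ => pow_pos (hL j) _
    apply Real.log_injOn_pos
    · exact Finset.prod_pos fun u _ => Real.rpow_pos_of_pos (pow_pos (hpu u) 2) _
    · exact pow_pos (pow_pos hprod _) 2
    · rw [Real.log_prod fun u _ => (Real.rpow_pos_of_pos (pow_pos (hpu u) 2) _).ne']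
      rw [Real.log_pow, Real.log_pow, Real.log_prod fun j _ => (Real.rpow_pos_of_pos (hL j) _).ne']
      have h2 : ∀ u ∈ topSupp f,
          Real.log (((∏ j, L j ^ u j) ^ 2) ^ (f.coeff u ^ 2 / leadingL2 f ^ 2)) =
          ∑ j, 2 * (f.totalDegree * (f.coeff u ^ 2 / leadingL2 f ^ 2 * (u j / f.totalDegree) *
            Real.log (L j))) := by
        intro u _
        rw [Real.log_rpow (pow_pos (hpu u) 2), Real.log_pow,
          Real.log_prod fun j _ => (pow_pos (hL j) _).ne', Finset.mul_sum, Finset.mul_sum]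
        refine Finset.sum_congr rfl fun j _ => ?_
        rw [Real.log_pow]
        field_simp
        push_cast
        ring
      rw [Finset.sum_congr rfl h2, Finset.sum_comm]
      push_cast
      rw [Finset.mul_sum, Finset.mul_sum]
      refine Finset.sum_congr rfl fun j _ => ?_
      rw [Real.log_rpow (hL j), avgExp, Finset.sum_mul, Finset.mul_sum, Finset.mul_sum]
  rw [h1] at hamgm
  apply Real.le_sqrt_of_sq_le
  rw [mul_pow]
  calc leadingL2 f ^ 2 * ((∏ j, L j ^ avgExp f j) ^ f.totalDegree) ^ 2
      ≤ leadingL2 f ^ 2 * ∑ u ∈ topSupp f,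
          f.coeff u ^ 2 / leadingL2 f ^ 2 * (∏ j, L j ^ u j) ^ 2 := by gcongr
    _ = _ := by
      rw [Finset.mul_sum]
      refine Finset.sum_congr rfl fun u _ => ?_
      field_simp

/-- The estimate on the box `a + ∏ [0, Lⱼ]`, with the dependence on the side lengths separated. -/
lemma box_estimate {n : ℕ} (hn : 0 < n) {f : MvPolynomial (Fin n) ℝ} (hf : 1 ≤ f.totalDegree)
    {φ φ' : ℝ → ℝ} {B0 B1 : ℝ}
    (hφ' : Continuous φ') (hφ : ∀ t, HasDerivAt φ (φ' t) t) (hB0 : ∀ t, |φ t| ≤ B0)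
    (hB1 : ∀ t, |φ' t| ≤ B1) (hB0p : 0 < B0) (hB1p : 0 < B1)
    (a L : Fin n → ℝ) (hL : ∀ j, 0 < L j) :
    |∫ x, φ' (boxFun f a L x) ∂(cubeM n)| ≤
      10 ^ 15 * min (f.totalDegree : ℝ) n *
        (B1 * (B0 / (leadingL2 f * B1)) ^ (1 / (f.totalDegree : ℝ))) *
        ∏ j, L j ^ (-avgExp f j) := by
  set D := f.totalDegree with hDdef
  have h0 := leadingL2_pos hf
  set q := ∏ j, L j ^ avgExp f j with hq
  have hq0 : 0 < q := Finset.prod_pos fun j _ => Real.rpow_pos_of_pos (hL j) _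
  have hqi : ∏ j, L j ^ (-avgExp f j) = q⁻¹ := by
    rw [hq, ← Finset.prod_inv_distrib]
    exact Finset.prod_congr rfl fun j _ => Real.rpow_neg (hL j).le _
  set V := (1 / 32) ^ D * (leadingL2 f * q ^ D) with hV
  have hV0 : 0 < V := by positivity
  have h1 := cube_estimate hn hf (polyOnLines_boxFun f a L) hV0 (fun m => by
    refine le_trans ?_ (variance_ge hf a L m)
    have := boxNorm_ge hf hL
    rw [hV]
    gcongr) hφ' hφ hB0 hB1 hB0p hB1p
  refine h1.trans ?_
  have h2 : B0 / (V * B1) = (32 * q⁻¹) ^ D * (B0 / (leadingL2 f * B1)) := by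
    rw [hV, mul_pow, inv_pow, div_pow, one_pow]
    field_simp
  have h3 : ((32 * q⁻¹) ^ D) ^ (1 / (D : ℝ)) = 32 * q⁻¹ := by
    rw [one_div, Real.pow_rpow_inv_natCast (by positivity) (by omega)]
  rw [h2, Real.mul_rpow (by positivity) (by positivity), h3, hqi]
  have h5 : 0 ≤ (B0 / (leadingL2 f * B1)) ^ (1 / (D : ℝ)) := by positivity
  calc 10 ^ 13 * min (D : ℝ) n * (B1 * (32 * q⁻¹ * (B0 / (leadingL2 f * B1)) ^ (1 / (D : ℝ))))
      = 320000000000000 * min (D : ℝ) n * (B1 * (B0 / (leadingL2 f * B1)) ^ (1 / (D : ℝ))) * q⁻¹ := by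
        ring
    _ ≤ _ := by gcongr; norm_num

/-! ### Integration against functions of bounded variation -/

lemma abs_sInt_le (s : SignedMeasure ℝ) {ψ : ℝ → ℝ} {β : ℝ} (hβ : ∀ x, |ψ x| ≤ β) :
    |sInt s ψ| ≤ sTV s * β := by
  have h : ∀ μ : Measure ℝ, IsFiniteMeasure μ → |∫ x, ψ x ∂μ| ≤ β * μ.real Set.univ := by
    intro μ _
    exact norm_integral_le_of_norm_le_const (f := ψ) (C := β) (Filter.Eventually.of_forall fun x => hβ x)
  have h1 := h s.toJordanDecomposition.posPart inferInstance
  have h2 := h s.toJordanDecomposition.negPart inferInstance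
  have h3 : sTV s = s.toJordanDecomposition.posPart.real Set.univ +
      s.toJordanDecomposition.negPart.real Set.univ := by
    unfold sTV SignedMeasure.totalVariation
    rw [Measure.add_apply, ENNReal.toReal_add (measure_ne_top _ _) (measure_ne_top _ _)]
    rfl
  unfold sInt
  rw [h3]
  refine (abs_sub _ _).trans ?_
  linarith

lemma sTV_nonneg (s : SignedMeasure ℝ) : 0 ≤ sTV s := ENNReal.toReal_nonneg

/-- Integration by parts characterising `s` as the distributional derivative of `ρ`. -/
def IsDeriv (ρ : ℝ → ℝ) (s : SignedMeasure ℝ) : Prop :=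
  ∀ ψ : ℝ → ℝ, ContDiff ℝ (⊤ : ℕ∞) ψ → HasCompactSupport ψ →
    (∫ x, ρ x * deriv ψ x) = - sInt s ψ

lemma IsDeriv.abs_le {ρ : ℝ → ℝ} {s : SignedMeasure ℝ} (h : IsDeriv ρ s) {ψ : ℝ → ℝ}
    (hψ : ContDiff ℝ (⊤ : ℕ∞) ψ) (hc : HasCompactSupport ψ) {β : ℝ} (hβ : ∀ x, |ψ x| ≤ β) :
    |∫ x, ρ x * deriv ψ x| ≤ sTV s * β := by
  rw [h ψ hψ hc, abs_neg]
  exact abs_sInt_le s hβ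

/-- Test functions may be `C¹` instead of smooth, by mollification. -/
lemma IsDeriv.abs_le_C1 {ρ : ℝ → ℝ} {s : SignedMeasure ℝ} (h : IsDeriv ρ s) (hρ : Integrable ρ)
    {ψ : ℝ → ℝ} (hψ : ContDiff ℝ 1 ψ) (hc : HasCompactSupport ψ) {β : ℝ}
    (hβ : ∀ x, |ψ x| ≤ β) : |∫ x, ρ x * deriv ψ x| ≤ sTV s * β := by
  have hψ'c : Continuous (deriv ψ) := hψ.continuous_deriv le_rfl
  obtain ⟨M, hM⟩ := hψ'c.bounded_above_of_compact_support hc.deriv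
  have hlip : ∀ x y, |ψ x - ψ y| ≤ M * |x - y| := by
    intro x y
    exact Convex.norm_image_sub_le_of_norm_deriv_le (𝕜 := ℝ) (s := Set.univ)
      (fun z _ => (hψ.differentiable one_ne_zero) z) (fun z _ => hM z) convex_univ trivial trivial
  have hM0 : 0 ≤ M := (norm_nonneg _).trans (hM 0)
  let κ : ℕ → ContDiffBump (0:ℝ) := fun k =>
    ⟨1 / (k + 1) / 2, 1 / (k + 1), by positivity, by
      have : (0:ℝ) < 1 / (k + 1) := by positivity
      linarith⟩
  have hκ : ∀ k, (κ k).rOut = 1 / ((k:ℝ) + 1) := fun k => rfl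
  have hκ0 : Filter.Tendsto (fun k => (κ k).rOut) Filter.atTop (nhds 0) :=
    tendsto_one_div_add_atTop_nhds_zero_nat
  let ψk : ℕ → ℝ → ℝ := fun k => convolution ((κ k).normed volume) ψ (ContinuousLinearMap.lsmul ℝ ℝ) volume
  have hker : ∀ k, LocallyIntegrable ((κ k).normed volume) volume := fun k =>
    ((κ k).continuous_normed).locallyIntegrable
  have hd : ∀ k x, HasDerivAt (ψk k)
      (convolution ((κ k).normed volume) (deriv ψ) (ContinuousLinearMap.lsmul ℝ ℝ) volume x) x :=
    fun k x => hc.hasDerivAt_convolution_right _ (hker k) hψ x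
  have hsm : ∀ k, ContDiff ℝ (⊤ : ℕ∞) (ψk k) := fun k =>
    ((κ k).hasCompactSupport_normed).contDiff_convolution_left _ ((κ k).contDiff_normed)
      hψ.continuous.locallyIntegrable
  have hcs : ∀ k, HasCompactSupport (ψk k) := fun k =>
    HasCompactSupport.convolution _ ((κ k).hasCompactSupport_normed) hc
  have hb : ∀ k x, |ψk k x| ≤ β + M * (1 / ((k:ℝ) + 1)) := by
    intro k x
    have h1 := (κ k).dist_normed_convolution_le (μ := volume) (g := ψ) (x₀ := x)
      (ε := M * (1 / ((k:ℝ) + 1))) hψ.continuous.aestronglyMeasurable (by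
        intro y hy
        rw [Real.dist_eq]
        refine (hlip y x).trans ?_
        gcongr
        rw [Metric.mem_ball, Real.dist_eq, hκ] at hy
        exact hy.le)
    rw [Real.dist_eq] at h1
    have h2 := abs_sub_abs_le_abs_sub (ψk k x) (ψ x)
    linarith [hβ x, show |ψk k x - ψ x| ≤ _ from h1]
  have hbd : ∀ k x, |deriv (ψk k) x| ≤ 3 * M := by
    intro k x
    have h1 := (κ k).dist_normed_convolution_le (μ := volume) (g := deriv ψ) (x₀ := x)
      (ε := 2 * M) hψ'c.aestronglyMeasurable (by
        intro y _
        rw [Real.dist_eq]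
        refine (abs_sub _ _).trans ?_
        have := hM x
        have := hM y
        rw [Real.norm_eq_abs] at *
        linarith)
    rw [Real.dist_eq] at h1
    rw [(hd k x).deriv]
    have h2 := abs_sub_abs_le_abs_sub (convolution ((κ k).normed volume) (deriv ψ)
      (ContinuousLinearMap.lsmul ℝ ℝ) volume x) (deriv ψ x)
    have h3 := hM x
    rw [Real.norm_eq_abs] at h3
    linarith
  have hlim : Filter.Tendsto (fun k => ∫ x, ρ x * deriv (ψk k) x) Filter.atTop
      (nhds (∫ x, ρ x * deriv ψ x)) := by
    refine tendsto_integral_of_dominated_convergence (fun x => |ρ x| * (3 * M)) ?_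
      (hρ.abs.mul_const _) ?_ ?_
    · intro k
      exact hρ.aestronglyMeasurable.mul ((hsm k).continuous_deriv (by simp)).aestronglyMeasurable
    · intro k
      refine Filter.Eventually.of_forall fun x => ?_
      rw [Real.norm_eq_abs, abs_mul]
      exact mul_le_mul_of_nonneg_left (hbd k x) (abs_nonneg _)
    · refine Filter.Eventually.of_forall fun x => Filter.Tendsto.const_mul _ ?_
      simp only [(hd _ x).deriv]
      exact ContDiffBump.convolution_tendsto_right_of_continuous hκ0 hψ'c x
  have hlim2 : Filter.Tendsto (fun k : ℕ => sTV s * (β + M * (1 / ((k:ℝ) + 1)))) Filter.atTop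
      (nhds (sTV s * (β + M * 0))) :=
    ((tendsto_one_div_add_atTop_nhds_zero_nat.const_mul _).const_add _).const_mul _
  rw [mul_zero, add_zero] at hlim2
  exact le_of_tendsto_of_tendsto' hlim.abs hlim2 fun k => h.abs_le (hsm k) (hcs k) (hb k)

/-- Test functions need not have compact support, by truncation. -/
lemma IsDeriv.abs_le_bdd {ρ : ℝ → ℝ} {s : SignedMeasure ℝ} (h : IsDeriv ρ s) (hρ : Integrable ρ)
    {ψ : ℝ → ℝ} (hψ : ContDiff ℝ 1 ψ) {β M : ℝ}
    (hβ : ∀ x, |ψ x| ≤ β) (hM : ∀ x, |deriv ψ x| ≤ M) :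
    |∫ x, ρ x * deriv ψ x| ≤ sTV s * β := by
  let χ : ContDiffBump (0:ℝ) := ⟨1, 2, by norm_num, by norm_num⟩
  have hχs : ContDiff ℝ 1 χ := χ.contDiff
  have hχ'c : Continuous (deriv χ) := hχs.continuous_deriv le_rfl
  obtain ⟨C, hC⟩ := hχ'c.bounded_above_of_compact_support χ.hasCompactSupport.deriv
  have hC0 : 0 ≤ C := (norm_nonneg _).trans (hC 0)
  have hβ0 : 0 ≤ β := (abs_nonneg _).trans (hβ 0)
  have hM0 : 0 ≤ M := (abs_nonneg _).trans (hM 0)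
  have hψ'c : Continuous (deriv ψ) := hψ.continuous_deriv le_rfl
  let ε : ℕ → ℝ := fun k => 1 / ((k:ℝ) + 1)
  have hε : Filter.Tendsto ε Filter.atTop (nhds 0) := tendsto_one_div_add_atTop_nhds_zero_nat
  have hε0 : ∀ k, 0 < ε k := fun k => by positivity
  have hε1 : ∀ k, ε k ≤ 1 := fun k => by
    show 1 / ((k:ℝ) + 1) ≤ 1
    rw [div_le_one (by positivity)]
    linarith [show (0:ℝ) ≤ k by positivity]
  let ψk : ℕ → ℝ → ℝ := fun k x => χ (ε k * x) * ψ x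
  have hd : ∀ k x, HasDerivAt (ψk k)
      (deriv χ (ε k * x) * ε k * ψ x + χ (ε k * x) * deriv ψ x) x := by
    intro k x
    have h1 : HasDerivAt (fun x => ε k * x) (ε k) x := by
      simpa using (hasDerivAt_id x).const_mul (ε k)
    have h2 : HasDerivAt (fun x => χ (ε k * x)) (deriv χ (ε k * x) * ε k) x :=
      HasDerivAt.comp (h₂ := (χ : ℝ → ℝ)) x ((hχs.differentiable one_ne_zero) _).hasDerivAt h1
    exact h2.mul ((hψ.differentiable one_ne_zero) x).hasDerivAt
  have hsm : ∀ k, ContDiff ℝ 1 (ψk k) := fun k =>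
    (hχs.comp (contDiff_const.mul contDiff_id)).mul hψ
  have hcs : ∀ k, HasCompactSupport (ψk k) := by
    intro k
    have : HasCompactSupport fun x => χ (ε k * x) :=
      χ.hasCompactSupport.comp_homeomorph (Homeomorph.mulLeft₀ (ε k) (hε0 k).ne')
    exact this.mul_right
  have hb : ∀ k x, |ψk k x| ≤ β := by
    intro k x
    rw [abs_mul, abs_of_nonneg χ.nonneg]
    exact (mul_le_of_le_one_left (abs_nonneg _) χ.le_one).trans (hβ x)
  have hlim : Filter.Tendsto (fun k => ∫ x, ρ x * deriv (ψk k) x) Filter.atTop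
      (nhds (∫ x, ρ x * deriv ψ x)) := by
    refine tendsto_integral_of_dominated_convergence (fun x => |ρ x| * (C * β + M)) ?_
      (hρ.abs.mul_const _) ?_ ?_
    · intro k
      exact hρ.aestronglyMeasurable.mul ((hsm k).continuous_deriv le_rfl).aestronglyMeasurable
    · intro k
      refine Filter.Eventually.of_forall fun x => ?_
      rw [Real.norm_eq_abs, abs_mul, (hd k x).deriv]
      refine mul_le_mul_of_nonneg_left ((abs_add_le _ _).trans (add_le_add ?_ ?_)) (abs_nonneg _)
      · rw [abs_mul, abs_mul, abs_of_pos (hε0 k)]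
        refine mul_le_mul ?_ (hβ x) (abs_nonneg _) hC0
        exact (mul_le_of_le_one_right (abs_nonneg _) (hε1 k)).trans (hC _)
      · rw [abs_mul, abs_of_nonneg χ.nonneg]
        exact (mul_le_of_le_one_left (abs_nonneg _) χ.le_one).trans (hM x)
    · refine Filter.Eventually.of_forall fun x => Filter.Tendsto.const_mul _ ?_
      simp only [(hd _ x).deriv]
      have h0 : Filter.Tendsto (fun k => ε k * x) Filter.atTop (nhds 0) := by
        simpa using hε.mul_const x
      have h1 : Filter.Tendsto (fun k => deriv χ (ε k * x)) Filter.atTop (nhds (deriv χ 0)) :=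
        (hχ'c.tendsto 0).comp h0
      have h2 : Filter.Tendsto (fun k => χ (ε k * x)) Filter.atTop (nhds 1) := by
        have : χ 0 = 1 := χ.one_of_mem_closedBall (by simp [χ])
        rw [← this]
        exact (χ.continuous.tendsto 0).comp h0
      simpa using ((h1.mul hε).mul_const (ψ x)).add (h2.mul_const (deriv ψ x))
  exact le_of_tendsto hlim.abs (Filter.Eventually.of_forall fun k =>
    h.abs_le_C1 hρ (hsm k) (hcs k) (hb k))

/-- The inf-convolution of `H` with `α|·|` is a Lipschitz approximation of `H`. -/
lemma exists_lipschitz_approx {H : ℝ → ℝ} {α β : ℝ} (hα : 0 ≤ α)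
    (h : ∀ x y, |H x - H y| ≤ α * |x - y| + β) :
    ∃ K : ℝ → ℝ, (∀ x y, |K x - K y| ≤ α * |x - y|) ∧ ∀ x, |H x - K x| ≤ β := by
  have hlow : ∀ x y, H x - β ≤ H y + α * |x - y| := fun x y => by
    have := le_of_abs_le (h x y); linarith
  have hbdd : ∀ x, BddBelow (Set.range fun y => H y + α * |x - y|) := fun x =>
    ⟨H x - β, by rintro _ ⟨y, rfl⟩; exact hlow x y⟩
  have hstep : ∀ x y, (⨅ z, (H z + α * |x - z|)) ≤ (⨅ z, (H z + α * |y - z|)) + α * |x - y| := by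
    intro x y
    rw [← sub_le_iff_le_add]
    refine le_ciInf fun z => ?_
    rw [sub_le_iff_le_add]
    refine (ciInf_le (hbdd x) z).trans ?_
    have : α * |x - z| ≤ α * (|x - y| + |y - z|) := by
      gcongr; exact abs_sub_le x y z
    linarith
  refine ⟨fun x => ⨅ y, (H y + α * |x - y|), fun x y => ?_, fun x => ?_⟩
  · rw [abs_sub_le_iff]
    have h1 := hstep x y
    have h2 := hstep y x
    rw [abs_sub_comm] at h2
    constructor <;> linarith
  · have h1 := ciInf_le (hbdd x) x
    have h2 : H x - β ≤ ⨅ y, (H y + α * |x - y|) := le_ciInf (hlow x)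
    rw [sub_self, abs_zero, mul_zero, add_zero] at h1
    have h3 : 0 ≤ β := by linarith
    rw [abs_le]
    constructor <;> linarith

/-- A Lipschitz function is uniformly approximated by `C¹` functions with the same constant, by
averaging over short intervals. -/
lemma exists_C1_approx {K : ℝ → ℝ} {α : ℝ} (hα : 0 ≤ α) (hK : ∀ x y, |K x - K y| ≤ α * |x - y|)
    {ε : ℝ} (hε : 0 < ε) : ∃ Q Q' : ℝ → ℝ, Continuous Q' ∧ (∀ x, HasDerivAt Q (Q' x) x) ∧
      (∀ x, |Q' x| ≤ α) ∧ ∀ x, |K x - Q x| ≤ α * ε := by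
  have hKc : Continuous K := by
    have : LipschitzWith ⟨α, hα⟩ K := LipschitzWith.of_dist_le_mul fun x y => by
      rw [Real.dist_eq, Real.dist_eq]
      exact hK x y
    exact this.continuous
  have hi : ∀ a b, IntervalIntegrable K volume a b := fun a b => hKc.intervalIntegrable a b
  refine ⟨fun x => ε⁻¹ * ((∫ t in (0:ℝ)..(x + ε), K t) - ∫ t in (0:ℝ)..x, K t),
    fun x => ε⁻¹ * (K (x + ε) - K x), by fun_prop, fun x => ?_, fun x => ?_, fun x => ?_⟩
  · have h1 : ∀ x, HasDerivAt (fun x => ∫ t in (0:ℝ)..x, K t) (K x) x := fun x =>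
      intervalIntegral.integral_hasDerivAt_right (hi _ _)
        (hKc.stronglyMeasurableAtFilter _ _) hKc.continuousAt
    exact (((h1 (x + ε)).comp_add_const x ε).sub (h1 x)).const_mul _
  · rw [abs_mul, abs_of_pos (inv_pos.2 hε), inv_mul_le_iff₀ hε, mul_comm ε]
    simpa [abs_of_pos hε] using hK (x + ε) x
  · simp only
    rw [intervalIntegral.integral_interval_sub_left (hi _ _) (hi _ _)]
    have h1 : K x - ε⁻¹ * ∫ t in x..(x + ε), K t = ε⁻¹ * ∫ t in x..(x + ε), (K x - K t) := by
      rw [intervalIntegral.integral_sub intervalIntegrable_const (hi _ _),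
        intervalIntegral.integral_const]
      simp only [add_sub_cancel_left, smul_eq_mul]
      field_simp
    have h2 := intervalIntegral.norm_integral_le_of_norm_le_const (a := x) (b := x + ε)
      (f := fun t => K x - K t) (C := α * ε) (fun t ht => by
        rw [Set.uIoc_of_le (by linarith)] at ht
        refine (hK x t).trans ?_
        gcongr
        rw [abs_le]
        constructor <;> linarith [ht.1, ht.2])
    rw [add_sub_cancel_left, abs_of_pos hε, Real.norm_eq_abs] at h2
    rw [h1, abs_mul, abs_of_pos (inv_pos.2 hε), inv_mul_le_iff₀ hε]
    linarith

/-- If the primitive of `G` is Lipschitz with constant `α` up to an error `β`, then split it into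
a Lipschitz part, tested against `ρ`, and a small part, tested against the derivative of `ρ`. -/
lemma IsDeriv.integral_le {ρ : ℝ → ℝ} {s : SignedMeasure ℝ} (h : IsDeriv ρ s) (hρ : Integrable ρ)
    {G : ℝ → ℝ} (hG : Continuous G) {M : ℝ} (hGM : ∀ x, |G x| ≤ M) {α β : ℝ} (hα : 0 ≤ α)
    (hαβ : ∀ a b, |∫ t in a..b, G t| ≤ α * |b - a| + β) :
    |∫ x, G x * ρ x| ≤ α * (∫ x, |ρ x|) + sTV s * β := by
  set H : ℝ → ℝ := fun x => ∫ t in (0:ℝ)..x, G t with hH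
  have hi : ∀ a b, IntervalIntegrable G volume a b := fun a b => hG.intervalIntegrable a b
  have hHd : ∀ x, HasDerivAt H (G x) x := fun x =>
      intervalIntegral.integral_hasDerivAt_right (hi _ _)
        (hG.stronglyMeasurableAtFilter _ _) hG.continuousAt
  obtain ⟨K, hK1, hK2⟩ := exists_lipschitz_approx (H := H) (β := β) hα (fun x y => by
    rw [hH]
    simp only
    rw [intervalIntegral.integral_interval_sub_left (hi _ _) (hi _ _)]
    exact hαβ y x)
  have key : ∀ ε : ℝ, 0 < ε → |∫ x, G x * ρ x| ≤
      α * (∫ x, |ρ x|) + sTV s * β + sTV s * α * ε := by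
    intro ε hε
    obtain ⟨Q, Q', hQc, hQd, hQb, hQK⟩ := exists_C1_approx hα hK1 hε
    have hd : ∀ x, HasDerivAt (fun x => H x - Q x) (G x - Q' x) x := fun x =>
      (hHd x).sub (hQd x)
    have hderiv : deriv (fun x => H x - Q x) = fun x => G x - Q' x :=
      funext fun x => (hd x).deriv
    have hC1 : ContDiff ℝ 1 (fun x => H x - Q x) := by
      rw [contDiff_one_iff_deriv, hderiv]
      exact ⟨fun x => (hd x).differentiableAt, hG.sub hQc⟩
    have h1 := h.abs_le_bdd hρ hC1 (β := β + α * ε) (M := M + α)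
      (fun x => by
        have := abs_add_le (H x - K x) (K x - Q x)
        rw [sub_add_sub_cancel] at this
        linarith [hK2 x, hQK x])
      (fun x => by
        rw [hderiv]
        refine (abs_sub _ _).trans ?_
        linarith [hGM x, hQb x])
    rw [hderiv] at h1
    have i1 : Integrable fun x => Q' x * ρ x :=
      hρ.bdd_mul (c := α) hQc.aestronglyMeasurable (Filter.Eventually.of_forall hQb)
    have i2 : Integrable fun x => G x * ρ x :=
      hρ.bdd_mul (c := M) hG.aestronglyMeasurable (Filter.Eventually.of_forall hGM)
    have h2 : |∫ x, Q' x * ρ x| ≤ α * ∫ x, |ρ x| := by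
      rw [← integral_const_mul]
      refine (abs_integral_le_integral_abs).trans ?_
      refine integral_mono i1.abs (hρ.abs.const_mul _) fun x => ?_
      show |Q' x * ρ x| ≤ α * |ρ x|
      rw [abs_mul]
      exact mul_le_mul_of_nonneg_right (hQb x) (abs_nonneg _)
    have h3 : ∫ x, G x * ρ x = (∫ x, Q' x * ρ x) + ∫ x, ρ x * (G x - Q' x) := by
      have h4 : ∫ x, ρ x * (G x - Q' x) = ∫ x, (G x * ρ x - Q' x * ρ x) := by
        congr 1; ext x; ring
      rw [h4, integral_sub i2 i1]
      ring
    rw [h3]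
    refine (abs_add_le _ _).trans ?_
    linarith
  have hlim : Filter.Tendsto (fun ε : ℝ => α * (∫ x, |ρ x|) + sTV s * β + sTV s * α * ε)
      (nhdsWithin 0 (Set.Ioi 0)) (nhds (α * (∫ x, |ρ x|) + sTV s * β + sTV s * α * 0)) := by
    apply Filter.Tendsto.mono_left _ nhdsWithin_le_nhds
    exact (Continuous.tendsto (by fun_prop) 0)
  rw [mul_zero, add_zero] at hlim
  exact ge_of_tendsto hlim (eventually_nhdsWithin_of_forall key)

/-- Hölder-type control `∫_a^b G = O(|b-a|^{1-p})` on intervals passes to a density `ρ` of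
bounded variation: such a density behaves like an interval of length `1 / (1 + ‖Dρ‖)`. -/
lemma IsDeriv.integral_holder {ρ : ℝ → ℝ} {s : SignedMeasure ℝ} (h : IsDeriv ρ s)
    (hρ : Integrable ρ) (hρ1 : ∫ x, |ρ x| = 1) {G : ℝ → ℝ} (hG : Continuous G) {M : ℝ}
    (hGM : ∀ x, |G x| ≤ M) {B p : ℝ} (hB : 0 ≤ B) (hp : 0 ≤ p) (hp1 : p ≤ 1)
    (hGB : ∀ a L, 0 < L → |∫ t in a..(a + L), G t| ≤ B * L ^ (1 - p)) :
    |∫ x, G x * ρ x| ≤ B * (1 + sTV s) ^ p := by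
  have hτ := sTV_nonneg s
  set τ := sTV s with hτdef
  set l := (1 + τ) ^ p with hl
  have hl0 : 0 < l := Real.rpow_pos_of_pos (by linarith) _
  -- the tangent line to the concave function `L ^ (1 - p)` at `L = 1 / (1 + τ)`
  have htan : ∀ L : ℝ, 0 < L → L ^ (1 - p) ≤ l * (1 - p) * L + p * (l / (1 + τ)) := by
    intro L hL
    have h1 := Real.geom_mean_le_arith_mean2_weighted (w₁ := 1 - p) (w₂ := p)
      (p₁ := (1 + τ) * L) (p₂ := 1) (by linarith) hp (by positivity) zero_le_one (by ring)
    rw [Real.one_rpow, mul_one, Real.mul_rpow (by positivity) hL.le,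
      Real.rpow_sub (by linarith), Real.rpow_one, ← hl] at h1
    have h2 : L ^ (1 - p) = ((1 + τ) / l * L ^ (1 - p)) * (l / (1 + τ)) := by
      field_simp
    rw [h2]
    calc _ ≤ ((1 - p) * ((1 + τ) * L) + p * 1) * (l / (1 + τ)) := by gcongr
      _ = _ := by field_simp
  have hab : ∀ a b : ℝ, |∫ t in a..b, G t| ≤ B * (l * (1 - p)) * |b - a| + B * (p * (l / (1 + τ))) := by
    have hpos : ∀ a b : ℝ, a < b → |∫ t in a..b, G t| ≤
        B * (l * (1 - p)) * |b - a| + B * (p * (l / (1 + τ))) := by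
      intro a b hab
      have h1 := hGB a (b - a) (by linarith)
      rw [add_sub_cancel] at h1
      rw [abs_of_pos (by linarith : 0 < b - a)]
      refine h1.trans ?_
      calc B * (b - a) ^ (1 - p) ≤ B * (l * (1 - p) * (b - a) + p * (l / (1 + τ))) := by
            gcongr; exact htan _ (by linarith)
        _ = _ := by ring
    intro a b
    rcases lt_trichotomy a b with hlt | rfl | hlt
    · exact hpos a b hlt
    · simp only [intervalIntegral.integral_same, abs_zero, sub_self, mul_zero, zero_add]
      positivity
    · rw [intervalIntegral.integral_symm, abs_neg, abs_sub_comm]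
      exact hpos b a hlt
  have h1 := h.integral_le hρ hG hGM (mul_nonneg hB (mul_nonneg hl0.le (by linarith))) hab
  refine h1.trans ?_
  rw [hρ1, mul_one]
  have h2 : τ * (l / (1 + τ)) ≤ l := by
    rw [mul_div_assoc', div_le_iff₀ (by linarith)]
    nlinarith
  calc B * (l * (1 - p)) + τ * (B * (p * (l / (1 + τ))))
      = B * (l * (1 - p)) + B * p * (τ * (l / (1 + τ))) := by ring
    _ ≤ B * (l * (1 - p)) + B * p * l := by gcongr
    _ = B * l := by ring

/-! ### From boxes to product densities -/

/-- The density of the uniform distribution on `[a, a + L]`. -/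
def boxW (a L : ℝ) : ℝ → ℝ := (Set.Icc a (a + L)).indicator fun _ => L⁻¹

lemma integrable_boxW (a L : ℝ) : Integrable (boxW a L) :=
  (integrable_indicator_iff measurableSet_Icc).2 (integrableOn_const (by simp [Real.volume_Icc]))

lemma integral_mul_boxW (G : ℝ → ℝ) (a : ℝ) {L : ℝ} (hL : 0 < L) :
    ∫ t, G t * boxW a L t = L⁻¹ * ∫ t in a..(a + L), G t := by
  have h1 : (fun t => G t * boxW a L t) = (Set.Icc a (a + L)).indicator fun t => L⁻¹ * G t := by
    ext t
    unfold boxW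
    by_cases ht : t ∈ Set.Icc a (a + L)
    · rw [Set.indicator_of_mem ht, Set.indicator_of_mem ht, mul_comm]
    · rw [Set.indicator_of_notMem ht, Set.indicator_of_notMem ht, mul_zero]
  rw [h1, integral_indicator measurableSet_Icc, integral_const_mul,
    intervalIntegral.integral_of_le (by linarith), integral_Icc_eq_integral_Ioc]

/-- Integrating against a product of uniform densities is averaging over the box. -/
lemma integral_mul_prod_boxW {n : ℕ} (Ψ : (Fin n → ℝ) → ℝ) (a L : Fin n → ℝ)
    (hL : ∀ j, 0 < L j) :
    ∫ x, Ψ x * ∏ j, boxW (a j) (L j) (x j) = ∫ y, Ψ (fun j => a j + L j * y j) ∂(cubeM n) := by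
  classical
  have hdet : (Matrix.diagonal L).det = ∏ j, L j := Matrix.det_diagonal
  have hdet0 : 0 < ∏ j, L j := Finset.prod_pos fun j _ => hL j
  have hT : Topology.IsClosedEmbedding (Matrix.toLin' (Matrix.diagonal L)) := by
    apply LinearMap.isClosedEmbedding_of_injective
    rw [LinearMap.ker_eq_bot]
    intro x y hxy
    ext j
    have := congrFun hxy j
    simp only [Matrix.toLin'_apply, Matrix.mulVec_diagonal] at this
    exact mul_left_cancel₀ (hL j).ne' this
  set k : (Fin n → ℝ) → ℝ := fun x => Ψ x * ∏ j, boxW (a j) (L j) (x j) with hk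
  rw [← integral_add_left_eq_self k a]
  conv_lhs => rw [← Real.smul_map_diagonal_volume_pi (D := L) (by rw [hdet]; exact hdet0.ne')]
  rw [integral_smul_measure, hT.measurableEmbedding.integral_map, hdet,
    ENNReal.toReal_ofReal (abs_nonneg _), abs_of_pos hdet0, ← integral_smul, cubeM_eq,
    ← integral_indicator (isCompact_cube n).measurableSet]
  congr 1
  ext y
  have h1 : a + Matrix.toLin' (Matrix.diagonal L) y = fun j => a j + L j * y j := by
    ext j; simp [Matrix.mulVec_diagonal]
  rw [h1, hk]
  simp only [smul_eq_mul]
  by_cases hy : y ∈ Set.univ.pi fun _ : Fin n => Set.Icc (0:ℝ) 1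
  · rw [Set.indicator_of_mem hy]
    have h2 : ∀ j, boxW (a j) (L j) (a j + L j * y j) = (L j)⁻¹ := by
      intro j
      have h3 := hy j trivial
      apply Set.indicator_of_mem
      constructor
      · have := mul_nonneg (hL j).le h3.1; linarith
      · have := mul_le_mul_of_nonneg_left h3.2 (hL j).le; linarith
    simp only [h2, Finset.prod_inv_distrib]
    field_simp
  · rw [Set.indicator_of_notMem hy]
    have : ∃ j, ¬ y j ∈ Set.Icc (0:ℝ) 1 := by
      by_contra hcon
      push Not at hcon
      exact hy fun j _ => hcon j
    obtain ⟨j, hj⟩ := this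
    have h2 : boxW (a j) (L j) (a j + L j * y j) = 0 := by
      apply Set.indicator_of_notMem
      intro h3
      apply hj
      constructor
      · have : 0 ≤ L j * y j := by linarith [h3.1]
        exact nonneg_of_mul_nonneg_right this (hL j)
      · have : L j * y j ≤ L j * 1 := by linarith [h3.2]
        exact le_of_mul_le_mul_left this (hL j)
    have h4 : ∏ j, boxW (a j) (L j) (a j + L j * y j) = 0 :=
      Finset.prod_eq_zero (Finset.mem_univ j) h2
    simp [h4]

/-- The function of `xᵢ = t` obtained by integrating `Ψ` against densities in the other
variables. -/
def sliceInt {m : ℕ} (Ψ : (Fin (m + 1) → ℝ) → ℝ) (i : Fin (m + 1)) (V : Fin m → ℝ → ℝ) (t : ℝ) :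
    ℝ := ∫ y : Fin m → ℝ, Ψ (i.insertNth t y) * ∏ k, V k (y k)

lemma continuous_insertNth_pair {m : ℕ} (i : Fin (m + 1)) :
    Continuous fun z : ℝ × (Fin m → ℝ) => (i.insertNth z.1 z.2 : Fin (m + 1) → ℝ) :=
  Continuous.finInsertNth i continuous_fst continuous_snd

section Slice

variable {m : ℕ} {Ψ : (Fin (m + 1) → ℝ) → ℝ} {M : ℝ} (i : Fin (m + 1))

lemma integrable_slice (hΨ : Continuous Ψ) (hM : ∀ x, |Ψ x| ≤ M) {V : Fin m → ℝ → ℝ}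
    (hV : ∀ k, Integrable (V k)) (t : ℝ) :
    Integrable fun y : Fin m → ℝ => Ψ (i.insertNth t y) * ∏ k, V k (y k) := by
  have h1 : Continuous fun y : Fin m → ℝ => Ψ (i.insertNth t y) :=
    hΨ.comp ((continuous_insertNth_pair i).comp (by fun_prop : Continuous fun y : Fin m → ℝ => (t, y)))
  exact (Integrable.fintype_prod hV).bdd_mul (c := M) h1.aestronglyMeasurable
    (Filter.Eventually.of_forall fun y => hM _)

lemma abs_sliceInt_le (hΨ : Continuous Ψ) (hM : ∀ x, |Ψ x| ≤ M) {V : Fin m → ℝ → ℝ}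
    (hV : ∀ k, Integrable (V k)) (t : ℝ) :
    |sliceInt Ψ i V t| ≤ ∫ y : Fin m → ℝ, M * |∏ k, V k (y k)| := by
  refine abs_integral_le_integral_abs.trans ?_
  refine integral_mono (integrable_slice i hΨ hM hV t).abs
    ((Integrable.fintype_prod hV).abs.const_mul M) fun y => ?_
  show |_ * _| ≤ _
  rw [abs_mul]
  exact mul_le_mul_of_nonneg_right (hM _) (abs_nonneg _)

lemma continuous_sliceInt (hΨ : Continuous Ψ) (hM : ∀ x, |Ψ x| ≤ M) {V : Fin m → ℝ → ℝ}
    (hV : ∀ k, Integrable (V k)) : Continuous (sliceInt Ψ i V) := by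
  refine continuous_of_dominated (bound := fun y => M * |∏ k, V k (y k)|)
    (fun t => (integrable_slice i hΨ hM hV t).aestronglyMeasurable)
    (fun t => Filter.Eventually.of_forall fun y => ?_)
    ((Integrable.fintype_prod hV).abs.const_mul M)
    (Filter.Eventually.of_forall fun y => ?_)
  · rw [Real.norm_eq_abs, abs_mul]
    exact mul_le_mul_of_nonneg_right (hM _) (abs_nonneg _)
  · exact (hΨ.comp ((continuous_insertNth_pair i).comp
      (by fun_prop : Continuous fun t : ℝ => (t, y)))).mul continuous_const

lemma integral_eq_sliceInt (hΨ : Continuous Ψ) (hM : ∀ x, |Ψ x| ≤ M)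
    {W : Fin (m + 1) → ℝ → ℝ} (hW : ∀ j, Integrable (W j)) :
    ∫ x, Ψ x * ∏ j, W j (x j) = ∫ t, sliceInt Ψ i (fun k => W (i.succAbove k)) t * W i t := by
  have hmp := (volume_preserving_piFinSuccAbove (fun _ : Fin (m + 1) => ℝ) i).symm
  rw [← hmp.integral_comp' (g := fun x => Ψ x * ∏ j, W j (x j))]
  have h1 : ∀ z : ℝ × (Fin m → ℝ),
      Ψ ((MeasurableEquiv.piFinSuccAbove (fun _ : Fin (m + 1) => ℝ) i).symm z) *
        ∏ j, W j ((MeasurableEquiv.piFinSuccAbove (fun _ : Fin (m + 1) => ℝ) i).symm z j) =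
      Ψ (i.insertNth z.1 z.2) * (W i z.1 * ∏ k, W (i.succAbove k) (z.2 k)) := by
    intro z
    have h2 : (MeasurableEquiv.piFinSuccAbove (fun _ : Fin (m + 1) => ℝ) i).symm z =
      i.insertNth z.1 z.2 := rfl
    rw [h2, Fin.prod_univ_succAbove _ i]
    simp
  simp only [h1]
  rw [Measure.volume_eq_prod, integral_prod]
  · congr 1
    ext t
    unfold sliceInt
    rw [← integral_mul_const]
    congr 1
    ext y
    ring
  · have h3 : Integrable fun z : ℝ × (Fin m → ℝ) => W i z.1 * ∏ k, W (i.succAbove k) (z.2 k) :=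
      (hW i).mul_prod (Integrable.fintype_prod fun k => hW (i.succAbove k))
    exact h3.bdd_mul (c := M) (hΨ.comp (continuous_insertNth_pair i)).aestronglyMeasurable
      (Filter.Eventually.of_forall fun z => hM _)

end Slice

/-- Replacing the uniform densities by the functions `ρⱼ` one coordinate at a time. The bound for
uniform densities of arbitrary length in the `i`-th coordinate is precisely the hypothesis of
`IsDeriv.integral_holder`, which turns `Lᵢ ^ (-pᵢ)` into `(1 + ‖Dρᵢ‖) ^ pᵢ`. -/
lemma replace_densities {m : ℕ} {Ψ : (Fin (m + 1) → ℝ) → ℝ} {M : ℝ} (hΨ : Continuous Ψ)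
    (hM : ∀ x, |Ψ x| ≤ M) {ρ : Fin (m + 1) → ℝ → ℝ} {s : Fin (m + 1) → SignedMeasure ℝ}
    (hs : ∀ j, IsDeriv (ρ j) (s j)) (hρ : ∀ j, Integrable (ρ j))
    (hρ1 : ∀ j, ∫ x, |ρ j x| = 1) {p : Fin (m + 1) → ℝ} (hp : ∀ j, 0 ≤ p j)
    (hp1 : ∀ j, p j ≤ 1) {A : ℝ} (hA : 0 ≤ A)
    (base : ∀ a L : Fin (m + 1) → ℝ, (∀ j, 0 < L j) →
      |∫ x, Ψ x * ∏ j, boxW (a j) (L j) (x j)| ≤ A * ∏ j, L j ^ (-p j))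
    (S : Finset (Fin (m + 1))) : ∀ a L : Fin (m + 1) → ℝ, (∀ j, 0 < L j) →
      |∫ x, Ψ x * ∏ j, (if j ∈ S then ρ j else boxW (a j) (L j)) (x j)| ≤
        A * ∏ j, if j ∈ S then (1 + sTV (s j)) ^ p j else L j ^ (-p j) := by
  classical
  induction S using Finset.induction_on with
  | empty => simpa using base
  | insert i S hi ih =>
    intro a L hL
    set W : Fin (m + 1) → ℝ → ℝ := fun j => if j ∈ insert i S then ρ j else boxW (a j) (L j)
      with hWdef
    set c : Fin (m + 1) → ℝ := fun j => if j ∈ insert i S then (1 + sTV (s j)) ^ p j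
      else L j ^ (-p j) with hc
    have hWint : ∀ j, Integrable (W j) := by
      intro j
      simp only [hWdef]
      split_ifs
      · exact hρ j
      · exact integrable_boxW _ _
    have hWi : W i = ρ i := by simp [hWdef]
    have hci : c i = (1 + sTV (s i)) ^ p i := by simp [hc]
    have hc0 : ∀ j, 0 ≤ c j := by
      intro j
      simp only [hc]
      split_ifs
      · have := sTV_nonneg (s j)
        positivity
      · exact (Real.rpow_pos_of_pos (hL j) _).le
    rw [show (∫ x, Ψ x * ∏ j, (if j ∈ insert i S then ρ j else boxW (a j) (L j)) (x j)) =
      ∫ x, Ψ x * ∏ j, W j (x j) from rfl, integral_eq_sliceInt i hΨ hM hWint, hWi,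
      Fin.prod_univ_succAbove c i, hci]
    set P := ∏ k, c (i.succAbove k) with hP
    have hP0 : 0 ≤ P := Finset.prod_nonneg fun k _ => hc0 _
    have hVint : ∀ k, Integrable (W (i.succAbove k)) := fun k => hWint _
    have key := (hs i).integral_holder (hρ i) (hρ1 i) (continuous_sliceInt i hΨ hM hVint)
      (abs_sliceInt_le i hΨ hM hVint) (mul_nonneg hA hP0) (hp i) (hp1 i) (by
        intro a₀ L₀ hL₀
        have h1 := ih (Function.update a i a₀) (Function.update L i L₀) (by
          intro j
          by_cases hj : j = i
          · subst hj; simpa using hL₀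
          · simpa [Function.update_of_ne hj] using hL j)
        set W' : Fin (m + 1) → ℝ → ℝ := fun j => if j ∈ S then ρ j else
          boxW (Function.update a i a₀ j) (Function.update L i L₀ j) with hW'def
        set c' : Fin (m + 1) → ℝ := fun j => if j ∈ S then (1 + sTV (s j)) ^ p j
          else (Function.update L i L₀ j) ^ (-p j) with hc'
        have hW'int : ∀ j, Integrable (W' j) := by
          intro j
          simp only [hW'def]
          split_ifs
          · exact hρ j
          · exact integrable_boxW _ _
        have hW'i : W' i = boxW a₀ L₀ := by simp [hW'def, hi]
        have hc'i : c' i = L₀ ^ (-p i) := by simp [hc', hi]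
        have hW'k : (fun k => W' (i.succAbove k)) = fun k => W (i.succAbove k) := by
          funext k
          simp [hW'def, hWdef, Fin.succAbove_ne]
        have hc'k : ∏ k, c' (i.succAbove k) = P := by
          refine Finset.prod_congr rfl fun k _ => ?_
          simp [hc', hc, Fin.succAbove_ne]
        rw [show (∫ x, Ψ x * ∏ j, (if j ∈ S then ρ j else
          boxW (Function.update a i a₀ j) (Function.update L i L₀ j)) (x j)) =
          ∫ x, Ψ x * ∏ j, W' j (x j) from rfl, integral_eq_sliceInt i hΨ hM hW'int, hW'i, hW'k,
          Fin.prod_univ_succAbove c' i, hc'i, hc'k, integral_mul_boxW _ _ hL₀, abs_mul,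
          abs_of_pos (inv_pos.2 hL₀), inv_mul_le_iff₀ hL₀] at h1
        refine h1.trans (le_of_eq ?_)
        rw [sub_eq_add_neg, Real.rpow_add hL₀, Real.rpow_one]
        ring)
    refine key.trans (le_of_eq ?_)
    ring

/-- The estimate for product densities, with the degree of `f` as exponent. The factors
`(1 + ‖Dρⱼ‖) ^ pⱼ` combine to at most `1 + T` because the exponents `pⱼ` sum to one. -/
lemma product_estimate {n : ℕ} (hn : 0 < n) {f : MvPolynomial (Fin n) ℝ} (hf : 1 ≤ f.totalDegree)
    {φ φ' : ℝ → ℝ} {B0 B1 : ℝ}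
    (hφ' : Continuous φ') (hφ : ∀ t, HasDerivAt φ (φ' t) t) (hB0 : ∀ t, |φ t| ≤ B0)
    (hB1 : ∀ t, |φ' t| ≤ B1) (hB0p : 0 < B0) (hB1p : 0 < B1)
    {ρ : Fin n → ℝ → ℝ} {s : Fin n → SignedMeasure ℝ}
    (hs : ∀ j, IsDeriv (ρ j) (s j)) (hρ : ∀ j, Integrable (ρ j))
    (hρ1 : ∀ j, ∫ x, |ρ j x| = 1) {T : ℝ} (hT : ∀ j, sTV (s j) ≤ T) :
    |∫ x, φ' (MvPolynomial.eval x f) * ∏ j, ρ j (x j)| ≤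
      10 ^ 15 * min (f.totalDegree : ℝ) n *
        (B1 * (B0 / (leadingL2 f * B1)) ^ (1 / (f.totalDegree : ℝ))) * (1 + T) := by
  obtain ⟨m, rfl⟩ : ∃ m, n = m + 1 := ⟨n - 1, by omega⟩
  have h0 := leadingL2_pos hf
  set A := 10 ^ 15 * min (f.totalDegree : ℝ) (m + 1 : ℕ) *
        (B1 * (B0 / (leadingL2 f * B1)) ^ (1 / (f.totalDegree : ℝ))) with hA
  have hA0 : 0 ≤ A := by positivity
  have hT0 : 0 ≤ T := (sTV_nonneg _).trans (hT 0)
  have hp1 : ∀ j, avgExp f j ≤ 1 := fun j => by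
    rw [← sum_avgExp hf]
    exact Finset.single_le_sum (fun j _ => avgExp_nonneg f j) (Finset.mem_univ j)
  have h1 := replace_densities (Ψ := fun x => φ' (MvPolynomial.eval x f)) (M := B1)
    (hφ'.comp f.continuous_eval) (fun x => hB1 _) hs hρ hρ1 (avgExp_nonneg f) hp1 hA0
    (fun a L hL => by
      rw [integral_mul_prod_boxW _ a L hL]
      exact box_estimate hn hf hφ' hφ hB0 hB1 hB0p hB1p a L hL) Finset.univ 0 1
    (fun _ => zero_lt_one)
  simp only [Finset.mem_univ, if_true] at h1
  refine h1.trans ?_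
  gcongr
  calc ∏ j, (1 + sTV (s j)) ^ avgExp f j ≤ ∏ j, (1 + T) ^ avgExp f j := by
        apply Finset.prod_le_prod
        · intro j _
          have := sTV_nonneg (s j)
          positivity
        · intro j _
          have := sTV_nonneg (s j)
          exact Real.rpow_le_rpow (by positivity) (by linarith [hT j]) (avgExp_nonneg f j)
    _ = 1 + T := by
        rw [← Real.rpow_sum_of_pos (by linarith), sum_avgExp hf, Real.rpow_one]

/-- The trivial bound, for densities of mass one. -/
lemma product_trivial {n : ℕ} {Ψ : (Fin n → ℝ) → ℝ} {M : ℝ}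
    (hM : ∀ x, |Ψ x| ≤ M) {ρ : Fin n → ℝ → ℝ} (hρ : ∀ j, Integrable (ρ j))
    (hρ1 : ∀ j, ∫ x, |ρ j x| = 1) : |∫ x, Ψ x * ∏ j, ρ j (x j)| ≤ M := by
  have h1 : ∀ x, ‖Ψ x * ∏ j, ρ j (x j)‖ ≤ M * ∏ j, |ρ j (x j)| := by
    intro x
    rw [Real.norm_eq_abs, abs_mul, Finset.abs_prod]
    gcongr
    · exact hM x
  have hi : Integrable (fun x : Fin n → ℝ => M * ∏ j, |ρ j (x j)|) volume :=
    (Integrable.fintype_prod fun j => (hρ j).abs).const_mul M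
  have h2 := norm_integral_le_of_norm_le hi (Filter.Eventually.of_forall h1)
  rw [integral_const_mul, integral_fintype_prod_volume_eq_prod (fun j t => |ρ j t|)] at h2
  simpa [hρ1] using h2

lemma supNorm_spec {φ : ℝ → ℝ} {M : ℝ} (h : ∀ t, |φ t| ≤ M) (t : ℝ) : |φ t| ≤ supNorm φ :=
  le_ciSup (f := fun t => |φ t|) ⟨M, by rintro _ ⟨t, rfl⟩; exact h t⟩ t

lemma one_le_totalDegree {n : ℕ} {f : MvPolynomial (Fin n) ℝ}
    (hf : ¬ ∃ c : ℝ, ∀ x : Fin n → ℝ, MvPolynomial.eval x f = c) : 1 ≤ f.totalDegree := by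
  by_contra hcon
  have h0 : f.totalDegree = 0 := by omega
  rw [MvPolynomial.totalDegree_eq_zero_iff_eq_C] at h0
  exact hf ⟨f.coeff 0, fun x => by rw [h0]; simp⟩

/-- Passing from the exponent `1/D` to the weaker exponent `1/d`, `D ≤ d`, with the help of the
trivial bound. -/
lemma weaken_exponent {I K K' B1 X : ℝ} {D d : ℕ} (hD : 1 ≤ D) (hDd : D ≤ d) (hX : 0 ≤ X)
    (hB1 : 0 ≤ B1) (hK' : 1 ≤ K') (hKK : K ≤ K') (h1 : I ≤ B1)
    (h2 : I ≤ K * (B1 * X ^ (1 / (D : ℝ)))) : I ≤ K' * (B1 * X ^ (1 / (d : ℝ))) := by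
  have hD0 : (0:ℝ) < D := by exact_mod_cast hD
  have hDd' : (D:ℝ) ≤ d := by exact_mod_cast hDd
  rcases le_total X 1 with hX1 | hX1
  · refine h2.trans ?_
    rcases hX.eq_or_lt with rfl | hX0
    · rw [Real.zero_rpow (by positivity), Real.zero_rpow (by
        have : (0:ℝ) < d := hD0.trans_le hDd'
        positivity)]
      simp
    · have := Real.rpow_le_rpow_of_exponent_ge hX0 hX1 (one_div_le_one_div_of_le hD0 hDd')
      gcongr
  · refine h1.trans ?_
    have h3 : 1 ≤ X ^ (1 / (d : ℝ)) := Real.one_le_rpow hX1 (by positivity)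
    have h4 : B1 ≤ B1 * X ^ (1 / (d : ℝ)) := le_mul_of_one_le_right hB1 h3
    exact h4.trans (le_mul_of_one_le_left (hB1.trans h4) hK')

end PolyKey

/-- **Key product estimate (ℓ² version).**  There is an absolute constant `C > 0`
such that for all `d, n ∈ ℕ`, any functions `ρ₁, …, ρ_n : ℝ → ℝ` of bounded
variation (with distributional derivatives `D₁ρ_j`) normalized by `‖ρ_j‖_{L¹} = 1`
(not assumed nonnegative), any non-constant polynomial `f` of degree at most `d`,
and any `φ ∈ C_b^∞(ℝ)`,
`∫ φ'(f(x)) ρ₁(x₁)⋯ρ_n(x_n) dx ≤ C min{d,n} (1 + max_j ‖D₁ρ_j‖_{TV})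
  [f]₂^{-1/d} ‖φ‖_∞^{1/d} ‖φ'‖_∞^{1-1/d}`. -/
theorem product_key_l2 :
    ∃ C : ℝ, 0 < C ∧ ∀ (d n : ℕ), 0 < d → 0 < n →
      ∀ (ρ : Fin n → ℝ → ℝ) (Dρ : Fin n → SignedMeasure ℝ),
        (∀ j, Integrable (ρ j)) →
        (∀ j, (∫ x, |ρ j x|) = 1) →
        (∀ j, ∀ ψ : ℝ → ℝ, ContDiff ℝ (⊤ : ℕ∞) ψ → HasCompactSupport ψ →
          (∫ x, ρ j x * deriv ψ x) = - sInt (Dρ j) ψ) →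
      ∀ f : MvPolynomial (Fin n) ℝ, f.totalDegree ≤ d →
        (¬ ∃ c : ℝ, ∀ x : Fin n → ℝ, MvPolynomial.eval x f = c) →
      ∀ φ : ℝ → ℝ, CbSmooth φ →
        (∫ x : Fin n → ℝ, deriv φ (MvPolynomial.eval x f) * ∏ j, ρ j (x j)) ≤
          C * min (d : ℝ) (n : ℝ) * (1 + ⨆ j, sTV (Dρ j)) *
            leadingL2 f ^ (-(1 / (d : ℝ))) * supNorm φ ^ (1 / (d : ℝ)) *
            supNorm (deriv φ) ^ (1 - 1 / (d : ℝ)) := by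
  refine ⟨10 ^ 15, by norm_num, ?_⟩
  intro d n hd hn ρ Dρ hρ hρ1 hDρ f hfd hf φ hφ
  have hD := PolyKey.one_le_totalDegree hf
  have hA := PolyKey.leadingL2_pos hD
  have hd1 : (1:ℝ) ≤ d := by exact_mod_cast hd
  have hn1 : (1:ℝ) ≤ n := by exact_mod_cast hn
  have hD1 : (1:ℝ) ≤ f.totalDegree := by exact_mod_cast hD
  have hDd : (f.totalDegree : ℝ) ≤ d := by exact_mod_cast hfd
  set T := ⨆ j, sTV (Dρ j) with hTdef
  have hT : ∀ j, sTV (Dρ j) ≤ T := fun j =>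
    le_ciSup (f := fun j => sTV (Dρ j)) (Set.finite_range _).bddAbove j
  have hT0 : 0 ≤ T := (PolyKey.sTV_nonneg _).trans (hT ⟨0, hn⟩)
  obtain ⟨M0, hM0⟩ := hφ.2 0
  obtain ⟨M1, hM1⟩ := hφ.2 1
  simp only [iteratedDeriv_zero, iteratedDeriv_one] at hM0 hM1
  have hB0 := PolyKey.supNorm_spec hM0
  have hB1 := PolyKey.supNorm_spec hM1
  have hφd : ∀ t, HasDerivAt φ (deriv φ t) t := fun t =>
    ((hφ.1.differentiable (by simp)) t).hasDerivAt
  have hφ'c : Continuous (deriv φ) := hφ.1.continuous_deriv (by simp)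
  set B0 := supNorm φ with hB0def
  set B1 := supNorm (deriv φ) with hB1def
  have hB0n : 0 ≤ B0 := (abs_nonneg _).trans (hB0 0)
  have hB1n : 0 ≤ B1 := (abs_nonneg _).trans (hB1 0)
  have htriv := (le_abs_self _).trans (PolyKey.product_trivial
    (Ψ := fun x => deriv φ (MvPolynomial.eval x f)) (fun x => hB1 _) hρ hρ1)
  rcases hB1n.eq_or_lt with hB1z | hB1p
  · rw [← hB1z] at htriv
    refine htriv.trans ?_
    positivity
  have hB0p : 0 < B0 := by
    rcases hB0n.eq_or_lt with hz | hp
    · exfalso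
      have h1 : φ = fun _ => 0 := funext fun t => by
        have := hB0 t
        rw [← hz] at this
        exact abs_nonpos_iff.1 this
      have h2 : B1 = 0 := by
        rw [hB1def, h1]
        simp [supNorm]
      exact hB1p.ne' h2
    · exact hp
  have hmain := (le_abs_self _).trans (PolyKey.product_estimate hn hD hφ'c hφd hB0 hB1 hB0p hB1p
    hDρ hρ hρ1 hT)
  have hmin1 : 1 ≤ min (d:ℝ) n := le_min hd1 hn1
  have h1 := PolyKey.weaken_exponent (I := ∫ x : Fin n → ℝ, deriv φ (MvPolynomial.eval x f) *
      ∏ j, ρ j (x j)) (K := 10 ^ 15 * min (f.totalDegree : ℝ) n * (1 + T))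
    (K' := 10 ^ 15 * min (d : ℝ) n * (1 + T)) (X := B0 / (leadingL2 f * B1)) hD hfd
    (by positivity) hB1n
    (by
      have : (1:ℝ) ≤ 10 ^ 15 := by norm_num
      exact one_le_mul_of_one_le_of_one_le (one_le_mul_of_one_le_of_one_le this hmin1)
        (by linarith))
    (by gcongr) htriv (hmain.trans (le_of_eq (by ring)))
  refine h1.trans (le_of_eq ?_)
  rw [Real.div_rpow hB0n (by positivity), Real.mul_rpow hA.le hB1n, Real.rpow_neg hA.le,
    Real.rpow_sub hB1p, Real.rpow_one]
  have := Real.rpow_pos_of_pos hA (1 / (d:ℝ))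
  have := Real.rpow_pos_of_pos hB1p (1 / (d:ℝ))
  field_simp
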